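/- arXiv:2205.02145 — 2 statements merged into one kernel-verified Lean document; each statement's English description precedes it below -/
import Mathlib

section
/- Let K be a number field, fix an embedding of K into the complex numbers, let f(z) = ∑_{n≥0} a_n z^n ∈ K[[z]] be a D-finite power series, and let r be the radius of convergence of the complex series ∑ a_n z^n. If 0 < r < ∞, then at least one of the following holds: (i) there is c > 0 such that {n ∈ ℕ : h(a_n) ≥ c·n} has positive upper density; (ii) there is a constant β > 1 such that for every set S ⊆ ℕ of zero density, lcm{den(a_i) : i ≤ n, i ∉ S} > β^n for all sufficiently large n; (iii) there exist a positive integer s and rational functions Q_0, …, Q_{s−1} ∈ K(z), each defined at all sufficiently large integers, such that a_{sn+i} = Q_i(n) for every i ∈ {0, …, s−1} and all sufficiently large n. -/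
/-!
Suppose that (i) and (ii) fail. Then off sets of zero density all conjugates of `a_n` grow
subexponentially and, for infinitely many `n`, so does a common denominator of the `a_i` with `i ≤ n`
(`SubexpArith`, `subexpArith_map`). The aim is to show that `a` is eventually a rational function on
residue classes.

The analytic input is a decay estimate. The vector `(f, f', …, f^{(p-1)})` satisfies a first order
system with leading coefficient `A_0`, and multiplying `f` by `A_0^J` makes the coefficients of index
well above `n₀` smaller by a factor `(C J / n₀)^J` (`base_decay`); this persists when `a_n` is first
multiplied by a product of linear factors in `n` (`decay`). Choosing these factors to vanish on the
sparse exceptional set, and reading off the lowest-order part of `A_0^J`, gives `growth`: at the given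
embedding `a_n` is subexponential for all `n`. The positive radius of convergence provides the
exponential bound from which the improvement starts.

Siegel's lemma gives a nonzero integer-valued polynomial `c`, of degree at most `δ H` and with small
coefficients, vanishing at all exceptional `n ≤ H` (`siegel_binomial`). For suitable `J` proportional
to `H`, the coefficients of `A_0^J ∑ c(n) a_n z^n` with index in `[H/2, H]` have small denominators
and conjugates, and by `decay` one conjugate is extremely small; by the product formula they vanish
(`main_vanishing`). Over a splitting field `L` of `A_0` this says that `c(n) a_n` agrees with an
exponential polynomial `∑_τ p_τ(n) τ^n` on a window long compared with the degrees
(`expPoly_of_window`). The differential equation amounts to a linear recurrence for `a`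
(`recurrence_of_ode`), which, after common factors are cancelled (`exists_reduced`), propagates the
formula to all large `n` (`global_of_window`, `exists_expPoly`).

A constant-coefficient difference operator isolates one base `τ` and shows that `r(m) τ^m`, for some
polynomial `r ≠ 0` and infinitely many `m`, has subexponential conjugates and denominator. Hence `τ`
is an algebraic integer with all conjugates of absolute value at most `1`, so by Kronecker's theorem
a root of unity (`pow_eq_one_of_small`, `base_root_of_unity`). On residue classes modulo a common
multiple of the orders, `a` is then a quotient of two polynomials over `L`, and a `K`-linear functional
`L → K` turns it into one over `K` (`exists_ratFunc`, `ratFunc_of_expPoly`).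
-/

open Filter Polynomial PowerSeries

/-- The upper density of a set of natural numbers. -/
noncomputable def upperDensity (S : Set ℕ) : ℝ :=
  Filter.limsup (fun n => ((S ∩ Set.Icc 1 n).ncard : ℝ) / n) Filter.atTop

/-- `S ⊆ ℕ` has positive upper density. -/
def HasPosUpperDensity (S : Set ℕ) : Prop := 0 < upperDensity S

/-- `S ⊆ ℕ` has zero density. -/
def HasZeroDensity (S : Set ℕ) : Prop := upperDensity S = 0
open NumberField in
/-- The denominator ideal of `α ∈ K`: the ideal of `x ∈ 𝓞 K` with `x • α` integral. -/
noncomputable def denIdeal (K : Type*) [Field K] [NumberField K] (α : K) : Ideal (𝓞 K) :=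
  (1 : Submodule (𝓞 K) K).colon (Submodule.span (𝓞 K) {α})

open NumberField in
/-- The absolute logarithmic Weil height of `α ∈ K`:
`h(α) = (log N(𝔡_α) + ∑_{σ : K →+* ℂ} log⁺ |σ α|) / [K:ℚ]`, which agrees with
`∑_{w ∈ M_K} log max(|α|_w, 1)` for the standard normalized absolute values. -/
noncomputable def weilHeight (K : Type*) [Field K] [NumberField K] (α : K) : ℝ :=
  (Real.log (Ideal.absNorm (denIdeal K α)) +
    ∑ σ : K →+* ℂ, Real.log (max 1 ‖σ α‖)) / (Module.finrank ℚ K)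
/-- The denominator of an algebraic number `α ∈ K`: the smallest positive integer `d`
such that `d α` is an algebraic integer. -/
noncomputable def den (K : Type*) [Field K] [NumberField K] (α : K) : ℕ :=
  sInf {d : ℕ | 0 < d ∧ IsIntegral ℤ ((d : K) * α)}
/-- The formal derivative of a power series. -/
noncomputable def psDeriv {k : Type*} [Field k] : PowerSeries k → PowerSeries k :=
  PowerSeries.derivativeFun

/-- A power series is D-finite if it satisfies a nontrivial linear homogeneous
differential equation `A₀ f⁽ᵖ⁾ + A₁ f⁽ᵖ⁻¹⁾ + ⋯ + A_p f = 0` with polynomial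
coefficients and `A₀ ≠ 0`. -/
def IsDFinite {k : Type*} [Field k] (f : PowerSeries k) : Prop :=
  ∃ (p : ℕ) (A : Fin (p + 1) → Polynomial k), A 0 ≠ 0 ∧
    ∑ i : Fin (p + 1), (A i : PowerSeries k) * (psDeriv^[p - i.val] f) = 0
/-- The radius of convergence of the complex power series `∑ a_n z^n`. -/
noncomputable def seriesRadius (a : ℕ → ℂ) : ENNReal :=
  ⨆ (r : NNReal) (_ : ∃ C : ℝ, ∀ n, ‖a n‖ * (r : ℝ) ^ n ≤ C), (r : ENNReal)
open Classical in
/-- `lcm { d i : i ≤ n, i ∉ S }`. -/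
noncomputable def lcmOutside (d : ℕ → ℕ) (S : Set ℕ) (n : ℕ) : ℕ :=
  (Finset.range (n + 1)).lcm (fun i => if i ∈ S then 1 else d i)

/-! ### Coefficient estimates for solutions of the differential equation -/

/-- The sum of the absolute values of the coefficients of a complex polynomial. -/
noncomputable def lenOne (P : ℂ[X]) : ℝ := ∑ i ∈ Finset.range (P.natDegree + 1), ‖P.coeff i‖

lemma lenOne_nonneg (P : ℂ[X]) : 0 ≤ lenOne P := Finset.sum_nonneg fun _ _ => norm_nonneg _

lemma norm_coeff_mul_le (P : ℂ[X]) (G : PowerSeries ℂ) (D n : ℕ) (Y : ℝ)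
    (hD : P.natDegree ≤ D) (hY0 : 0 ≤ Y)
    (h : ∀ j ≤ D, j ≤ n → ‖PowerSeries.coeff (n - j) G‖ ≤ Y) :
    ‖PowerSeries.coeff n ((P : PowerSeries ℂ) * G)‖ ≤ lenOne P * Y := by
  rw [PowerSeries.coeff_mul, Finset.Nat.sum_antidiagonal_eq_sum_range_succ_mk]
  refine (norm_sum_le _ _).trans ?_
  have h1 : ∀ j ∈ Finset.range n.succ,
      ‖PowerSeries.coeff j (P : PowerSeries ℂ) * PowerSeries.coeff (n - j) G‖
        ≤ ‖P.coeff j‖ * Y := by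
    intro j hj
    rw [norm_mul, Polynomial.coeff_coe]
    by_cases hjD : j ≤ P.natDegree
    · exact mul_le_mul_of_nonneg_left
        (h j (hjD.trans hD) (Nat.lt_succ_iff.mp (Finset.mem_range.mp hj))) (norm_nonneg _)
    · rw [Polynomial.coeff_eq_zero_of_natDegree_lt (not_le.mp hjD)]; simp
  refine (Finset.sum_le_sum h1).trans ?_
  rw [← Finset.sum_mul]
  refine mul_le_mul_of_nonneg_right ?_ hY0
  have h2 : ∑ i ∈ Finset.range n.succ, ‖P.coeff i‖
      ≤ ∑ i ∈ Finset.range (max n P.natDegree + 1), ‖P.coeff i‖ :=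
    Finset.sum_le_sum_of_subset_of_nonneg
      (Finset.range_mono (by simp)) (fun _ _ _ => norm_nonneg _)
  refine h2.trans (le_of_eq ?_)
  unfold lenOne
  symm
  refine Finset.sum_subset (Finset.range_mono (by simp)) ?_
  intro i _ hi
  rw [Polynomial.coeff_eq_zero_of_natDegree_lt (by simpa using hi)]; simp

/-- Only the coefficients of index `≤ n` of `G` matter, so no convergence is needed. -/
lemma norm_coeff_pow_mul_le (A : ℂ[X]) (G : PowerSeries ℂ) (n : ℕ) (Y : ℝ) (hY0 : 0 ≤ Y)
    (h : ∀ i ≤ n, ‖PowerSeries.coeff i G‖ ≤ Y) (J : ℕ) :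
    ∀ m ≤ n, ‖PowerSeries.coeff m ((A : PowerSeries ℂ) ^ J * G)‖ ≤ lenOne A ^ J * Y := by
  induction J with
  | zero => intro m hm; simpa using h m hm
  | succ J ih =>
    intro m hm
    rw [pow_succ', mul_assoc, pow_succ', mul_assoc]
    refine norm_coeff_mul_le A _ _ m _ le_rfl (mul_nonneg (pow_nonneg (lenOne_nonneg A) _) hY0) ?_
    intro j _ _
    exact ih _ (by omega)

set_option maxHeartbeats 1000000 in
/-- The vector `(f, f', …, f^{(p-1)})` satisfies a first order system with leading coefficient
`A 0`; it gives the recursion in `m` for the coefficients of `(A 0)^m f^{(i)}`. Each further factor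
`A 0` gains `C J / n₀`: it allows one to express the derivative of `(A 0)^m f^{(i)}` through the
functions at level `m`, and passing from a derivative back to its primitive divides the coefficient
of index `n` by `n`. -/
lemma base_decay (p : ℕ) (A : Fin (p + 1) → ℂ[X]) (f : PowerSeries ℂ)
    (hf : ∑ i : Fin (p + 1), (A i : PowerSeries ℂ) * (psDeriv^[p - i.val] f) = 0) :
    ∃ C : ℝ, 1 ≤ C ∧ ∃ D : ℕ, ∀ J n₀ H : ℕ, 1 ≤ n₀ → ∀ Y : ℝ, 0 ≤ Y →
      (∀ i < p, ∀ n, n₀ ≤ n → n ≤ H → ‖PowerSeries.coeff n (psDeriv^[i] f)‖ ≤ Y) →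
      ∀ m ≤ J, ∀ i < p, ∀ n, n₀ + D * m ≤ n → n ≤ H →
        ‖PowerSeries.coeff n ((A 0 : PowerSeries ℂ) ^ m * (psDeriv^[i] f))‖
          ≤ Y * (C * J / n₀) ^ m := by
  obtain ⟨E, hE⟩ : ∃ E : ℕ, E = (Polynomial.derivative (A 0)).natDegree +
    ∑ i, (A i).natDegree := ⟨_, rfl⟩
  have hAE : ∀ i, (A i).natDegree ≤ E := fun i =>
    (Finset.single_le_sum (f := fun i => (A i).natDegree) (fun _ _ => Nat.zero_le _)
      (Finset.mem_univ i)).trans (by rw [hE]; exact Nat.le_add_left _ _)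
  obtain ⟨W, hW⟩ : ∃ W : ℝ, W = ∑ i, lenOne (A i) := ⟨_, rfl⟩
  have hAW : ∀ i, lenOne (A i) ≤ W := fun i => hW ▸
    Finset.single_le_sum (f := fun i => lenOne (A i)) (fun _ _ => lenOne_nonneg _)
      (Finset.mem_univ i)
  have hW0 : 0 ≤ W := (lenOne_nonneg _).trans (hAW 0)
  have hL0 := lenOne_nonneg (Polynomial.derivative (A 0))
  refine ⟨1 + lenOne (Polynomial.derivative (A 0)) + W, by linarith, E + 1, ?_⟩
  obtain ⟨C, hC⟩ : ∃ C : ℝ, C = 1 + lenOne (Polynomial.derivative (A 0)) + W := ⟨_, rfl⟩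
  rw [← hC]
  intro J n₀ H hn₀ Y hY hbase m
  have hn₀' : (0 : ℝ) < n₀ := by exact_mod_cast hn₀
  have hC0 : 0 ≤ C := by linarith
  induction m with
  | zero => intro _ i hi n hn hnH; simpa using hbase i hi n (by omega) hnH
  | succ m ih =>
    intro hm i hi n hn hnH
    have ih' := ih (by omega)
    obtain ⟨Z, hZ⟩ : ∃ Z : ℝ, Z = Y * (C * J / n₀) ^ m := ⟨_, rfl⟩
    rw [← hZ] at ih'
    have hZ0 : 0 ≤ Z := by rw [hZ]; positivity
    obtain ⟨n, rfl⟩ : ∃ k, n = k + 1 := ⟨n - 1, by omega⟩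
    have hcomp : ∀ (P : ℂ[X]), P.natDegree ≤ E → ∀ l < p,
        ‖PowerSeries.coeff n ((P : PowerSeries ℂ) *
          ((A 0 : PowerSeries ℂ) ^ m * (psDeriv^[l] f)))‖ ≤ lenOne P * Z := by
      intro P hP l hl
      refine norm_coeff_mul_le P _ E n Z hP hZ0 ?_
      intro j hj hjn
      refine ih' l hl _ ?_ (by omega)
      have : (E + 1) * (m + 1) = (E + 1) * m + E + 1 := by ring
      omega
    -- the derivative of `(A 0)^(m+1) f^{(i)}`
    have hder : PowerSeries.derivative ℂ ((A 0 : PowerSeries ℂ) ^ (m + 1) * (psDeriv^[i] f))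
        = ((m : ℂ) + 1) • ((Polynomial.derivative (A 0) : PowerSeries ℂ) *
            ((A 0 : PowerSeries ℂ) ^ m * (psDeriv^[i] f)))
          + (A 0 : PowerSeries ℂ) ^ m * ((A 0 : PowerSeries ℂ) * (psDeriv^[i + 1] f)) := by
      have h1 : PowerSeries.derivative ℂ (psDeriv^[i] f) = psDeriv^[i + 1] f := by
        rw [Function.iterate_succ_apply']; rfl
      rw [Derivation.leibniz, h1, Derivation.leibniz_pow, PowerSeries.derivative_coe]
      simp only [smul_eq_mul, nsmul_eq_mul, Nat.add_sub_cancel, PowerSeries.smul_eq_C_mul]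
      push_cast
      simp
      ring
    have hcoef := congrArg (PowerSeries.coeff n) hder
    rw [PowerSeries.coeff_derivative] at hcoef
    -- For `i + 1 = p` the differential equation replaces `A 0 * f^{(p)}` by lower derivatives;
    -- for `i + 1 < p` the factor `A 0` multiplies `f^{(i + 1)}`, already controlled.
    have hsecond : ‖PowerSeries.coeff n ((A 0 : PowerSeries ℂ) ^ m *
        ((A 0 : PowerSeries ℂ) * (psDeriv^[i + 1] f)))‖ ≤ W * Z := by
      by_cases hip : i + 1 < p
      · rw [mul_left_comm]
        exact (hcomp (A 0) (hAE 0) _ hip).trans (mul_le_mul_of_nonneg_right (hAW 0) hZ0)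
      · have hip' : i + 1 = p := by omega
        rw [Fin.sum_univ_succ] at hf
        have h2 : (A 0 : PowerSeries ℂ) * (psDeriv^[i + 1] f)
            = - ∑ j : Fin p, (A j.succ : PowerSeries ℂ) * (psDeriv^[p - (j.val + 1)] f) := by
          rw [hip']
          simp only [Fin.val_zero, Nat.sub_zero, Fin.val_succ] at hf
          exact eq_neg_of_add_eq_zero_left hf
        rw [h2, mul_neg, map_neg, norm_neg, Finset.mul_sum, map_sum]
        refine (norm_sum_le _ _).trans ?_
        have h3 : ∀ j ∈ (Finset.univ : Finset (Fin p)),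
            ‖PowerSeries.coeff n ((A 0 : PowerSeries ℂ) ^ m *
              ((A j.succ : PowerSeries ℂ) * (psDeriv^[p - (j.val + 1)] f)))‖
              ≤ lenOne (A j.succ) * Z := by
          intro j _
          rw [mul_left_comm]
          exact hcomp _ (hAE _) _ (by omega)
        refine (Finset.sum_le_sum h3).trans ?_
        rw [← Finset.sum_mul]
        refine mul_le_mul_of_nonneg_right ?_ hZ0
        rw [hW, Fin.sum_univ_succ]
        linarith [lenOne_nonneg (A 0)]
    have hfirst := hcomp (Polynomial.derivative (A 0)) (by omega) i hi
    set x := PowerSeries.coeff (n + 1) ((A 0 : PowerSeries ℂ) ^ (m + 1) * (psDeriv^[i] f))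
    have hx : ‖x‖ * (n + 1) ≤ (m + 1) * (lenOne (Polynomial.derivative (A 0)) * Z) + W * Z := by
      have h4 : ‖x‖ * (n + 1) = ‖x * ((n : ℂ) + 1)‖ := by
        rw [norm_mul]
        congr 1
        exact_mod_cast (Complex.norm_natCast (n + 1)).symm
      rw [h4, hcoef, map_add]
      refine (norm_add_le _ _).trans (add_le_add ?_ hsecond)
      rw [PowerSeries.coeff_smul, smul_eq_mul, norm_mul]
      have h5 : ‖(m : ℂ) + 1‖ = m + 1 := by exact_mod_cast Complex.norm_natCast (m + 1)
      rw [h5]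
      exact mul_le_mul_of_nonneg_left hfirst (by positivity)
    have hmJ : (m : ℝ) + 1 ≤ J := by exact_mod_cast hm
    have hn1 : (n₀ : ℝ) ≤ n + 1 := by
      have : n₀ ≤ n + 1 := by nlinarith [Nat.zero_le ((E + 1) * (m + 1))]
      exact_mod_cast this
    rw [pow_succ, ← mul_assoc, ← hZ, mul_div_assoc', le_div_iff₀ hn₀']
    have h6 : ‖x‖ * n₀ ≤ ‖x‖ * (n + 1) := mul_le_mul_of_nonneg_left hn1 (norm_nonneg _)
    have h7 : (m + 1) * (lenOne (Polynomial.derivative (A 0)) * Z) + W * Z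
        ≤ Z * (C * J) := by
      have hJ1 : (1 : ℝ) ≤ J := by linarith [(Nat.cast_nonneg m : (0 : ℝ) ≤ m)]
      have : (m + 1) * lenOne (Polynomial.derivative (A 0)) + W ≤ C * J := by
        rw [hC]
        nlinarith [mul_le_mul_of_nonneg_right hmJ hL0, mul_le_mul_of_nonneg_right hJ1 hW0]
      nlinarith [mul_le_mul_of_nonneg_left this hZ0]
    linarith

lemma psDeriv_eq {k : Type*} [Field k] (f : PowerSeries k) :
    psDeriv f = PowerSeries.derivative k f := rfl

lemma coeff_psDeriv_iterate {k : Type*} [Field k] (f : PowerSeries k) (i n : ℕ) :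
    PowerSeries.coeff n (psDeriv^[i] f)
      = ((n + 1).ascFactorial i : k) * PowerSeries.coeff (n + i) f :=
  PowerSeries.coeff_iterate_derivative f i n

/-- Multiplying the coefficients of `g` by `(n - r) / q` amounts to applying the operator
`(z d/dz - r) / q`; this is how that operator interacts with multiplication by powers of `A`. -/
lemma coeff_pow_mul_twist (A : ℂ[X]) (b : ℕ → ℂ) (r q : ℂ) (m n : ℕ) :
    PowerSeries.coeff n ((A : PowerSeries ℂ) ^ (m + 1) *
        PowerSeries.mk fun n => (((n : ℂ) - r) / q) * b n)
      = (((n : ℂ) - r) / q) * PowerSeries.coeff n ((A : PowerSeries ℂ) ^ (m + 1) *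
          PowerSeries.mk b)
        - ((m + 1 : ℂ) / q) * PowerSeries.coeff n
          (((Polynomial.X * Polynomial.derivative A : ℂ[X]) : PowerSeries ℂ) *
            ((A : PowerSeries ℂ) ^ m * PowerSeries.mk b)) := by
  have hX : ∀ F : PowerSeries ℂ, PowerSeries.coeff n
      (PowerSeries.X * PowerSeries.derivative ℂ F) = n * PowerSeries.coeff n F := by
    intro F
    cases n with
    | zero => simp
    | succ n =>
      rw [PowerSeries.coeff_succ_X_mul, PowerSeries.coeff_derivative]
      push_cast; ring
  have h1 : (PowerSeries.mk fun n => (((n : ℂ) - r) / q) * b n)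
      = PowerSeries.C q⁻¹ * (PowerSeries.X * PowerSeries.derivative ℂ (PowerSeries.mk b)
          - PowerSeries.C r * PowerSeries.mk b) := by
    ext k
    have hX : PowerSeries.coeff k
        (PowerSeries.X * PowerSeries.derivative ℂ (PowerSeries.mk b)) = k * b k := by
      cases k with
      | zero => simp
      | succ n =>
        rw [PowerSeries.coeff_succ_X_mul, PowerSeries.coeff_derivative]
        simp; ring
    rw [PowerSeries.coeff_C_mul, map_sub, hX, PowerSeries.coeff_C_mul]
    simp [div_eq_mul_inv]; ring
  have h2 : PowerSeries.X * PowerSeries.derivative ℂ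
        ((A : PowerSeries ℂ) ^ (m + 1) * PowerSeries.mk b)
      = (A : PowerSeries ℂ) ^ (m + 1) * (PowerSeries.X *
          PowerSeries.derivative ℂ (PowerSeries.mk b))
        + PowerSeries.C (m + 1 : ℂ) *
          (((Polynomial.X * Polynomial.derivative A : ℂ[X]) : PowerSeries ℂ) *
            ((A : PowerSeries ℂ) ^ m * PowerSeries.mk b)) := by
    rw [Derivation.leibniz, Derivation.leibniz_pow, PowerSeries.derivative_coe]
    simp only [smul_eq_mul, nsmul_eq_mul, Nat.add_sub_cancel, Polynomial.coe_mul,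
      Polynomial.coe_X]
    simp
    ring
  rw [h1]
  have h3 : (A : PowerSeries ℂ) ^ (m + 1) * (PowerSeries.C q⁻¹ *
        (PowerSeries.X * PowerSeries.derivative ℂ (PowerSeries.mk b)
          - PowerSeries.C r * PowerSeries.mk b))
      = PowerSeries.C q⁻¹ * (PowerSeries.X * PowerSeries.derivative ℂ
          ((A : PowerSeries ℂ) ^ (m + 1) * PowerSeries.mk b)
        - PowerSeries.C (m + 1 : ℂ) *
          (((Polynomial.X * Polynomial.derivative A : ℂ[X]) : PowerSeries ℂ) *
            ((A : PowerSeries ℂ) ^ m * PowerSeries.mk b))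
        - PowerSeries.C r * ((A : PowerSeries ℂ) ^ (m + 1) * PowerSeries.mk b)) := by
    rw [h2]; ring
  rw [h3, PowerSeries.coeff_C_mul, map_sub, map_sub, hX, PowerSeries.coeff_C_mul,
    PowerSeries.coeff_C_mul]
  simp [div_eq_mul_inv]; ring

/-- The basic estimate: for a solution `a` of the differential equation, the coefficients of
`(A 0)^m · ∑ c(n) a_n z^n` are small for `n` well above `n₀` and `m ≤ J` with `J` a small multiple
of `n₀`. Here `c` is a product of linear factors `(n - r) / q`. -/
lemma decay (p : ℕ) (hp : 1 ≤ p) (A : Fin (p + 1) → ℂ[X]) (a : ℕ → ℂ)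
    (hf : ∑ i : Fin (p + 1),
      (A i : PowerSeries ℂ) * (psDeriv^[p - i.val] (PowerSeries.mk a)) = 0) :
    ∃ C : ℝ, 1 ≤ C ∧ ∃ D : ℕ, ∀ J n₀ H : ℕ, 1 ≤ n₀ → ∀ X : ℝ, 0 ≤ X →
      (∀ n, n₀ ≤ n → n ≤ H + p → ‖a n‖ ≤ X) →
      ∀ rs : List (ℕ × ℂ), (∀ r ∈ rs, r.1 ≤ H) →
      ∀ m ≤ J, ∀ n, n₀ + D * m ≤ n → n ≤ H →
        ‖PowerSeries.coeff n ((A 0 : PowerSeries ℂ) ^ m *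
            PowerSeries.mk fun n => (rs.map fun r => ((n : ℂ) - r.1) / r.2).prod * a n)‖
          ≤ (H + p) ^ p * X * (C * J / n₀) ^ m * (rs.map fun r => 2 * H / ‖r.2‖).prod := by
  obtain ⟨C₀, hC₀, D₀, hb⟩ := base_decay p A (PowerSeries.mk a) hf
  set Q : ℂ[X] := Polynomial.X * Polynomial.derivative (A 0) with hQ
  have hQ0 : 0 ≤ lenOne Q := lenOne_nonneg _
  refine ⟨C₀ + lenOne Q, by linarith, D₀ + Q.natDegree, ?_⟩
  intro J n₀ H hn₀ X hX hbase rs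
  have hn₀' : (0 : ℝ) < n₀ := by exact_mod_cast hn₀
  obtain ⟨C, hC⟩ : ∃ C : ℝ, C = C₀ + lenOne Q := ⟨_, rfl⟩
  rw [← hC]
  have hC0 : 0 ≤ C := by linarith
  induction rs with
  | nil =>
    intro _ m hm n hn hnH
    have h := hb J n₀ H hn₀ ((H + p) ^ p * X) (by positivity) ?_ m hm 0 (by omega) n
      (by nlinarith [Nat.zero_le (Q.natDegree * m)]) hnH
    · simp only [List.map_nil, List.prod_nil, one_mul, mul_one]
      simp only [Function.iterate_zero, id] at h
      refine h.trans ?_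
      gcongr
      linarith
    · intro i hi k hk hkH
      rw [coeff_psDeriv_iterate, norm_mul, PowerSeries.coeff_mk]
      refine mul_le_mul ?_ (hbase _ (by omega) (by omega)) (norm_nonneg _) (by positivity)
      rw [Complex.norm_natCast]
      have h1 : (k + 1).ascFactorial i ≤ (H + p) ^ i := by
        refine (Nat.ascFactorial_le_pow_add k i).trans (Nat.pow_le_pow_left (by omega) _)
      have h2 : (H + p) ^ i ≤ (H + p) ^ p := Nat.pow_le_pow_right (by omega) hi.le
      exact_mod_cast h1.trans h2
  | cons r rs ih =>
    intro hrs m hm n hn hnH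
    obtain ⟨r, q⟩ := r
    have ih' := ih fun x hx => hrs x (List.mem_cons_of_mem _ hx)
    have hrH : r ≤ H := hrs (r, q) List.mem_cons_self
    obtain ⟨P, hP⟩ : ∃ P : ℝ, P = (rs.map fun r => 2 * H / ‖r.2‖).prod := ⟨_, rfl⟩
    rw [← hP] at ih'
    have hP0 : 0 ≤ P := by
      rw [hP]; refine List.prod_nonneg ?_
      simp only [List.mem_map, forall_exists_index, and_imp]
      rintro _ x _ rfl
      positivity
    obtain ⟨b, hb'⟩ : ∃ b : ℕ → ℂ, b = fun n : ℕ =>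
      (rs.map fun r : ℕ × ℂ => ((n : ℂ) - r.1) / r.2).prod * a n := ⟨_, rfl⟩
    rw [← hb'] at ih'
    have hfun : (fun n : ℕ => (((r, q) :: rs).map fun r : ℕ × ℂ =>
        ((n : ℂ) - r.1) / r.2).prod * a n)
        = fun n : ℕ => (((n : ℂ) - r) / q) * b n := by
      funext n
      rw [hb', List.map_cons, List.prod_cons, mul_assoc]
    rw [hfun, List.map_cons, List.prod_cons, ← hP]
    have hnr : ‖((n : ℂ) - r) / q‖ ≤ H / ‖q‖ := by
      rw [norm_div]
      gcongr
      have : ‖(n : ℂ) - r‖ = |(n : ℝ) - r| := by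
        rw [← Real.norm_eq_abs, ← Complex.norm_real]; push_cast; rfl
      rw [this, abs_le]
      have h1 : (n : ℝ) ≤ H := by exact_mod_cast hnH
      have h2 : (r : ℝ) ≤ H := by exact_mod_cast hrH
      have h3 : (0 : ℝ) ≤ n := by positivity
      have h4 : (0 : ℝ) ≤ r := by positivity
      constructor <;> linarith
    obtain ⟨F, hF⟩ : ∃ F : ℝ, F = (H + p) ^ p * X := ⟨_, rfl⟩
    rw [← hF] at ih' ⊢
    have hF0 : 0 ≤ F := by rw [hF]; positivity
    have hlast := ih' m hm n hn hnH
    have hkey : (F * (C * J / n₀) ^ m * (2 * (H : ℝ) / ‖q‖ * P))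
        = H / ‖q‖ * (F * (C * J / n₀) ^ m * P) + H / ‖q‖ * (F * (C * J / n₀) ^ m * P) := by
      ring
    rw [hkey]
    cases m with
    | zero =>
      simp only [pow_zero, one_mul, PowerSeries.coeff_mk, mul_one] at hlast ⊢
      rw [norm_mul]
      have h1 : ‖((n : ℂ) - r) / q‖ * ‖b n‖ ≤ H / ‖q‖ * (F * P) :=
        mul_le_mul hnr hlast (norm_nonneg _) (by positivity)
      have h2 : 0 ≤ H / ‖q‖ * (F * P) := by positivity
      linarith
    | succ m =>
      rw [coeff_pow_mul_twist]
      refine (norm_sub_le _ _).trans (add_le_add ?_ ?_)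
      · rw [norm_mul]
        exact mul_le_mul hnr hlast (norm_nonneg _) (by positivity)
      · rw [norm_mul, norm_div]
        have h5 : ‖(m : ℂ) + 1‖ = m + 1 := by exact_mod_cast Complex.norm_natCast (m + 1)
        rw [h5]
        have h6 := norm_coeff_mul_le Q ((A 0 : PowerSeries ℂ) ^ m * PowerSeries.mk b)
          (D₀ + Q.natDegree) n (F * (C * J / n₀) ^ m * P) (by omega) (by positivity) ?_
        · refine (mul_le_mul_of_nonneg_left h6 (by positivity)).trans ?_
          have h7 : ((m : ℝ) + 1) * lenOne Q ≤ J * C := by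
            have : (m : ℝ) + 1 ≤ J := by exact_mod_cast hm
            have : lenOne Q ≤ C := by linarith
            gcongr
          have h8 : (n₀ : ℝ) ≤ H := by
            have : n₀ ≤ H := by nlinarith [Nat.zero_le ((D₀ + Q.natDegree) * (m + 1))]
            exact_mod_cast this
          have h9 : (m + 1 : ℝ) / ‖q‖ * (lenOne Q * (F * (C * J / n₀) ^ m * P))
              = (((m : ℝ) + 1) * lenOne Q) * ((F * (C * J / n₀) ^ m * P) / ‖q‖) := by ring
          have h10 : H / ‖q‖ * (F * (C * J / n₀) ^ (m + 1) * P)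
              = (H * (C * J / n₀)) * ((F * (C * J / n₀) ^ m * P) / ‖q‖) := by ring
          rw [h9, h10]
          refine mul_le_mul_of_nonneg_right (h7.trans ?_) (by positivity)
          have h11 : J * C = n₀ * (C * J / n₀) := by field_simp
          rw [h11]
          exact mul_le_mul_of_nonneg_right h8 (by positivity)
        · intro j hj hjn
          refine ih' m (by omega) (n - j) ?_ (by omega)
          have : (D₀ + Q.natDegree) * (m + 1) = (D₀ + Q.natDegree) * m + (D₀ + Q.natDegree) := by
            ring
          omega

/-! ### Elementary estimates -/

lemma factorial_le_prod_of_pos (G : Finset ℕ) : (∀ g ∈ G, 0 < g) →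
    G.card.factorial ≤ ∏ g ∈ G, g := by
  induction G using Finset.induction_on_max with
  | empty => simp
  | insert a s ha ih =>
    intro h
    have hns : a ∉ s := fun h' => (ha a h').false
    rw [Finset.card_insert_of_notMem hns, Finset.prod_insert hns, Nat.factorial_succ]
    have h1 : s ⊆ Finset.Ioo 0 a := fun x hx =>
      Finset.mem_Ioo.mpr ⟨h x (Finset.mem_insert_of_mem hx), ha x hx⟩
    have h2 := Finset.card_le_card h1
    have h3 := h a (Finset.mem_insert_self _ _)
    rw [Nat.card_Ioo] at h2
    exact Nat.mul_le_mul (by omega) (ih fun g hg => h g (Finset.mem_insert_of_mem hg))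

/-- `x^k / k!` is subexponential in `x` when `k = o(x)`. -/
lemma pow_div_factorial_small (ξ : ℝ) (hξ : 0 < ξ) :
    ∃ ε : ℝ, 0 < ε ∧ ∀ x : ℝ, 0 ≤ x → ∀ k : ℕ, (k : ℝ) ≤ ε * x →
      x ^ k / (k.factorial : ℝ) ≤ Real.exp (ξ * x) := by
  obtain ⟨w, hw0, hwξ⟩ : ∃ w : ℝ, 0 < w ∧ w ≤ ξ / 2 := ⟨ξ / 2, by positivity, le_rfl⟩
  refine ⟨ξ / 2 / (1 + |Real.log w|), by positivity, fun x hx k hk => ?_⟩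
  have h1 := Real.pow_div_factorial_le_exp (w * x) (by positivity) k
  have h2 : x ^ k / (k.factorial : ℝ) = Real.exp (-(k * Real.log w)) *
      ((w * x) ^ k / (k.factorial : ℝ)) := by
    rw [Real.exp_neg, mul_comm (k : ℝ), ← Real.rpow_def_of_pos hw0, Real.rpow_natCast, mul_pow]
    field_simp
  rw [h2]
  refine (mul_le_mul_of_nonneg_left h1 (Real.exp_pos _).le).trans ?_
  rw [← Real.exp_add]
  apply Real.exp_le_exp.mpr
  have h3 : -(k * Real.log w) ≤ ξ / 2 * x := by
    have h4 : -(k * Real.log w) ≤ k * |Real.log w| := by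
      have := neg_abs_le (Real.log w)
      nlinarith [Nat.cast_nonneg (α := ℝ) k]
    have h5 : k * (1 + |Real.log w|) ≤ ξ / 2 * x := by
      have h6 := mul_le_mul_of_nonneg_right hk (by positivity : 0 ≤ 1 + |Real.log w|)
      refine h6.trans (le_of_eq ?_)
      field_simp
    nlinarith [Nat.cast_nonneg (α := ℝ) k]
  nlinarith

lemma prod_div_le_pow_div_factorial (G : Finset ℕ) (hG : ∀ g ∈ G, 0 < g) (x : ℝ) (hx : 0 ≤ x) :
    ∏ g ∈ G, x / (g : ℝ) ≤ x ^ G.card / (G.card.factorial : ℝ) := by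
  rw [Finset.prod_div_distrib, Finset.prod_const]
  have h := factorial_le_prod_of_pos G hG
  have h' : (G.card.factorial : ℝ) ≤ ∏ g ∈ G, (g : ℝ) := by
    rw [← Nat.cast_prod]; exact Nat.cast_le.mpr h
  have h0 : (0 : ℝ) < G.card.factorial := by exact_mod_cast Nat.factorial_pos _
  gcongr

/-- The product of `2n / |s - s'|` over a sparse set of `s' ≤ n` is subexponential. -/
lemma prod_dist_small (ξ : ℝ) (hξ : 0 < ξ) :
    ∃ ε : ℝ, 0 < ε ∧ ∀ (n s : ℕ) (F : Finset ℕ), s ∉ F →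
      (F.card : ℝ) ≤ ε * n → ∏ t ∈ F, 2 * (n : ℝ) / ‖(s : ℂ) - t‖ ≤ Real.exp (ξ * n) := by
  obtain ⟨ε, hε, h⟩ := pow_div_factorial_small (ξ / 4) (by positivity)
  refine ⟨ε, hε, fun n s F hs hF => ?_⟩
  have hx : (0 : ℝ) ≤ 2 * n := by positivity
  have key : ∀ G : Finset ℕ, (∀ g ∈ G, 0 < g) → G.card ≤ F.card →
      ∏ g ∈ G, 2 * (n : ℝ) / (g : ℝ) ≤ Real.exp (ξ / 4 * (2 * n)) := by
    intro G hG hc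
    refine (prod_div_le_pow_div_factorial G hG _ hx).trans (h _ hx _ ?_)
    have : (G.card : ℝ) ≤ F.card := by exact_mod_cast hc
    nlinarith [Nat.cast_nonneg (α := ℝ) n, mul_nonneg hε.le (Nat.cast_nonneg (α := ℝ) n)]
  -- On each side of `s` the distances to `s` are distinct positive integers, so their product is at
  -- least a factorial.
  rw [← Finset.prod_filter_mul_prod_filter_not F (fun t => t < s)]
  have h1 : ∏ t ∈ F with t < s, 2 * (n : ℝ) / ‖(s : ℂ) - t‖ ≤ Real.exp (ξ / 4 * (2 * n)) := by
    have hinj : Set.InjOn (fun t => s - t) (F.filter (fun t => t < s)) := by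
      intro t ht u hu htu
      simp only [Finset.coe_filter, Set.mem_ofPred_eq] at ht hu htu
      omega
    have := key ((F.filter (fun t => t < s)).image fun t => s - t)
      (by simp only [Finset.mem_image, Finset.mem_filter]; rintro _ ⟨t, ht, rfl⟩; omega)
      (Finset.card_image_le.trans (Finset.card_filter_le _ _))
    rw [Finset.prod_image hinj] at this
    refine le_of_eq_of_le (Finset.prod_congr rfl ?_) this
    intro t ht
    rw [Finset.mem_filter] at ht
    congr 1
    rw [← Nat.cast_sub ht.2.le, Complex.norm_natCast]
  have h2 : ∏ t ∈ F with ¬ t < s, 2 * (n : ℝ) / ‖(s : ℂ) - t‖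
      ≤ Real.exp (ξ / 4 * (2 * n)) := by
    have hinj : Set.InjOn (fun t => t - s) (F.filter (fun t => ¬ t < s)) := by
      intro t ht u hu htu
      simp only [Finset.coe_filter, Set.mem_ofPred_eq] at ht hu htu
      omega
    have := key ((F.filter (fun t => ¬ t < s)).image fun t => t - s)
      (by
        simp only [Finset.mem_image, Finset.mem_filter]
        rintro _ ⟨t, ht, rfl⟩
        have : t ≠ s := fun h => hs (h ▸ ht.1)
        omega)
      (Finset.card_image_le.trans (Finset.card_filter_le _ _))
    rw [Finset.prod_image hinj] at this
    refine le_of_eq_of_le (Finset.prod_congr rfl ?_) this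
    intro t ht
    rw [Finset.mem_filter] at ht
    congr 1
    rw [norm_sub_rev, ← Nat.cast_sub (by omega), Complex.norm_natCast]
  refine (mul_le_mul h1 h2 (Finset.prod_nonneg fun _ _ => by positivity)
    (Real.exp_pos _).le).trans ?_
  rw [← Real.exp_add]
  apply Real.exp_le_exp.mpr
  linarith

lemma add_pow_le_exp (κ : ℝ) (hκ : 0 < κ) (p q : ℕ) :
    ∃ M : ℝ, 0 < M ∧ ∀ x : ℝ, 0 ≤ x → (x + q) ^ p ≤ M * Real.exp (κ * x) := by
  refine ⟨(p.factorial : ℝ) * κ⁻¹ ^ p * Real.exp (κ * q), by positivity, fun x hx => ?_⟩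
  have h := Real.pow_div_factorial_le_exp (κ * (x + q)) (by positivity) p
  rw [div_le_iff₀ (by positivity), mul_pow, mul_add, Real.exp_add] at h
  have h2 : (x + q) ^ p = κ⁻¹ ^ p * (κ ^ p * (x + q) ^ p) := by
    rw [← mul_assoc, ← mul_pow, inv_mul_cancel₀ hκ.ne', one_pow, one_mul]
  rw [h2]
  refine (mul_le_mul_of_nonneg_left h (by positivity)).trans (le_of_eq ?_)
  ring

lemma eventually_mul_le (k c : ℝ) (hc : 0 < c) :
    ∀ᶠ x in nhdsWithin (0 : ℝ) (Set.Ioi 0), k * x ≤ c := by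
  have h : Tendsto (fun x : ℝ => k * x) (nhdsWithin (0 : ℝ) (Set.Ioi 0)) (nhds (k * 0)) :=
    ((continuous_const.mul continuous_id).tendsto 0).mono_left nhdsWithin_le_nhds
  rw [mul_zero] at h
  exact (h.eventually (gt_mem_nhds hc)).mono fun _ hx => le_of_lt hx

open Classical in
/-- Zero density, in a form convenient for estimates. -/
def ZD (S : Set ℕ) : Prop :=
  ∀ ε : ℝ, 0 < ε → ∃ N : ℕ, ∀ n, N ≤ n →
    (((Finset.range (n + 1)).filter (· ∈ S)).card : ℝ) ≤ ε * n

/-! ### Subexponential growth -/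

/-- The interpolation argument at a single index `s`: a product of linear factors kills the
indices of the sparse set `F`, and both sides of the coefficient identity for `A^J · (c a)` are
estimated. -/
lemma growth_core (p e D J n₀ s n : ℕ) (hn : n = s + e * J) (C X E : ℝ) (A B : ℂ[X]) (a : ℕ → ℂ) (F : Finset ℕ)
    (hAB : A = Polynomial.X ^ e * B)
    (hdec : ∀ rs : List (ℕ × ℂ), (∀ r ∈ rs, r.1 ≤ n) →
      ∀ k, n₀ + D * J ≤ k → k ≤ n →
        ‖PowerSeries.coeff k ((A : PowerSeries ℂ) ^ J *
            PowerSeries.mk fun n => (rs.map fun r => ((n : ℂ) - r.1) / r.2).prod * a n)‖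
          ≤ ((n : ℝ) + p) ^ p * X * (C * J / n₀) ^ J *
              (rs.map fun r => 2 * (n : ℝ) / ‖r.2‖).prod)
    (hn₀ : n₀ + D * J ≤ n) (hsF : s ∉ F) (hF : ∀ t ∈ F, t ≤ n)
    (hE : 0 ≤ E) (hsmall : ∀ i ≤ s, i ≠ s → i ∉ F → ‖a i‖ ≤ E) :
    ‖B.coeff 0‖ ^ J * ‖a s‖ ≤ ((n : ℝ) + p) ^ p * X * (C * J / n₀) ^ J *
        (∏ t ∈ F, 2 * (n : ℝ) / ‖(s : ℂ) - t‖)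
      + lenOne B ^ J * ((∏ t ∈ F, 2 * (n : ℝ) / ‖(s : ℂ) - t‖) * E) := by
  set Pr : ℝ := ∏ t ∈ F, 2 * (n : ℝ) / ‖(s : ℂ) - t‖ with hPr
  have hPr0 : 0 ≤ Pr := Finset.prod_nonneg fun _ _ => by positivity
  have hd := hdec (F.toList.map fun t => (t, (s : ℂ) - t)) (by simpa using hF) n hn₀ le_rfl
  simp only [List.map_map, Function.comp_def, Finset.prod_map_toList] at hd
  rw [← hPr] at hd
  obtain ⟨c, hc⟩ : ∃ c : ℕ → ℂ, c = fun i : ℕ => ∏ t ∈ F, ((i : ℂ) - t) / ((s : ℂ) - t) :=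
    ⟨_, rfl⟩
  have hcs : c s = 1 := by
    rw [hc]
    refine Finset.prod_eq_one fun t ht => div_self ?_
    rw [sub_ne_zero]
    intro h
    exact hsF ((Nat.cast_injective h) ▸ ht)
  have hcF : ∀ i ∈ F, c i = 0 := by
    intro i hi
    rw [hc]
    exact Finset.prod_eq_zero hi (by simp)
  have hcle : ∀ i ≤ n, ‖c i‖ ≤ Pr := by
    intro i hi
    rw [hc, hPr]
    simp only [norm_prod]
    refine Finset.prod_le_prod (fun _ _ => norm_nonneg _) fun t ht => ?_
    rw [norm_div]
    gcongr
    refine (norm_sub_le _ _).trans ?_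
    rw [Complex.norm_natCast, Complex.norm_natCast]
    have h1 : (i : ℝ) ≤ n := by exact_mod_cast hi
    have h2 : (t : ℝ) ≤ n := by exact_mod_cast hF t ht
    linarith
  have hsplit : (PowerSeries.mk fun i => c i * a i)
      = PowerSeries.X ^ s * PowerSeries.C (a s) +
        PowerSeries.mk (fun i => if i = s then 0 else c i * a i) := by
    ext i
    simp only [PowerSeries.coeff_mk, map_add, PowerSeries.coeff_X_pow_mul', PowerSeries.coeff_C]
    by_cases h : i = s
    · rw [h, hcs]; simp
    · have : ¬ (s ≤ i ∧ i - s = 0) := by omega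
      by_cases h1 : s ≤ i
      · have h2 : i - s ≠ 0 := by omega
        simp [h, h1, h2]
      · simp [h, h1]
  -- Since `A = X^e * B`, the coefficient of index `s + e * J` of `A^J * g` is that of index `s` of
  -- `B^J * g`, which is `B(0)^J g_s` plus terms of index `< s`.
  have hcoef : PowerSeries.coeff n ((A : PowerSeries ℂ) ^ J *
        PowerSeries.mk fun i => c i * a i)
      = B.coeff 0 ^ J * a s + PowerSeries.coeff s ((B : PowerSeries ℂ) ^ J *
          PowerSeries.mk (fun i => if i = s then 0 else c i * a i)) := by
    rw [hAB, Polynomial.coe_mul, Polynomial.coe_pow, Polynomial.coe_X, mul_pow, ← pow_mul,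
      mul_assoc, hn, PowerSeries.coeff_X_pow_mul, hsplit, mul_add, map_add, mul_left_comm,
      PowerSeries.coeff_X_pow_mul', if_pos le_rfl, Nat.sub_self, PowerSeries.coeff_mul_C]
    simp
  have hy := norm_coeff_pow_mul_le B
    (PowerSeries.mk (fun i => if i = s then 0 else c i * a i)) s (Pr * E) (by positivity) (by
      intro i hi
      rw [PowerSeries.coeff_mk]
      split_ifs with h
      · rw [norm_zero]; positivity
      · rw [norm_mul]
        by_cases hiF : i ∈ F
        · rw [hcF i hiF, norm_zero, zero_mul]; positivity
        · exact mul_le_mul (hcle i (by omega)) (hsmall i hi h hiF) (norm_nonneg _) hPr0) J s le_rfl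
  have hc' : (fun i : ℕ => (∏ t ∈ F, ((i : ℂ) - t) / ((s : ℂ) - t)) * a i)
      = fun i => c i * a i := by rw [hc]
  rw [hc', hcoef] at hd
  rw [← norm_pow, ← norm_mul]
  calc ‖B.coeff 0 ^ J * a s‖ = ‖(B.coeff 0 ^ J * a s + PowerSeries.coeff s ((B : PowerSeries ℂ) ^ J *
          PowerSeries.mk (fun i => if i = s then 0 else c i * a i))) -
          PowerSeries.coeff s ((B : PowerSeries ℂ) ^ J *
          PowerSeries.mk (fun i => if i = s then 0 else c i * a i))‖ := by rw [add_sub_cancel_right]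
    _ ≤ _ := (norm_sub_le _ _).trans (add_le_add hd hy)

lemma bound_of_eventually (a : ℕ → ℂ) (θ B : ℝ) (hθ : 0 ≤ θ) (N : ℕ) (hB : 0 ≤ B)
    (h : ∀ n, N ≤ n → ‖a n‖ ≤ B * Real.exp (θ * n)) :
    ∃ B' : ℝ, ∀ n : ℕ, ‖a n‖ ≤ B' * Real.exp (θ * n) := by
  refine ⟨B + ∑ i ∈ Finset.range N, ‖a i‖, fun n => ?_⟩
  have h0 : 0 ≤ ∑ i ∈ Finset.range N, ‖a i‖ := Finset.sum_nonneg fun _ _ => norm_nonneg _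
  have h1 : 1 ≤ Real.exp (θ * n) := Real.one_le_exp (by positivity)
  rcases le_or_gt N n with hn | hn
  · have := h n hn
    nlinarith
  · have h2 := Finset.single_le_sum (f := fun i => ‖a i‖) (fun _ _ => norm_nonneg _)
      (Finset.mem_range.mpr hn)
    nlinarith

set_option maxHeartbeats 1000000 in
/-- One improvement of the exponential growth rate. The gain `δ` does not depend on `θ ∈ [τ, Θ]`,
so the step can be iterated. -/
lemma growth_step (p : ℕ) (hp : 1 ≤ p) (A : Fin (p + 1) → ℂ[X]) (a : ℕ → ℂ)
    (hf : ∑ i : Fin (p + 1),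
      (A i : PowerSeries ℂ) * (psDeriv^[p - i.val] (PowerSeries.mk a)) = 0)
    (hA0 : A 0 ≠ 0)
    (hS : ∀ η : ℝ, 0 < η → ∃ S : Set ℕ, ZD S ∧ ∀ n, n ∉ S → ‖a n‖ ≤ Real.exp (η * n))
    (τ Θ : ℝ) (hτ : 0 < τ) :
    ∃ δ : ℝ, 0 < δ ∧ δ ≤ τ ∧ ∀ θ, τ ≤ θ → θ ≤ Θ →
      (∃ B : ℝ, ∀ n : ℕ, ‖a n‖ ≤ B * Real.exp (θ * n)) →
      ∃ B : ℝ, ∀ n : ℕ, ‖a n‖ ≤ B * Real.exp ((θ - δ) * n) := by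
  classical
  obtain ⟨C, hC1, D, hdec⟩ := decay p hp A a hf
  obtain ⟨B, hAB, hB⟩ := Polynomial.exists_eq_pow_rootMultiplicity_mul_and_not_dvd (A 0) hA0 0
  obtain ⟨e, he⟩ : ∃ e, e = Polynomial.rootMultiplicity 0 (A 0) := ⟨_, rfl⟩
  rw [Polynomial.C_0, sub_zero] at hAB hB
  rw [← he] at hAB
  rw [Polynomial.X_dvd_iff] at hB
  obtain ⟨α, hα⟩ : ∃ α, α = ‖B.coeff 0‖ := ⟨_, rfl⟩
  have hα0 : 0 < α := by rw [hα]; exact norm_pos_iff.mpr hB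
  have hαB : α ≤ lenOne B := by
    rw [hα]
    exact Finset.single_le_sum (f := fun i => ‖B.coeff i‖) (fun _ _ => norm_nonneg _)
      (Finset.mem_range.mpr (Nat.succ_pos _))
  obtain ⟨Λ, hΛ⟩ : ∃ Λ, Λ = Real.log (lenOne B / α) := ⟨_, rfl⟩
  have hΛ0 : 0 ≤ Λ := by
    rw [hΛ]; exact Real.log_nonneg ((one_le_div hα0).mpr hαB)
  have hlen : lenOne B = α * Real.exp Λ := by
    rw [hΛ, Real.exp_log (div_pos (hα0.trans_le hαB) hα0)]; field_simp
  -- `γ` is the ratio `J / s`; the last condition makes the decay factor `(C J / n₀)^J` beat both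
  -- `α^J` and the exponential growth of rate `Θ` over the `e * J` extra indices.
  obtain ⟨γ, hγ0, hγD, hγe, hγτ, hγΛ, hγK⟩ : ∃ γ : ℝ, 0 < γ ∧ D * γ ≤ 1 / 2 ∧ e * γ ≤ 1 ∧
      1 * γ ≤ τ / 4 ∧ Λ * γ ≤ τ / 4 ∧ (2 * C / α * Real.exp (Θ * e)) * γ ≤ Real.exp (-1) := by
    obtain ⟨γ, h⟩ := (((((eventually_mul_le (D : ℝ) (1 / 2) (by norm_num)).and
      (eventually_mul_le (e : ℝ) 1 one_pos)).and
      (eventually_mul_le 1 (τ / 4) (by positivity))).and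
      (eventually_mul_le Λ (τ / 4) (by positivity))).and
      ((eventually_mul_le (2 * C / α * Real.exp (Θ * e)) _ (Real.exp_pos (-1))).and
        self_mem_nhdsWithin)).exists
    exact ⟨γ, h.2.2, h.1.1.1.1, h.1.1.1.2, h.1.1.2, h.1.2, h.2.1⟩
  rw [one_mul] at hγτ
  refine ⟨γ / 2, by positivity, by linarith, ?_⟩
  rintro θ hτθ hθΘ ⟨B₀, hB₀⟩
  have hB₀0 : 0 ≤ B₀ := by
    have := (norm_nonneg _).trans (hB₀ 0)
    simpa using this
  have hθ0 : 0 < θ := by linarith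
  obtain ⟨ε, hε, hprod⟩ := prod_dist_small (γ / 8) (by positivity)
  obtain ⟨S, hSZ, hSa⟩ := hS (τ / 8) (by positivity)
  obtain ⟨N, hN⟩ := hSZ ε hε
  obtain ⟨M, hM0, hM⟩ := add_pow_le_exp (γ / 8) (by positivity) p p
  refine bound_of_eventually a _ (M * B₀ * Real.exp (θ * p + 1) + 1) (by linarith)
    (max N 2) (by positivity) ?_
  intro s hs
  have hsN : N ≤ s := le_of_max_le_left hs
  have hs2 : 2 ≤ s := le_of_max_le_right hs
  have hs2' : (2 : ℝ) ≤ s := by exact_mod_cast hs2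
  obtain ⟨J, hJ⟩ : ∃ J, J = ⌊γ * s⌋₊ := ⟨_, rfl⟩
  have hJle : (J : ℝ) ≤ γ * s := by rw [hJ]; exact Nat.floor_le (by positivity)
  have hJgt : γ * s < J + 1 := by rw [hJ]; exact Nat.lt_floor_add_one _
  -- the index at which the lowest-order part of `A 0 ^ J` isolates the coefficient of index `s`
  obtain ⟨n, hn⟩ : ∃ n, n = s + e * J := ⟨_, rfl⟩
  have hnR : (n : ℝ) = s + e * J := by rw [hn]; push_cast; ring
  have hn2 : (n : ℝ) ≤ 2 * s := by
    rw [hnR]; nlinarith [mul_le_mul_of_nonneg_left hJle (Nat.cast_nonneg (α := ℝ) e)]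
  have hDJ : (D : ℝ) * J ≤ s / 2 := by
    nlinarith [mul_le_mul_of_nonneg_left hJle (Nat.cast_nonneg (α := ℝ) D)]
  have hDJn : D * J ≤ n := by
    have : ((D * J : ℕ) : ℝ) ≤ s := by push_cast; linarith
    have : D * J ≤ s := by exact_mod_cast this
    omega
  obtain ⟨n₀, hn₀⟩ : ∃ n₀, n₀ = n - D * J := ⟨_, rfl⟩
  have hn₀R : (n₀ : ℝ) = n - D * J := by rw [hn₀, Nat.cast_sub hDJn]; push_cast; ring
  have hn₀s : (s : ℝ) / 2 ≤ n₀ := by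
    rw [hn₀R, hnR]
    have : (0 : ℝ) ≤ e * J := by positivity
    linarith
  have hn₀1 : 1 ≤ n₀ := by
    have : (1 : ℝ) ≤ n₀ := by linarith
    exact_mod_cast this
  -- the exceptional indices other than `s`, to be killed by interpolation factors
  obtain ⟨F, hF⟩ : ∃ F, F = ((Finset.range (n + 1)).filter (· ∈ S)).erase s := ⟨_, rfl⟩
  have hsF : s ∉ F := by rw [hF]; simp
  have hFc : (F.card : ℝ) ≤ ε * n := by
    refine le_trans ?_ (hN n (by omega))
    rw [hF]
    exact_mod_cast Finset.card_erase_le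
  have hPi := hprod n s F hsF hFc
  obtain ⟨Pr, hPr⟩ : ∃ Pr : ℝ, Pr = ∏ t ∈ F, 2 * (n : ℝ) / ‖(s : ℂ) - t‖ := ⟨_, rfl⟩
  have hPr0 : 0 ≤ Pr := by
    rw [hPr]; exact Finset.prod_nonneg fun _ _ => by positivity
  have hmain := growth_core p e D J n₀ s n hn C (B₀ * Real.exp (θ * (n + p)))
    (Real.exp (τ / 8 * s)) (A 0) B a F hAB
    (fun rs hrs k hk hkn => hdec J n₀ n hn₀1 _ (by positivity) (fun k hk hkn => by
      refine (hB₀ k).trans ?_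
      have : (k : ℝ) ≤ n + p := by exact_mod_cast hkn
      gcongr) rs hrs J le_rfl k hk hkn) (by omega) hsF
    (fun t ht => by
      rw [hF, Finset.mem_erase, Finset.mem_filter, Finset.mem_range] at ht; omega)
    (Real.exp_pos _).le
    (fun i hi his hiF => by
      have : i ∉ S := fun h => hiF (by
        rw [hF, Finset.mem_erase, Finset.mem_filter, Finset.mem_range]
        exact ⟨his, by omega, h⟩)
      refine (hSa i this).trans ?_
      have : (i : ℝ) ≤ s := by exact_mod_cast hi
      gcongr)
  rw [← hPr] at hmain hPi
  rw [← hα] at hmain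
  have hPi' : Pr ≤ Real.exp (γ / 4 * s) := by
    refine hPi.trans (Real.exp_le_exp.mpr ?_)
    nlinarith
  have hMn : ((n : ℝ) + p) ^ p ≤ M * Real.exp (γ / 4 * s) := by
    refine (hM n (by positivity)).trans ?_
    gcongr M * Real.exp ?_
    nlinarith
  have hlam : C * J / n₀ ≤ 2 * C * γ := by
    rw [div_le_iff₀ (by linarith)]
    have h1 : C * J ≤ C * (γ * s) := by gcongr
    have h2 : C * (γ * s) = 2 * C * γ * (s / 2) := by ring
    have h3 : 2 * C * γ * (s / 2) ≤ 2 * C * γ * n₀ := by gcongr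
    exact (h1.trans h2.le).trans h3
  have hlamJ : (C * J / n₀) ^ J * Real.exp (θ * (n + p))
      ≤ α ^ J * (Real.exp (1 - γ * s) * Real.exp (θ * (s + p))) := by
    have h1 : Real.exp (θ * (n + p)) = Real.exp (θ * e) ^ J * Real.exp (θ * (s + p)) := by
      rw [← Real.exp_nat_mul, ← Real.exp_add, hnR]; ring_nf
    have h2 : C * J / n₀ * Real.exp (θ * e) ≤ α * Real.exp (-1) := by
      have h3 : C * J / n₀ * Real.exp (θ * e) ≤ 2 * C * γ * Real.exp (Θ * e) := by gcongr
      refine h3.trans ?_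
      have h4 := mul_le_mul_of_nonneg_left hγK hα0.le
      refine le_of_eq_of_le ?_ h4
      field_simp
    have h5 : (C * J / n₀ * Real.exp (θ * e)) ^ J ≤ (α * Real.exp (-1)) ^ J := by gcongr
    rw [h1, ← mul_assoc, ← mul_pow, ← mul_assoc]
    gcongr
    refine h5.trans ?_
    rw [mul_pow, ← Real.exp_nat_mul]
    gcongr
    linarith
  -- the coefficient of `A 0 ^ J * g`, small by the decay estimate
  have hT1 : ((n : ℝ) + p) ^ p * (B₀ * Real.exp (θ * (n + p))) * (C * J / n₀) ^ J * Pr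
      ≤ α ^ J * (M * B₀ * Real.exp (θ * p + 1) * Real.exp ((θ - γ / 2) * s)) := by
    calc ((n : ℝ) + p) ^ p * (B₀ * Real.exp (θ * (n + p))) * (C * J / n₀) ^ J * Pr
        = ((n : ℝ) + p) ^ p * B₀ * ((C * J / n₀) ^ J * Real.exp (θ * (n + p))) * Pr := by ring
      _ ≤ (M * Real.exp (γ / 4 * s)) * B₀ *
          (α ^ J * (Real.exp (1 - γ * s) * Real.exp (θ * (s + p)))) * Real.exp (γ / 4 * s) := by
          gcongr
      _ = α ^ J * (M * B₀ * (Real.exp (γ / 4 * s) * Real.exp (1 - γ * s) *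
          Real.exp (θ * (s + p)) * Real.exp (γ / 4 * s))) := by ring
      _ = _ := by
          rw [mul_assoc (M * B₀), ← Real.exp_add, ← Real.exp_add, ← Real.exp_add, ← Real.exp_add]
          ring_nf
  -- the terms of index `< s`: the exceptional ones vanish, the others are small by hypothesis
  have hT2 : lenOne B ^ J * (Pr * Real.exp (τ / 8 * s))
      ≤ α ^ J * Real.exp ((θ - γ / 2) * s) := by
    rw [hlen, mul_pow, mul_assoc]
    gcongr
    calc Real.exp Λ ^ J * (Pr * Real.exp (τ / 8 * s))
        ≤ Real.exp (τ / 4 * s) * (Real.exp (γ / 4 * s) * Real.exp (τ / 8 * s)) := by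
          gcongr
          rw [← Real.exp_nat_mul]
          apply Real.exp_le_exp.mpr
          nlinarith [mul_le_mul_of_nonneg_left hJle hΛ0]
      _ ≤ _ := by
          rw [← Real.exp_add, ← Real.exp_add]
          apply Real.exp_le_exp.mpr
          nlinarith
  have hfin := hmain.trans (add_le_add hT1 hT2)
  rw [← mul_add] at hfin
  have := le_of_mul_le_mul_left hfin (pow_pos hα0 J)
  linarith

/-- Absence of exponential growth off sparse sets, together with the differential equation and a
positive radius of convergence, forces subexponential growth throughout. -/
lemma growth (p : ℕ) (hp : 1 ≤ p) (A : Fin (p + 1) → ℂ[X]) (a : ℕ → ℂ)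
    (hf : ∑ i : Fin (p + 1),
      (A i : PowerSeries ℂ) * (psDeriv^[p - i.val] (PowerSeries.mk a)) = 0)
    (hA0 : A 0 ≠ 0)
    (hS : ∀ η : ℝ, 0 < η → ∃ S : Set ℕ, ZD S ∧ ∀ n, n ∉ S → ‖a n‖ ≤ Real.exp (η * n))
    (hr : ∃ B θ : ℝ, ∀ n : ℕ, ‖a n‖ ≤ B * Real.exp (θ * n))
    (τ : ℝ) (hτ : 0 < τ) : ∃ B : ℝ, ∀ n : ℕ, ‖a n‖ ≤ B * Real.exp (τ * n) := by
  obtain ⟨B, θ, hB⟩ := hr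
  obtain ⟨δ, hδ, hδτ, hstep⟩ := growth_step p hp A a hf hA0 hS τ (max τ θ) hτ
  have hB0 : 0 ≤ B := by
    have := (norm_nonneg _).trans (hB 0)
    simpa using this
  have hmono : ∀ x y : ℝ, x ≤ y → (∃ B : ℝ, ∀ n : ℕ, ‖a n‖ ≤ B * Real.exp (x * n)) →
      ∃ B : ℝ, ∀ n : ℕ, ‖a n‖ ≤ B * Real.exp (y * n) := by
    rintro x y hxy ⟨B, hB⟩
    have hB0 : 0 ≤ B := by
      have := (norm_nonneg _).trans (hB 0)
      simpa using this
    exact ⟨B, fun n => (hB n).trans (by gcongr)⟩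
  have hk : ∀ k : ℕ, ∃ B : ℝ, ∀ n : ℕ, ‖a n‖ ≤ B * Real.exp (max τ (θ - k * δ) * n) := by
    intro k
    induction k with
    | zero => exact hmono θ _ (by simp) ⟨B, hB⟩
    | succ k ih =>
      refine hmono _ _ ?_ (hstep _ (le_max_left _ _) (max_le_max le_rfl ?_) ih)
      · push_cast
        rcases le_total τ (θ - k * δ) with h | h
        · rw [max_eq_right h]; exact le_max_of_le_right (by linarith)
        · rw [max_eq_left h]; exact le_max_of_le_left (by linarith)
      · have : 0 ≤ k * δ := by positivity
        linarith
  obtain ⟨k, hk'⟩ := exists_nat_gt ((θ - τ) / δ)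
  rw [div_lt_iff₀ hδ] at hk'
  exact hmono _ _ (max_le le_rfl (by linarith)) (hk k)

/-! ### Integrality and Siegel's lemma -/

/-- The product of the conjugates of a nonzero algebraic integer is at least one in absolute
value. -/
lemma one_le_prod_norm {L : Type*} [Field L] [NumberField L] (x : L) (hx : IsIntegral ℤ x)
    (h0 : x ≠ 0) : 1 ≤ ∏ σ : L →+* ℂ, ‖σ x‖ := by
  have h1 := Algebra.norm_eq_prod_embeddings ℚ ℂ x
  have h2 : ∏ σ : L →ₐ[ℚ] ℂ, σ x = ∏ σ : L →+* ℂ, σ x :=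
    Fintype.prod_equiv (RingHom.equivRatAlgHom L ℂ).symm _ _ (fun σ => rfl)
  rw [← norm_prod, ← h2, ← h1]
  obtain ⟨z, hz⟩ := IsIntegrallyClosed.isIntegral_iff.mp (Algebra.isIntegral_norm ℚ hx)
  have hz0 : z ≠ 0 := by
    rintro rfl
    simp only [map_zero] at hz
    exact h0 ((Algebra.norm_eq_zero_iff).mp hz.symm)
  rw [← hz]
  simp only [eq_intCast, map_intCast, Complex.norm_intCast]
  exact_mod_cast Int.one_le_abs hz0

/-- Liouville's inequality, a form of the product formula: an algebraic number with small denominator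
and conjugates, one of which is extremely small, is zero. -/
lemma eq_zero_of_small {L : Type*} [Field L] [NumberField L] (ι : L →+* ℂ) (b : L) (d : ℕ)
    (hd : 0 < d) (hintg : IsIntegral ℤ ((d : L) * b)) (U V : ℝ) (hV : 1 ≤ V)
    (hU : ‖ι b‖ ≤ U) (hσ : ∀ σ : L →+* ℂ, ‖σ b‖ ≤ V)
    (h : (d : ℝ) ^ Module.finrank ℚ L * (U * V ^ Module.finrank ℚ L) < 1) : b = 0 := by
  classical
  by_contra hb
  have h1 := one_le_prod_norm _ hintg (mul_ne_zero (by exact_mod_cast hd.ne') hb)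
  refine absurd h1 (not_le.mpr (lt_of_le_of_lt ?_ h))
  simp only [map_mul, map_natCast, norm_mul, Complex.norm_natCast]
  rw [Finset.prod_mul_distrib, Finset.prod_const, Finset.card_univ,
    NumberField.Embeddings.card L ℂ]
  refine mul_le_mul_of_nonneg_left ?_ (by positivity)
  rw [← Finset.mul_prod_erase _ _ (Finset.mem_univ ι)]
  have hU0 : 0 ≤ U := (norm_nonneg _).trans hU
  refine mul_le_mul hU ?_ (Finset.prod_nonneg fun _ _ => norm_nonneg _) hU0
  refine (Finset.prod_le_prod (fun _ _ => norm_nonneg _) fun σ _ => hσ σ).trans ?_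
  rw [Finset.prod_const]
  refine pow_le_pow_right₀ hV ?_
  rw [← NumberField.Embeddings.card L ℂ]
  exact Finset.card_le_univ _

lemma isIntegral_coeff_pow_mul {L : Type*} [Field L] (A : L[X])
    (hA : ∀ j, IsIntegral ℤ (A.coeff j)) (G : PowerSeries L) (n : ℕ) (d : L)
    (h : ∀ i ≤ n, IsIntegral ℤ (d * PowerSeries.coeff i G)) (J : ℕ) :
    ∀ m ≤ n, IsIntegral ℤ (d * PowerSeries.coeff m ((A : PowerSeries L) ^ J * G)) := by
  induction J with
  | zero => intro m hm; simpa using h m hm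
  | succ J ih =>
    intro m hm
    rw [pow_succ', mul_assoc, PowerSeries.coeff_mul, Finset.mul_sum]
    refine IsIntegral.sum _ fun x hx => ?_
    rw [mul_left_comm, Polynomial.coeff_coe]
    rw [Finset.HasAntidiagonal.mem_antidiagonal] at hx
    exact (hA _).mul (ih _ (by omega))

/-- A small integer combination of binomial polynomials of low degree that vanishes on a given
sparse set. -/
lemma siegel_binomial (δ ζ : ℝ) (hδ : 0 < δ) (hδ1 : δ ≤ 1) (hζ : 0 < ζ) :
    ∃ ε : ℝ, 0 < ε ∧ ∃ H₀ : ℕ, ∀ H, H₀ ≤ H → ∀ F : Finset ℕ, (∀ s ∈ F, s ≤ H) →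
      (F.card : ℝ) ≤ ε * H → ∃ (k : ℕ) (e : ℕ → ℤ), (k : ℝ) ≤ δ * H ∧ (∃ i < k, e i ≠ 0) ∧
        (∀ i, |(e i : ℝ)| ≤ Real.exp (ζ * H)) ∧
        ∀ s ∈ F, ∑ i ∈ Finset.range k, e i * (s.choose i : ℤ) = 0 := by
  classical
  refine ⟨min (δ / 8) (ζ * δ / (16 * Real.log 4)), by
    have := Real.log_pos (by norm_num : (1 : ℝ) < 4)
    positivity, ⌈4 / δ⌉₊ + ⌈1 / min (δ / 8) (ζ * δ / (16 * Real.log 4))⌉₊, ?_⟩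
  obtain ⟨ε, hε⟩ : ∃ ε, ε = min (δ / 8) (ζ * δ / (16 * Real.log 4)) := ⟨_, rfl⟩
  rw [← hε]
  have hl4 := Real.log_pos (by norm_num : (1 : ℝ) < 4)
  have hε0 : 0 < ε := by rw [hε]; positivity
  have hε1 : ε ≤ δ / 8 := by rw [hε]; exact min_le_left _ _
  have hε2 : ε * (16 * Real.log 4) ≤ ζ * δ := by
    rw [← le_div_iff₀ (by positivity), hε]; exact min_le_right _ _
  intro H hH F₀ hF₀ hFc₀
  have hH1 : 4 / δ ≤ H := by
    refine (Nat.le_ceil _).trans ?_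
    exact_mod_cast (Nat.le_add_right _ _).trans hH
  have hH2 : 1 / ε ≤ H := by
    refine (Nat.le_ceil _).trans ?_
    exact_mod_cast (Nat.le_add_left _ _).trans hH
  rw [div_le_iff₀ hδ] at hH1
  rw [div_le_iff₀ hε0] at hH2
  -- adding the index `0` makes the system of equations nonempty
  obtain ⟨F, hF⟩ : ∃ F, F = insert 0 F₀ := ⟨_, rfl⟩
  have hFc : (F.card : ℝ) ≤ 2 * ε * H := by
    have : (F.card : ℝ) ≤ F₀.card + 1 := by rw [hF]; exact_mod_cast Finset.card_insert_le _ _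
    linarith
  have hFpos : 0 < F.card := by rw [hF]; exact Finset.card_pos.mpr (Finset.insert_nonempty _ _)
  have hFH : ∀ s ∈ F, s ≤ H := by
    rw [hF]; intro s hs
    rcases Finset.mem_insert.mp hs with rfl | hs
    · exact Nat.zero_le _
    · exact hF₀ s hs
  obtain ⟨k, hk⟩ : ∃ k, k = ⌊δ * H⌋₊ := ⟨_, rfl⟩
  have hkle : (k : ℝ) ≤ δ * H := by rw [hk]; exact Nat.floor_le (by positivity)
  have hkgt : δ * H < k + 1 := by rw [hk]; exact Nat.lt_floor_add_one _
  have hkH : δ * H / 2 ≤ k := by linarith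
  have hFk : 2 * (F.card : ℝ) ≤ k := by nlinarith
  have hH0 : (0 : ℝ) < H := by
    rcases (Nat.cast_nonneg (α := ℝ) H).eq_or_lt with h | h
    · rw [← h] at hH1; linarith
    · exact h
  have hcard : (1 : ℝ) ≤ F.card := by exact_mod_cast hFpos
  let _ : SeminormedAddCommGroup (Matrix F (Fin k) ℤ) := Matrix.seminormedAddCommGroup
  let M : Matrix F (Fin k) ℤ := fun s i => ((s : ℕ).choose i : ℤ)
  obtain ⟨t, ht0, htM, htn⟩ := Int.Matrix.exists_ne_zero_int_vec_norm_le M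
    (by
      rw [Fintype.card_coe, Fintype.card_fin]
      have : (F.card : ℝ) < k := by linarith
      exact_mod_cast this)
    (by rw [Fintype.card_coe]; exact hFpos)
  rw [Fintype.card_coe, Fintype.card_fin] at htn
  have hM : max 1 ‖M‖ ≤ 2 ^ H := by
    refine max_le (one_le_pow₀ (by norm_num)) ?_
    rw [Matrix.norm_le_iff (by positivity)]
    intro s i
    have h1 : (s : ℕ).choose i ≤ 2 ^ H :=
      (Nat.choose_le_two_pow _ _).trans (Nat.pow_le_pow_right (by norm_num) (hFH _ s.2))
    change ‖(((s : ℕ).choose i : ℕ) : ℤ)‖ ≤ _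
    rw [Int.norm_natCast]
    exact_mod_cast h1
  have hbase : (k : ℝ) * max 1 ‖M‖ ≤ Real.exp (Real.log 4 * H) := by
    have h1 : (k : ℝ) ≤ 2 ^ H := by
      have h2 : (k : ℝ) ≤ H := by nlinarith
      have h3 : (H : ℝ) ≤ 2 ^ H := by exact_mod_cast Nat.lt_two_pow_self.le
      linarith
    have h4 : Real.exp (Real.log 4 * H) = 2 ^ H * 2 ^ H := by
      rw [mul_comm, Real.exp_nat_mul, Real.exp_log (by norm_num), ← mul_pow]; norm_num
    rw [h4]
    gcongr
  have hexp : (F.card : ℝ) / (k - F.card) ≤ 8 * ε / δ := by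
    have : (k : ℝ) / 2 ≤ k - F.card := by linarith
    have hk2 : (0 : ℝ) < k / 2 := by linarith
    rw [div_le_div_iff₀ (by linarith) hδ]
    nlinarith
  -- The exponent `|F| / (k - |F|)` in Siegel's lemma is at most `8 ε / δ`, so the solution is as small
  -- as desired.
  have htn' : ‖t‖ ≤ Real.exp (ζ * H) := by
    refine htn.trans ?_
    have h1 : ((k : ℝ) * max 1 ‖M‖) ^ ((F.card : ℝ) / (k - F.card))
        ≤ Real.exp (Real.log 4 * H) ^ ((F.card : ℝ) / (k - F.card)) :=
      Real.rpow_le_rpow (by positivity) hbase (div_nonneg (by positivity) (by linarith))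
    have h2 : Real.exp (Real.log 4 * H) ^ ((F.card : ℝ) / (k - F.card))
        ≤ Real.exp (Real.log 4 * H) ^ (8 * ε / δ) :=
      Real.rpow_le_rpow_of_exponent_le (Real.one_le_exp (by positivity)) hexp
    refine (h1.trans h2).trans ?_
    rw [← Real.exp_mul]
    apply Real.exp_le_exp.mpr
    have h3 : Real.log 4 * H * (8 * ε / δ) = (ε * (16 * Real.log 4)) / δ * H / 2 := by ring
    rw [h3]
    have h4 : (ε * (16 * Real.log 4)) / δ ≤ ζ := by rw [div_le_iff₀ hδ]; exact hε2
    nlinarith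
  refine ⟨k, fun i => if h : i < k then t ⟨i, h⟩ else 0, hkle, ?_, ?_, ?_⟩
  · obtain ⟨i, hi⟩ := Function.ne_iff.mp ht0
    exact ⟨i, i.2, by simpa using hi⟩
  · intro i
    by_cases h : i < k
    · simp only [h, dite_true]
      refine le_trans ?_ htn'
      have := norm_le_pi_norm t ⟨i, h⟩
      rwa [Int.norm_eq_abs] at this
    · simp only [h, dite_false]
      simp [Real.exp_nonneg]
  · intro s hs
    have h1 := congrFun htM ⟨s, by rw [hF]; exact Finset.mem_insert_of_mem hs⟩
    rw [Matrix.mulVec, dotProduct] at h1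
    rw [Finset.sum_range]
    refine Eq.trans ?_ h1
    refine Finset.sum_congr rfl fun i _ => ?_
    simp [M, mul_comm]

/-! ### Vanishing of coefficients -/

lemma psDeriv_map {k k' : Type*} [Field k] [Field k'] (φ : k →+* k') (f : PowerSeries k) (i : ℕ) :
    PowerSeries.map φ (psDeriv^[i] f) = psDeriv^[i] (PowerSeries.map φ f) := by
  ext n
  rw [PowerSeries.coeff_map, coeff_psDeriv_iterate, coeff_psDeriv_iterate, map_mul, map_natCast,
    PowerSeries.coeff_map]

lemma ode_map {k k' : Type*} [Field k] [Field k'] (φ : k →+* k') (p : ℕ) (A : Fin (p + 1) → k[X])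
    (a : ℕ → k) (hf : ∑ i : Fin (p + 1),
      (A i : PowerSeries k) * (psDeriv^[p - i.val] (PowerSeries.mk a)) = 0) :
    ∑ i : Fin (p + 1), (((A i).map φ : k'[X]) : PowerSeries k') *
      (psDeriv^[p - i.val] (PowerSeries.mk fun n => φ (a n))) = 0 := by
  have h := congrArg (PowerSeries.map φ) hf
  rw [map_sum, map_zero] at h
  rw [← h]
  refine Finset.sum_congr rfl fun i _ => ?_
  rw [map_mul, psDeriv_map, Polynomial.polynomial_map_coe]
  congr 2

lemma map_coeff_pow_mul {k k' : Type*} [Field k] [Field k'] (φ : k →+* k') (A : k[X]) (u : ℕ → k)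
    (J n : ℕ) : φ (PowerSeries.coeff n ((A : PowerSeries k) ^ J * PowerSeries.mk u))
      = PowerSeries.coeff n (((A.map φ : k'[X]) : PowerSeries k') ^ J *
          PowerSeries.mk fun n => φ (u n)) := by
  rw [← PowerSeries.coeff_map, map_mul, map_pow, Polynomial.polynomial_map_coe]
  congr 2

/-- The binomial coefficient as a product of linear factors, the form to which `decay` applies. -/
lemma prod_sub_div_eq_choose {k : Type*} [Field k] [CharZero k] (n i : ℕ) :
    ∏ l ∈ Finset.range i, (((n : k) - l) / (l + 1)) = (n.choose i : k) := by
  induction i with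
  | zero => simp
  | succ i ih =>
    rw [Finset.prod_range_succ, ih]
    have h : ((i : k) + 1) ≠ 0 := by exact_mod_cast Nat.succ_ne_zero i
    have h1 := congrArg (Nat.cast : ℕ → k) (Nat.choose_succ_right_eq n i)
    push_cast at h1
    rcases le_or_gt i n with hin | hin
    · rw [Nat.cast_sub hin] at h1
      field_simp
      rw [← h1, mul_comm]
    · rw [Nat.choose_eq_zero_of_lt hin, Nat.choose_eq_zero_of_lt (by omega)]; simp

/-- The polynomial `∑_{i<k} e_i · binomial(x, i)`. -/
noncomputable def binPoly (L : Type*) [Field L] (e : ℕ → ℤ) (k : ℕ) : L[X] :=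
  ∑ i ∈ Finset.range k, Polynomial.C (e i : L) *
    ∏ l ∈ Finset.range i, (Polynomial.C ((l : L) + 1)⁻¹ * (Polynomial.X - Polynomial.C (l : L)))

lemma binPoly_eval (L : Type*) [Field L] [CharZero L] (e : ℕ → ℤ) (k n : ℕ) :
    (binPoly L e k).eval (n : L)
      = ((∑ i ∈ Finset.range k, e i * (n.choose i : ℤ) : ℤ) : L) := by
  rw [binPoly, Polynomial.eval_finsetSum]
  push_cast
  refine Finset.sum_congr rfl fun i _ => ?_
  rw [Polynomial.eval_mul, Polynomial.eval_C, Polynomial.eval_prod, ← prod_sub_div_eq_choose]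
  congr 1
  refine Finset.prod_congr rfl fun l _ => ?_
  simp [div_eq_mul_inv, mul_comm]

lemma binPoly_natDegree (L : Type*) [Field L] (e : ℕ → ℤ) (k : ℕ) :
    (binPoly L e k).natDegree ≤ k := by
  refine Polynomial.natDegree_sum_le_of_forall_le _ _ fun i hi => ?_
  refine (Polynomial.natDegree_C_mul_le _ _).trans ?_
  refine (Polynomial.natDegree_prod_le _ _).trans ?_
  refine le_trans (Finset.sum_le_card_nsmul _ _ 1 fun l _ => ?_) ?_
  · exact (Polynomial.natDegree_C_mul_le _ _).trans (Polynomial.natDegree_X_sub_C_le _)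
  · simpa using (Finset.mem_range.mp hi).le

lemma binPoly_ne_zero (L : Type*) [Field L] [CharZero L] (e : ℕ → ℤ) (k : ℕ)
    (h : ∃ i < k, e i ≠ 0) : binPoly L e k ≠ 0 := by
  classical
  intro h0
  obtain ⟨hi, he⟩ := Nat.find_spec h
  have h1 := binPoly_eval L e k (Nat.find h)
  rw [h0, Polynomial.eval_zero, Finset.sum_eq_single (Nat.find h)] at h1
  · rw [Nat.choose_self] at h1
    have : e (Nat.find h) = 0 := by simpa using h1.symm
    exact he this
  · intro j hj hne
    rcases lt_or_gt_of_ne hne with hlt | hgt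
    · have := Nat.find_min h hlt
      push Not at this
      rw [this (Finset.mem_range.mp hj), zero_mul]
    · rw [Nat.choose_eq_zero_of_lt hgt]; simp
  · intro hn
    exact absurd (Finset.mem_range.mpr hi) hn

/-- The bound at the distinguished embedding, where the decay estimate applies. -/
lemma bound_at_place {L : Type*} [Field L] [CharZero L] (ι : L →+* ℂ) (p : ℕ) (A : L[X])
    (a : ℕ → L) (J H k n : ℕ) (e : ℕ → ℤ) (E Y T : ℝ) (hY : 0 ≤ Y) (hE : 0 ≤ E)
    (hdec : ∀ rs : List (ℕ × ℂ), (∀ r ∈ rs, r.1 ≤ H) →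
        ‖PowerSeries.coeff n (((A.map ι : ℂ[X]) : PowerSeries ℂ) ^ J *
            PowerSeries.mk fun n => (rs.map fun r => ((n : ℂ) - r.1) / r.2).prod * ι (a n))‖
          ≤ Y * (rs.map fun r => 2 * (H : ℝ) / ‖r.2‖).prod)
    (hkH : k ≤ H) (he : ∀ i, |(e i : ℝ)| ≤ E)
    (hT : ∀ i < k, (2 * (H : ℝ)) ^ i / (i.factorial : ℝ) ≤ T) :
    ‖ι (PowerSeries.coeff n ((A : PowerSeries L) ^ J *
      PowerSeries.mk fun n => (binPoly L e k).eval (n : L) * a n))‖ ≤ k * (E * (Y * T)) := by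
  rw [map_coeff_pow_mul]
  have h1 : (PowerSeries.mk fun n : ℕ => ι ((binPoly L e k).eval (n : L) * a n))
      = ∑ i ∈ Finset.range k, PowerSeries.C (e i : ℂ) * PowerSeries.mk fun n : ℕ =>
        (((Finset.range i).toList.map fun l : ℕ => (l, ((l : ℂ) + 1))).map
          fun r : ℕ × ℂ => ((n : ℂ) - r.1) / r.2).prod * ι (a n) := by
    ext m
    rw [map_sum, PowerSeries.coeff_mk, map_mul, binPoly_eval, map_intCast, Int.cast_sum,
      Finset.sum_mul]
    refine Finset.sum_congr rfl fun i _ => ?_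
    rw [PowerSeries.coeff_C_mul, PowerSeries.coeff_mk, List.map_map, Function.comp_def,
      Finset.prod_map_toList, prod_sub_div_eq_choose]
    push_cast; ring
  rw [h1, Finset.mul_sum, map_sum]
  refine (norm_sum_le _ _).trans ?_
  have h2 : ∀ i ∈ Finset.range k, ‖PowerSeries.coeff n
      (((A.map ι : ℂ[X]) : PowerSeries ℂ) ^ J * (PowerSeries.C (e i : ℂ) *
        PowerSeries.mk fun n : ℕ =>
        (((Finset.range i).toList.map fun l : ℕ => (l, ((l : ℂ) + 1))).map
          fun r : ℕ × ℂ => ((n : ℂ) - r.1) / r.2).prod * ι (a n)))‖ ≤ E * (Y * T) := by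
    intro i hi
    rw [Finset.mem_range] at hi
    rw [mul_left_comm, PowerSeries.coeff_C_mul, norm_mul, Complex.norm_intCast]
    refine mul_le_mul (he i) ?_ (norm_nonneg _) hE
    refine (hdec _ ?_).trans ?_
    · simp only [List.mem_map, Finset.mem_toList, Finset.mem_range]
      rintro _ ⟨l, hl, rfl⟩
      simp only
      omega
    · refine mul_le_mul_of_nonneg_left ?_ hY
      refine le_of_eq_of_le ?_ (hT i hi)
      rw [List.map_map, Function.comp_def, Finset.prod_map_toList, Finset.prod_div_distrib,
        Finset.prod_const, Finset.card_range]
      congr 1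
      rw [← Finset.prod_range_add_one_eq_factorial, Nat.cast_prod]
      refine Finset.prod_congr rfl fun l _ => ?_
      change ‖(l : ℂ) + 1‖ = ((l + 1 : ℕ) : ℝ)
      exact_mod_cast Complex.norm_natCast (l + 1)
  refine (Finset.sum_le_sum h2).trans ?_
  simp

lemma binPoly_norm_le {L : Type*} [Field L] [CharZero L] (σ : L →+* ℂ) (e : ℕ → ℤ)
    (k n H : ℕ) (E T : ℝ) (hE : 0 ≤ E) (hn : n ≤ H) (he : ∀ i, |(e i : ℝ)| ≤ E)
    (hT : ∀ i < k, (2 * (H : ℝ)) ^ i / (i.factorial : ℝ) ≤ T) :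
    ‖σ ((binPoly L e k).eval (n : L))‖ ≤ k * (E * T) := by
  rw [binPoly_eval, map_intCast, Int.cast_sum]
  refine (norm_sum_le _ _).trans ?_
  refine (Finset.sum_le_card_nsmul _ _ (E * T) fun i hi => ?_).trans (by simp)
  rw [Finset.mem_range] at hi
  push_cast
  rw [norm_mul, Complex.norm_intCast, Complex.norm_natCast]
  refine mul_le_mul (he i) ?_ (Nat.cast_nonneg _) hE
  refine (Nat.choose_le_pow_div (α := ℝ) i n).trans (le_trans ?_ (hT i hi))
  have : (n : ℝ) ≤ H := by exact_mod_cast hn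
  have h0 : (0 : ℝ) ≤ n := Nat.cast_nonneg _
  gcongr
  linarith

/-- The arithmetic hypothesis on a sequence in a number field: off a sparse set, all conjugates
grow subexponentially and, for infinitely many `n`, so does a common denominator. -/
def SubexpArith {L : Type*} [Field L] (a : ℕ → L) : Prop :=
  ∀ c : ℝ, 0 < c → ∃ S : Set ℕ, ZD S ∧
    (∀ n, n ∉ S → ∀ σ : L →+* ℂ, ‖σ (a n)‖ ≤ Real.exp (c * n)) ∧
    ∃ᶠ n : ℕ in Filter.atTop, ∃ d : ℕ, 0 < d ∧ (d : ℝ) ≤ Real.exp (c * n) ∧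
      ∀ i ≤ n, i ∉ S → IsIntegral ℤ ((d : L) * a i)

/-- The choice of `H` in the product formula argument: the final numerical inequality. -/
lemma numeric_final (g J H k : ℕ) (μ θ lam W M₁ B d₀ Pp T : ℝ) (q : ℝ) (hμ : 0 < μ)
    (hW : 1 ≤ W) (hM₁ : 0 < M₁) (hB : 0 ≤ B) (hlam0 : 0 ≤ lam) (hd₀ : 0 ≤ d₀)
    (hPp0 : 0 ≤ Pp) (hT0 : 0 ≤ T)
    (hg : 2 * ((6 * g + 6) * μ) ≤ θ) (hJ : θ * H - 2 ≤ 2 * J)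
    (hlam : lam * W ^ g ≤ Real.exp (-2))
    (hd : d₀ ≤ Real.exp (μ * H)) (hP : Pp ≤ M₁ * Real.exp (μ * H)) (hk : (k : ℝ) ≤ Real.exp (μ * H))
    (hT : T ≤ Real.exp (2 * μ * H))
    (hfin : 2 * (M₁ * B * Real.exp q * Real.exp 2) < θ * H) :
    d₀ ^ g * ((k * (Real.exp (μ * H) * ((Pp * (B * Real.exp (μ * H + q)) * lam ^ J) * T))) *
      (W ^ J * (k * (Real.exp (μ * H) * T) * Real.exp (μ * H))) ^ g) < 1 := by
  obtain ⟨x, hx⟩ : ∃ x, x = Real.exp (μ * H) := ⟨_, rfl⟩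
  have hx0 : 0 < x := hx ▸ Real.exp_pos _
  have h2x : Real.exp (2 * μ * H) = x ^ 2 := by rw [hx, ← Real.exp_nat_mul]; ring_nf
  rw [h2x] at hT
  rw [Real.exp_add, ← hx]
  rw [← hx] at hd hP hk
  have hlamJ : lam ^ J * (W ^ J) ^ g ≤ Real.exp (2 - θ * H) := by
    rw [← pow_mul, mul_comm J g, pow_mul, ← mul_pow]
    refine (pow_le_pow_left₀ (by positivity) hlam J).trans ?_
    rw [← Real.exp_nat_mul]
    apply Real.exp_le_exp.mpr
    linarith
  calc d₀ ^ g * ((k * (x * ((Pp * (B * (x * Real.exp q)) * lam ^ J) * T))) *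
        (W ^ J * (k * (x * T) * x)) ^ g)
      ≤ x ^ g * ((x * (x * (((M₁ * x) * (B * (x * Real.exp q)) * lam ^ J) * x ^ 2))) *
        (W ^ J * (x * (x * x ^ 2) * x)) ^ g) := by gcongr
    _ = x ^ (6 * g + 6) * (M₁ * B * Real.exp q) * (lam ^ J * (W ^ J) ^ g) := by
        have : (W ^ J * (x * (x * x ^ 2) * x)) ^ g = (W ^ J) ^ g * x ^ (5 * g) := by
          rw [mul_pow, pow_mul]; ring
        rw [this]
        ring
    _ ≤ x ^ (6 * g + 6) * (M₁ * B * Real.exp q) * Real.exp (2 - θ * H) := by gcongr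
    _ = (M₁ * B * Real.exp q * Real.exp 2) * Real.exp ((6 * g + 6) * (μ * H) - θ * H) := by
        rw [hx, ← Real.exp_nat_mul, Real.exp_sub, Real.exp_sub]
        push_cast
        ring
    _ ≤ (M₁ * B * Real.exp q * Real.exp 2) * Real.exp (- (θ / 2 * H)) := by
        gcongr
        nlinarith [mul_le_mul_of_nonneg_right hg (Nat.cast_nonneg (α := ℝ) H)]
    _ < 1 := by
        rw [Real.exp_neg, ← div_eq_mul_inv, div_lt_one (Real.exp_pos _)]
        have := Real.add_one_le_exp (θ / 2 * H)
        linarith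

set_option maxHeartbeats 1000000 in
/-- For suitable `H` and `J ≤ H / Z` there is a nonzero polynomial `c` of degree at most `H / Z`
such that the coefficients of `(A 0)^J ∑ c(n) a_n z^n` vanish on `[H/2, H]`: they have small
denominators and conjugates, and one conjugate is extremely small. -/
lemma main_vanishing {L : Type*} [Field L] [NumberField L] (ι : L →+* ℂ) (p : ℕ) (hp : 1 ≤ p)
    (A : Fin (p + 1) → L[X]) (a : ℕ → L)
    (hf : ∑ i : Fin (p + 1),
      (A i : PowerSeries L) * (psDeriv^[p - i.val] (PowerSeries.mk a)) = 0)
    (hintg : ∀ j, IsIntegral ℤ ((A 0).coeff j))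
    (hgrow : ∀ τ : ℝ, 0 < τ → ∃ B : ℝ, ∀ n : ℕ, ‖ι (a n)‖ ≤ B * Real.exp (τ * n))
    (hS : SubexpArith a) (Z N₀ : ℕ) :
    ∃ H J : ℕ, N₀ ≤ H ∧ Z * J ≤ H ∧ ∃ c : L[X], c ≠ 0 ∧ Z * c.natDegree ≤ H ∧
      ∀ n, H ≤ 2 * n → n ≤ H → PowerSeries.coeff n ((A 0 : PowerSeries L) ^ J *
        PowerSeries.mk fun n => c.eval (n : L) * a n) = 0 := by
  classical
  obtain ⟨C, hC1, D, hdec⟩ := decay p hp (fun i => (A i).map ι) (fun n => ι (a n))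
    (ode_map ι p A a hf)
  obtain ⟨g, hg⟩ : ∃ g, g = Module.finrank ℚ L := ⟨_, rfl⟩
  obtain ⟨W, hW⟩ : ∃ W : ℝ, W = 1 + ∑ σ : L →+* ℂ, lenOne ((A 0).map σ) := ⟨_, rfl⟩
  have hW1 : 1 ≤ W := by
    rw [hW]; linarith [Finset.sum_nonneg fun (σ : L →+* ℂ) (_ : σ ∈ Finset.univ) =>
      lenOne_nonneg ((A 0).map σ)]
  have hWσ : ∀ σ : L →+* ℂ, lenOne ((A 0).map σ) ≤ W := by
    intro σ
    have := Finset.single_le_sum (f := fun σ : L →+* ℂ => lenOne ((A 0).map σ))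
      (fun _ _ => lenOne_nonneg _) (Finset.mem_univ σ)
    rw [hW]; linarith
  -- `M'` is large enough for the decay ratio at `ι` to outweigh the growth `W` of the powers of `A 0`
  -- at all conjugates.
  obtain ⟨M', hM'⟩ := exists_nat_gt (2 * C * W ^ g / Real.exp (-2))
  obtain ⟨M, hM⟩ : ∃ M, M = M' + D + Z + 1 := ⟨_, rfl⟩
  have hMR : (2 * C * W ^ g / Real.exp (-2)) ≤ M := by
    refine hM'.le.trans ?_
    rw [hM]; push_cast; linarith [(Nat.cast_nonneg D : (0 : ℝ) ≤ D),
      (Nat.cast_nonneg Z : (0 : ℝ) ≤ Z)]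
  have hMpos : (0 : ℝ) < M := by rw [hM]; positivity
  have hlamM : 2 * C / M * W ^ g ≤ Real.exp (-2) := by
    rw [div_le_iff₀ (Real.exp_pos _)] at hMR
    rw [div_mul_eq_mul_div, div_le_iff₀ hMpos]; linarith
  -- The gain is about `exp (-θ H)`, as `2 * J` is about `θ * H`; it has to absorb `6 * g + 6`
  -- subexponential losses `exp (μ H)`, where `g` is the degree of `L`.
  obtain ⟨θ, hθ⟩ : ∃ θ : ℝ, θ = 1 / (2 * M) := ⟨_, rfl⟩
  have hθ0 : 0 < θ := by rw [hθ]; positivity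
  obtain ⟨μ, hμ⟩ : ∃ μ : ℝ, μ = θ / (2 * (6 * g + 6)) := ⟨_, rfl⟩
  have hμ0 : 0 < μ := by rw [hμ]; positivity
  have hμg : 2 * ((6 * g + 6) * μ) ≤ θ := by
    rw [hμ]; refine le_of_eq ?_; field_simp
  obtain ⟨ε₁, hε₁, hfac⟩ := pow_div_factorial_small μ hμ0
  obtain ⟨δ, hδ⟩ : ∃ δ : ℝ, δ = min ε₁ (1 / (Z + 1)) := ⟨_, rfl⟩
  have hδ0 : 0 < δ := by rw [hδ]; positivity
  have hδε : δ ≤ ε₁ := by rw [hδ]; exact min_le_left _ _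
  have hδZ : δ * (Z + 1) ≤ 1 := by
    rw [← le_div_iff₀ (by positivity), hδ]; exact min_le_right _ _
  have hδ1 : δ ≤ 1 := by nlinarith [(Nat.cast_nonneg Z : (0 : ℝ) ≤ Z)]
  obtain ⟨ε, hε, H₁, hsieg⟩ := siegel_binomial δ μ hδ0 hδ1 hμ0
  obtain ⟨S, hSZ, hSσ, hSd⟩ := hS μ hμ0
  obtain ⟨H₂, hH₂⟩ := hSZ ε hε
  obtain ⟨B, hB⟩ := hgrow μ hμ0
  have hB0 : 0 ≤ B := by
    have := (norm_nonneg _).trans (hB 0)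
    simpa using this
  obtain ⟨M₁, hM₁0, hM₁⟩ := add_pow_le_exp μ hμ0 p p
  obtain ⟨K, hK⟩ : ∃ K, K = M₁ * B * Real.exp (μ * p) * Real.exp 2 := ⟨_, rfl⟩
  obtain ⟨H, ⟨d, hd0, hdle, hdint⟩, hH⟩ := (hSd.and_eventually (eventually_ge_atTop
    (N₀ + H₁ + H₂ + ⌈4 / μ ^ 2⌉₊ + (⌈2 * K / θ⌉₊ + 1) + 8))).exists
  have hHμ : 4 / μ ^ 2 ≤ H := by
    refine (Nat.le_ceil _).trans ?_
    exact_mod_cast (by omega : ⌈4 / μ ^ 2⌉₊ ≤ H)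
  have hHK : 2 * K < θ * H := by
    have h1 : 2 * K / θ < H := by
      refine (Nat.le_ceil _).trans_lt ?_
      exact_mod_cast (by omega : ⌈2 * K / θ⌉₊ < H)
    rw [div_lt_iff₀ hθ0] at h1
    linarith
  have hH8 : 8 ≤ H := by omega
  have hHpos : (0 : ℝ) < H := by exact_mod_cast (by omega : 0 < H)
  have hHexp : (H : ℝ) ≤ Real.exp (μ * H) := by
    have h1 := Real.add_one_le_exp (μ * H / 2)
    have h2 : Real.exp (μ * H) = Real.exp (μ * H / 2) ^ 2 := by
      rw [← Real.exp_nat_mul]; push_cast; ring_nf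
    rw [div_le_iff₀ (by positivity)] at hHμ
    rw [h2]
    have h3 : (μ * H / 2) ^ 2 ≤ Real.exp (μ * H / 2) ^ 2 := by
      gcongr; linarith
    refine le_trans ?_ h3
    nlinarith
  -- the polynomial `c = binPoly L e k`, vanishing on the exceptional indices up to `H`
  obtain ⟨k, e, hkH, hne, heE, hvan⟩ := hsieg H (by omega)
    ((Finset.range (H + 1)).filter (· ∈ S))
    (fun s hs => by rw [Finset.mem_filter, Finset.mem_range] at hs; omega) (hH₂ H (by omega))
  have hkH' : (k : ℝ) ≤ H := by nlinarith
  have hkHn : k ≤ H := by exact_mod_cast hkH'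
  have hZk : Z * k ≤ H := by
    have : (Z * k : ℝ) ≤ H := by nlinarith [(Nat.cast_nonneg Z : (0 : ℝ) ≤ Z)]
    exact_mod_cast this
  have hMn : M' + D + Z + 1 = M := hM.symm
  obtain ⟨J, hJ⟩ : ∃ J, J = H / (4 * M) := ⟨_, rfl⟩
  have hMpos' : 0 < M := by omega
  have hJ4 : 4 * M * J ≤ H := by rw [hJ]; exact Nat.mul_div_le _ _
  have hJgt : H < 4 * M * (J + 1) := by
    rw [hJ]; exact Nat.lt_mul_div_succ _ (by omega)
  have hJ4R : 4 * (M : ℝ) * J ≤ H := by exact_mod_cast hJ4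
  have hJgtR : (H : ℝ) < 4 * M * (J + 1) := by exact_mod_cast hJgt
  refine ⟨H, J, by omega, ?_, binPoly L e k, binPoly_ne_zero L e k hne,
    (Nat.mul_le_mul_left _ (binPoly_natDegree L e k)).trans hZk, ?_⟩
  · refine le_trans ?_ hJ4
    exact Nat.mul_le_mul_right _ (by omega)
  intro n hn hnH
  have hTi : ∀ i < k, (2 * (H : ℝ)) ^ i / (i.factorial : ℝ) ≤ Real.exp (2 * μ * H) := by
    intro i hi
    refine (hfac (2 * H) (by positivity) i ?_).trans (le_of_eq (by ring_nf))
    have : (i : ℝ) ≤ k := by exact_mod_cast hi.le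
    nlinarith
  have hc0 : ∀ i ≤ H, i ∈ S → (binPoly L e k).eval (i : L) = 0 := by
    intro i hi hiS
    rw [binPoly_eval, hvan i (by rw [Finset.mem_filter, Finset.mem_range]; exact ⟨by omega, hiS⟩)]
    simp
  -- The decay estimate is applied from `n₀ = H / 4` on, which leaves the window `[H / 2, H]`.
  have hn₀ : (H : ℝ) / 8 ≤ ((H / 4 : ℕ) : ℝ) := by
    have : H ≤ 8 * (H / 4) := by omega
    have : (H : ℝ) ≤ 8 * ((H / 4 : ℕ) : ℝ) := by exact_mod_cast this
    linarith
  have hn₀pos : (0 : ℝ) < ((H / 4 : ℕ) : ℝ) := by linarith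
  have hDJ : H / 4 + D * J ≤ n := by
    have h1 : D * J ≤ M * J := Nat.mul_le_mul_right _ (by omega)
    have h2 : 4 * (M * J) ≤ H := by rw [← mul_assoc]; exact hJ4
    omega
  have hlam : C * J / ((H / 4 : ℕ) : ℝ) * W ^ g ≤ Real.exp (-2) := by
    refine le_trans ?_ hlamM
    gcongr ?_ * _
    rw [div_le_div_iff₀ hn₀pos hMpos]
    have : (M : ℝ) * J ≤ 2 * ((H / 4 : ℕ) : ℝ) := by linarith
    nlinarith
  refine eq_zero_of_small ι _ d hd0 ?_ _ (W ^ J * (k * (Real.exp (μ * H) *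
    Real.exp (2 * μ * H)) * Real.exp (μ * H))) ?_
    (bound_at_place ι p (A 0) a J H k n e (Real.exp (μ * H))
      (((H : ℝ) + p) ^ p * (B * Real.exp (μ * H + μ * p)) * (C * J / ((H / 4 : ℕ) : ℝ)) ^ J)
      (Real.exp (2 * μ * H)) (by positivity) (Real.exp_pos _).le ?_ hkHn heE hTi) ?_ ?_
  · refine isIntegral_coeff_pow_mul (A 0) hintg _ n (d : L) ?_ J n le_rfl
    intro i hi
    rw [PowerSeries.coeff_mk]
    by_cases hiS : i ∈ S
    · rw [hc0 i (by omega) hiS, zero_mul, mul_zero]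
      exact isIntegral_zero
    · rw [mul_left_comm, binPoly_eval]
      exact (isIntegral_algebraMap (R := ℤ) (A := L) (x := _)).mul (hdint i (by omega) hiS)
  · have hkpos : (1 : ℝ) ≤ k := by
      obtain ⟨i, hi, _⟩ := hne
      exact_mod_cast (by omega : 1 ≤ k)
    have h1 : (1 : ℝ) ≤ Real.exp (μ * H) := Real.one_le_exp (by positivity)
    have h2 : (1 : ℝ) ≤ Real.exp (2 * μ * H) := Real.one_le_exp (by positivity)
    exact one_le_mul_of_one_le_of_one_le (one_le_pow₀ hW1)
      (one_le_mul_of_one_le_of_one_le (one_le_mul_of_one_le_of_one_le hkpos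
        (one_le_mul_of_one_le_of_one_le h1 h2)) h1)
  · intro rs hrs
    exact hdec J (H / 4) H (by omega) (B * Real.exp (μ * H + μ * p)) (by positivity)
      (fun m _ hm => (hB m).trans (by
        have : (m : ℝ) ≤ H + p := by exact_mod_cast hm
        gcongr
        nlinarith)) rs hrs J le_rfl n hDJ hnH
  · intro σ
    rw [map_coeff_pow_mul]
    refine (norm_coeff_pow_mul_le ((A 0).map σ) _ n (k * (Real.exp (μ * H) *
      Real.exp (2 * μ * H)) * Real.exp (μ * H)) (by positivity) ?_ J n le_rfl).trans ?_
    · intro i hi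
      rw [PowerSeries.coeff_mk, map_mul, norm_mul]
      by_cases hiS : i ∈ S
      · rw [hc0 i (by omega) hiS, map_zero, norm_zero, zero_mul]
        positivity
      · refine mul_le_mul (binPoly_norm_le σ e k i H _ _ (Real.exp_pos _).le (by omega) heE hTi)
          ((hSσ i hiS σ).trans ?_) (norm_nonneg _) (by positivity)
        have : (i : ℝ) ≤ H := by exact_mod_cast (by omega : i ≤ H)
        gcongr
    · gcongr
      · exact lenOne_nonneg _
      · exact hWσ σ
  · rw [← hg]
    refine numeric_final g J H k μ θ (C * J / ((H / 4 : ℕ) : ℝ)) W M₁ B d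
      (((H : ℝ) + p) ^ p) (Real.exp (2 * μ * H)) (μ * p) hμ0 hW1 hM₁0 hB0 (by positivity)
      (by positivity) (by positivity) (by positivity) hμg ?_ hlam hdle (hM₁ H hHpos.le)
      (hkH'.trans hHexp) le_rfl (by rw [← hK]; exact hHK)
    rw [hθ, div_mul_eq_mul_div, one_mul, sub_le_iff_le_add, div_le_iff₀ (by positivity)]
    nlinarith

/-! ### Exponential polynomials -/

section
variable {L : Type*} [Field L]

/-- The exponential polynomial `n ↦ ∑_{τ ∈ T} p_τ(n) τ^n`. -/
noncomputable def expPoly (T : Finset L) (p : L → L[X]) (n : ℕ) : L :=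
  ∑ τ ∈ T, (p τ).eval (n : L) * τ ^ n

/-- The shift operator `(E y)(n) = y(n + 1)` on sequences. -/
def shiftEnd (L : Type*) [Field L] : Module.End L (ℕ → L) where
  toFun y := fun n => y (n + 1)
  map_add' _ _ := rfl
  map_smul' _ _ := rfl

lemma shiftEnd_pow_apply (j : ℕ) (y : ℕ → L) (n : ℕ) :
    ((shiftEnd L) ^ j) y n = y (n + j) := by
  induction j generalizing y with
  | zero => simp
  | succ j ih =>
    rw [pow_succ, Module.End.mul_apply, ih]
    rfl

lemma aeval_shift_apply (κ : L[X]) (y : ℕ → L) (n : ℕ) :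
    (aeval (shiftEnd L) κ) y n = ∑ j ∈ Finset.range (κ.natDegree + 1), κ.coeff j * y (n + j) := by
  rw [aeval_eq_sum_range, LinearMap.sum_apply, Finset.sum_apply]
  refine Finset.sum_congr rfl fun j _ => ?_
  rw [LinearMap.smul_apply, Pi.smul_apply, shiftEnd_pow_apply, smul_eq_mul]

/-- The polynomial part of `(E - τ)(q(n) σ^n) = (σ q(n+1) - τ q(n)) σ^n`. -/
noncomputable def stepPoly (σ τ : L) (q : L[X]) : L[X] :=
  Polynomial.C σ * taylor 1 q - Polynomial.C τ * q

lemma aeval_shift_expPoly (T : Finset L) (p : L → L[X]) (τ : L) :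
    (aeval (shiftEnd L) (Polynomial.X - Polynomial.C τ)) (expPoly T p) =
      expPoly T (fun σ => stepPoly σ τ (p σ)) := by
  funext n
  rw [map_sub, aeval_X, aeval_C, LinearMap.sub_apply, Pi.sub_apply]
  change expPoly T p (n + 1) - τ * expPoly T p n = _
  simp only [expPoly, stepPoly, Finset.mul_sum, ← Finset.sum_sub_distrib]
  refine Finset.sum_congr rfl fun σ _ => ?_
  rw [eval_sub, eval_mul, eval_mul, eval_C, eval_C, taylor_eval]
  push_cast
  ring

lemma natDegree_stepPoly_le (σ τ : L) (q : L[X]) :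
    (stepPoly σ τ q).natDegree ≤ q.natDegree := by
  unfold stepPoly
  refine (natDegree_sub_le _ _).trans (max_le ?_ (natDegree_C_mul_le _ _))
  exact (natDegree_C_mul_le _ _).trans (natDegree_taylor _ _).le

lemma stepPoly_ne_zero {σ τ : L} (h : σ ≠ τ) {q : L[X]} (hq : q ≠ 0) : stepPoly σ τ q ≠ 0 := by
  intro h0
  have h1 := congrArg (fun r => r.coeff q.natDegree) h0
  have h2 : (taylor 1 q).coeff q.natDegree = q.leadingCoeff := by
    rw [coeff_taylor_natDegree]
  simp only [stepPoly, coeff_sub, Polynomial.coeff_C_mul, Polynomial.coeff_zero] at h1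
  change σ * _ - τ * q.leadingCoeff = 0 at h1
  rw [h2, ← sub_mul] at h1
  exact (mul_ne_zero (sub_ne_zero.2 h) (leadingCoeff_ne_zero.2 hq)) h1

lemma degree_stepPoly_lt (τ : L) {q : L[X]} (hq : q ≠ 0) :
    (stepPoly τ τ q).degree < q.degree := by
  rw [degree_eq_natDegree hq]
  refine (degree_lt_iff_coeff_zero _ _).2 fun m hm => ?_
  rw [stepPoly, coeff_sub, Polynomial.coeff_C_mul, Polynomial.coeff_C_mul]
  rcases hm.eq_or_lt with rfl | hm
  · rw [coeff_taylor_natDegree, leadingCoeff, sub_self]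
  · rw [coeff_eq_zero_of_natDegree_lt hm,
      coeff_eq_zero_of_natDegree_lt ((natDegree_taylor q 1).le.trans_lt hm), sub_self]

lemma stepPoly_iterate_eq_zero (τ : L) (m : ℕ) (q : L[X]) (hq : q.degree < m) :
    (stepPoly τ τ)^[m] q = 0 := by
  induction m generalizing q with
  | zero =>
    simpa using hq
  | succ m ih =>
    rw [Function.iterate_succ_apply]
    apply ih
    by_cases h0 : q = 0
    · rw [h0]; simp [stepPoly]
    · have h1 := degree_stepPoly_lt τ h0
      by_cases h2 : stepPoly τ τ q = 0
      · rw [h2, degree_zero]; exact WithBot.bot_lt_coe _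
      · rw [degree_eq_natDegree h0] at hq h1
        rw [degree_eq_natDegree h2] at h1 ⊢
        have h3 : (stepPoly τ τ q).natDegree < q.natDegree := by exact_mod_cast h1
        have h4 : q.natDegree < m + 1 := by exact_mod_cast hq
        exact_mod_cast (by omega : (stepPoly τ τ q).natDegree < m)

lemma stepPoly_iterate_natDegree_le (σ τ : L) (m : ℕ) (q : L[X]) :
    ((stepPoly σ τ)^[m] q).natDegree ≤ q.natDegree := by
  induction m with
  | zero => rfl
  | succ m ih =>
    rw [Function.iterate_succ_apply']
    exact (natDegree_stepPoly_le _ _ _).trans ih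

lemma stepPoly_iterate_ne_zero {σ τ : L} (h : σ ≠ τ) (m : ℕ) {q : L[X]} (hq : q ≠ 0) :
    (stepPoly σ τ)^[m] q ≠ 0 := by
  induction m with
  | zero => exact hq
  | succ m ih =>
    rw [Function.iterate_succ_apply']
    exact stepPoly_ne_zero h ih

lemma aeval_shift_pow_expPoly (T : Finset L) (p : L → L[X]) (τ : L) (m : ℕ) :
    (aeval (shiftEnd L) ((Polynomial.X - Polynomial.C τ) ^ m)) (expPoly T p) =
      expPoly T (fun σ => (stepPoly σ τ)^[m] (p σ)) := by
  induction m with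
  | zero => simp
  | succ m ih =>
    rw [pow_succ', map_mul, Module.End.mul_apply, ih, aeval_shift_expPoly]
    simp only [Function.iterate_succ_apply']

/-- Applying `∏_{τ ∈ U} (E - τ)^{Q+1}` kills the components with bases in `U` and neither kills
the other components nor raises their degree. -/
lemma aeval_shift_prod_expPoly (T : Finset L) (Q : ℕ) (U : Finset L) (p : L → L[X])
    (hp : ∀ τ ∈ T, (p τ).natDegree ≤ Q) :
    ∃ q : L → L[X], (aeval (shiftEnd L) (∏ τ ∈ U, (Polynomial.X - Polynomial.C τ) ^ (Q + 1)))
        (expPoly T p) = expPoly T q ∧ (∀ τ ∈ T, (q τ).natDegree ≤ Q) ∧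
      (∀ τ ∈ T, τ ∈ U → q τ = 0) ∧ (∀ τ ∈ T, τ ∉ U → q τ = 0 → p τ = 0) := by
  classical
  induction U using Finset.induction_on with
  | empty => exact ⟨p, by simp, hp, by simp, fun _ _ _ h => h⟩
  | insert u U hu ih =>
    obtain ⟨q, hq1, hq2, hq3, hq4⟩ := ih
    refine ⟨fun σ => (stepPoly σ u)^[Q + 1] (q σ), ?_, ?_, ?_, ?_⟩
    · rw [Finset.prod_insert hu, map_mul, Module.End.mul_apply, hq1, aeval_shift_pow_expPoly]
    · exact fun τ hτ => (stepPoly_iterate_natDegree_le _ _ _ _).trans (hq2 τ hτ)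
    · intro τ hτ hτU
      rcases Finset.mem_insert.1 hτU with rfl | h
      · apply stepPoly_iterate_eq_zero
        refine degree_le_natDegree.trans_lt ?_
        exact_mod_cast Nat.lt_succ_of_le (hq2 τ hτ)
      · change (stepPoly τ u)^[Q + 1] (q τ) = 0
        rw [hq3 τ hτ h]
        exact Function.iterate_fixed (by simp [stepPoly]) _
    · intro τ hτ hτU h0
      rw [Finset.mem_insert, not_or] at hτU
      refine hq4 τ hτ hτU.2 ?_
      by_contra h
      exact stepPoly_iterate_ne_zero hτU.1 _ h h0

/-- Isolation of the component of base `τ₁` by a fixed constant-coefficient operator. -/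
lemma expPoly_isolate (T : Finset L) (Q : ℕ) (τ₁ : L) (hτ₁ : τ₁ ∈ T) :
    ∃ κ : L[X], κ.natDegree ≤ T.card * (Q + 1) ∧ ∀ p : L → L[X],
      (∀ τ ∈ T, (p τ).natDegree ≤ Q) → ∃ q : L[X], q.natDegree ≤ Q ∧ (q = 0 → p τ₁ = 0) ∧
        ∀ n, ∑ j ∈ Finset.range (κ.natDegree + 1), κ.coeff j * expPoly T p (n + j) =
          q.eval (n : L) * τ₁ ^ n := by
  classical
  refine ⟨∏ τ ∈ T.erase τ₁, (Polynomial.X - Polynomial.C τ) ^ (Q + 1), ?_, fun p hp => ?_⟩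
  · refine (natDegree_prod_le _ _).trans ?_
    refine (Finset.sum_le_card_nsmul _ _ (Q + 1) fun τ _ => ?_).trans ?_
    · rw [natDegree_pow, natDegree_X_sub_C, mul_one]
    · rw [smul_eq_mul]
      exact Nat.mul_le_mul_right _ (Finset.card_le_card (Finset.erase_subset _ _))
  · obtain ⟨q, hq1, hq2, hq3, hq4⟩ := aeval_shift_prod_expPoly T Q (T.erase τ₁) p hp
    refine ⟨q τ₁, hq2 _ hτ₁, hq4 _ hτ₁ (by simp), fun n => ?_⟩
    rw [← aeval_shift_apply, hq1, expPoly]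
    refine Finset.sum_eq_single_of_mem _ hτ₁ fun τ hτ hne => ?_
    rw [hq3 τ hτ (Finset.mem_erase.2 ⟨hne, hτ⟩), eval_zero, zero_mul]

/-- A polynomial vanishing at `deg + 1` consecutive integers is zero. -/
lemma poly_eq_zero_of_window [CharZero L] (q : L[X]) (m Q : ℕ) (hq : q.natDegree ≤ Q)
    (h : ∀ n, m ≤ n → n ≤ m + Q → q.eval (n : L) = 0) : q = 0 := by
  refine eq_zero_of_natDegree_lt_card_of_eval_eq_zero q
    (f := fun i : Fin (Q + 1) => ((m + i.val : ℕ) : L)) ?_ ?_ ?_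
  · intro i j hij
    have := Nat.cast_injective (R := L) hij
    ext; omega
  · intro i; exact h _ (by omega) (by omega)
  · rw [Fintype.card_fin]; omega

/-- An exponential polynomial vanishing on a long enough window vanishes componentwise. -/
lemma expPoly_independent [CharZero L] (T : Finset L) (hT : ∀ τ ∈ T, τ ≠ 0) (Q : ℕ)
    (p : L → L[X]) (hp : ∀ τ ∈ T, (p τ).natDegree ≤ Q) (m : ℕ)
    (h : ∀ n, m ≤ n → n ≤ m + (T.card * (Q + 1) + Q) → expPoly T p n = 0) :
    ∀ τ ∈ T, p τ = 0 := by
  intro τ hτ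
  obtain ⟨κ, hκ, hiso⟩ := expPoly_isolate T Q τ hτ
  obtain ⟨q, hq, hq0, hqn⟩ := hiso p hp
  refine hq0 (poly_eq_zero_of_window q m Q hq fun n h1 h2 => ?_)
  have h3 := hqn n
  rw [Finset.sum_eq_zero] at h3
  · exact (mul_eq_zero.1 h3.symm).resolve_right (pow_ne_zero _ (hT τ hτ))
  · intro j hj
    rw [Finset.mem_range] at hj
    rw [h (n + j) (by omega) (by omega), mul_zero]

/-- Solvability of `α v(x-1) - ρ v(x) = w` in polynomials, with control on the degree. -/
lemma exists_step_solution [CharZero L] (α ρ : L) (hα : α ≠ 0) (N : ℕ) (w : L[X])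
    (hw : ∀ k, N ≤ k → w.coeff k = 0) :
    ∃ v : L[X], (∀ k, N + 1 ≤ k → v.coeff k = 0) ∧
      Polynomial.C α * taylor (-1) v - Polynomial.C ρ * v = w := by
  induction N generalizing w with
  | zero =>
    refine ⟨0, by simp, ?_⟩
    have : w = 0 := Polynomial.ext fun k => by rw [hw k (Nat.zero_le _), Polynomial.coeff_zero]
    rw [this]; simp
  | succ N ih =>
    obtain ⟨v₀, hv₀, hc⟩ : ∃ v₀ : L[X], (∀ k, N + 2 ≤ k → v₀.coeff k = 0) ∧
        ∀ k, N ≤ k → (w - (Polynomial.C α * taylor (-1) v₀ - Polynomial.C ρ * v₀)).coeff k = 0 := by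
      have key : ∀ M k : ℕ, ((taylor (-1 : L)) ((Polynomial.X : L[X]) ^ M)).coeff k =
          (-1) ^ (M - k) * (M.choose k : L) := by
        intro M k
        rw [taylor_pow, taylor_X, coeff_X_add_C_pow]
      by_cases hαρ : α = ρ
      · refine ⟨Polynomial.C (-(w.coeff N) / (α * (N + 1))) * Polynomial.X ^ (N + 1), ?_, ?_⟩
        · intro k hk
          rw [Polynomial.coeff_C_mul, Polynomial.coeff_X_pow, if_neg (by omega), mul_zero]
        · intro k hk
          subst hαρ
          rw [taylor_mul, taylor_C]
          simp only [coeff_sub, Polynomial.coeff_C_mul, key, Polynomial.coeff_X_pow]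
          rcases Nat.lt_or_ge k (N + 2) with h | h
          · obtain rfl | rfl : k = N ∨ k = N + 1 := by omega
            · rw [if_neg (by omega), show k + 1 - k = 1 by omega,
                Nat.choose_succ_self_right]
              have : (k : L) + 1 ≠ 0 := by exact_mod_cast Nat.succ_ne_zero k
              push_cast
              field_simp
              ring
            · rw [hw _ le_rfl]; simp
          · rw [hw k (by omega), if_neg (by omega), Nat.choose_eq_zero_of_lt (by omega)]
            simp
      · refine ⟨Polynomial.C ((w.coeff N) / (α - ρ)) * Polynomial.X ^ N, ?_, ?_⟩
        · intro k hk
          rw [Polynomial.coeff_C_mul, Polynomial.coeff_X_pow, if_neg (by omega), mul_zero]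
        · intro k hk
          rw [taylor_mul, taylor_C]
          simp only [coeff_sub, Polynomial.coeff_C_mul, key, Polynomial.coeff_X_pow]
          have := sub_ne_zero.2 hαρ
          rcases hk.eq_or_lt with rfl | h
          · simp
            field_simp
            ring
          · rw [hw k (by omega), if_neg (by omega), Nat.choose_eq_zero_of_lt (by omega)]
            simp
    obtain ⟨v₁, h1, h2⟩ := ih _ hc
    refine ⟨v₀ + v₁, fun k hk => ?_, ?_⟩
    · rw [Polynomial.coeff_add, hv₀ k hk, h1 k (by omega), add_zero]
    · rw [map_add, eq_sub_iff_add_eq] at *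
      rw [← h2]; ring
end

section
variable {L : Type*} [Field L]

lemma exists_step_solution_natDegree [CharZero L] (α ρ : L) (hα : α ≠ 0) (N : ℕ) (w : L[X])
    (hw : w.natDegree ≤ N) :
    ∃ v : L[X], v.natDegree ≤ N + 1 ∧
      Polynomial.C α * taylor (-1) v - Polynomial.C ρ * v = w := by
  obtain ⟨v, h1, h2⟩ := exists_step_solution α ρ hα (N + 1) w fun k hk =>
    coeff_eq_zero_of_natDegree_lt (by omega)
  exact ⟨v, natDegree_le_iff_coeff_eq_zero.2 fun k hk => h1 k (by omega), h2⟩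

lemma coeff_X_sub_C_mul_mk (ρ : L) (y : ℕ → L) (n : ℕ) :
    PowerSeries.coeff (n + 1) (((Polynomial.X - Polynomial.C ρ : L[X]) : PowerSeries L) *
      PowerSeries.mk y) = y n - ρ * y (n + 1) := by
  rw [Polynomial.coe_sub, Polynomial.coe_X, Polynomial.coe_C, sub_mul, map_sub,
    PowerSeries.coeff_succ_X_mul, PowerSeries.coeff_C_mul, PowerSeries.coeff_mk,
    PowerSeries.coeff_mk]

lemma expPoly_add_single [DecidableEq L] (T : Finset L) (v : L → L[X]) (τ₁ : L) (hτ₁ : τ₁ ∈ T)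
    (c : L) (n : ℕ) :
    expPoly T (fun τ => v τ + if τ = τ₁ then Polynomial.C c else 0) n =
      expPoly T v n + c * τ₁ ^ n := by
  simp only [expPoly, eval_add, add_mul, Finset.sum_add_distrib]
  congr 1
  rw [Finset.sum_eq_single_of_mem _ hτ₁]
  · simp
  · intro b _ hb; simp [hb]

/-- If `∏ (X - ρ) · ∑ yₙ Xⁿ` has vanishing coefficients on a window, then `y` is an exponential
polynomial there, with bases the inverses of the nonzero `ρ`. -/
lemma expPoly_of_window [CharZero L] (T : Finset L) (hT0 : ∀ τ ∈ T, τ ≠ 0) (R : Multiset L)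
    (hR : ∀ ρ ∈ R, ρ ≠ 0 → ρ⁻¹ ∈ T) (y : ℕ → L) (l h : ℕ)
    (hy : ∀ n, l ≤ n → n ≤ h → PowerSeries.coeff n
      ((((R.map fun ρ => Polynomial.X - Polynomial.C ρ).prod : L[X]) : PowerSeries L) *
        PowerSeries.mk y) = 0) :
    ∃ p : L → L[X], (∀ τ ∈ T, (p τ).natDegree ≤ R.card) ∧
      ∀ n, l ≤ n → n + R.card ≤ h → y n = expPoly T p n := by
  classical
  induction R using Multiset.induction_on generalizing y with
  | empty =>
    refine ⟨fun _ => 0, by simp, fun n h1 h2 => ?_⟩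
    have := hy n h1 (by simpa using h2)
    simpa [expPoly] using this
  | cons ρ R ih =>
    obtain ⟨y', hy'⟩ : ∃ y' : ℕ → L, ((Polynomial.X - Polynomial.C ρ : L[X]) : PowerSeries L) *
        PowerSeries.mk y = PowerSeries.mk y' :=
      ⟨fun n => PowerSeries.coeff n _, by ext n; rw [PowerSeries.coeff_mk]⟩
    have hstep : ∀ n, y' (n + 1) = y n - ρ * y (n + 1) := fun n => by
      rw [← coeff_X_sub_C_mul_mk, hy', PowerSeries.coeff_mk]
    obtain ⟨w, hw1, hw2⟩ := ih (fun σ hσ => hR σ (Multiset.mem_cons_of_mem hσ)) y' (by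
      intro n h1 h2
      rw [← hy n h1 h2, Multiset.map_cons, Multiset.prod_cons, mul_comm (_ - _),
        Polynomial.coe_mul, mul_assoc, hy'])
    rw [Multiset.card_cons]
    by_cases hρ : ρ = 0
    · refine ⟨fun τ => Polynomial.C τ * taylor 1 (w τ), fun τ hτ => ?_, fun n h1 h2 => ?_⟩
      · refine (natDegree_C_mul_le _ _).trans ((natDegree_taylor _ _).le.trans ?_)
        exact (hw1 τ hτ).trans (Nat.le_succ _)
      · have h3 := hstep n
        rw [hρ, zero_mul, sub_zero, hw2 (n + 1) (by omega) (by omega)] at h3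
        rw [← h3, expPoly, expPoly]
        refine Finset.sum_congr rfl fun τ _ => ?_
        rw [eval_mul, eval_C, taylor_eval]
        push_cast
        ring
    · have hτ₁ := hR ρ (Multiset.mem_cons_self _ _) hρ
      have hv : ∀ τ : L, ∃ v : L[X], τ ∈ T → v.natDegree ≤ R.card + 1 ∧
          Polynomial.C τ⁻¹ * taylor (-1) v - Polynomial.C ρ * v = w τ := by
        intro τ
        by_cases hτ : τ ∈ T
        · obtain ⟨v, h1, h2⟩ := exists_step_solution_natDegree τ⁻¹ ρ (inv_ne_zero (hT0 τ hτ))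
            R.card (w τ) (hw1 τ hτ)
          exact ⟨v, fun _ => ⟨h1, h2⟩⟩
        · exact ⟨0, fun h => absurd h hτ⟩
      choose v hv using hv
      have hvstep : ∀ n, expPoly T w (n + 1) = expPoly T v n - ρ * expPoly T v (n + 1) := by
        intro n
        simp only [expPoly, Finset.mul_sum, ← Finset.sum_sub_distrib]
        refine Finset.sum_congr rfl fun τ hτ => ?_
        rw [← (hv τ hτ).2, eval_sub, eval_mul, eval_mul, eval_C, eval_C, taylor_eval]
        have := hT0 τ hτ
        push_cast
        rw [add_neg_cancel_right]
        field_simp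
        ring
      refine ⟨fun τ => v τ + if τ = ρ⁻¹ then
        Polynomial.C ((y l - expPoly T v l) * ρ ^ l) else 0, fun τ hτ => ?_, fun n h1 h2 => ?_⟩
      · refine (natDegree_add_le _ _).trans (max_le (hv τ hτ).1 ?_)
        split_ifs
        · exact (natDegree_C _).le.trans (Nat.zero_le _)
        · simp
      · rw [expPoly_add_single T v _ hτ₁]
        induction n, h1 using Nat.le_induction with
        | base =>
          rw [mul_assoc, ← mul_pow, mul_inv_cancel₀ hρ, one_pow, mul_one]
          ring
        | succ n hn ihn =>
          have h3 := hstep n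
          rw [hw2 (n + 1) (by omega) (by omega), hvstep, ihn (by omega)] at h3
          apply mul_left_cancel₀ hρ
          have h4 : ρ * ρ⁻¹ ^ (n + 1) = ρ⁻¹ ^ n := by
            rw [pow_succ', ← mul_assoc, mul_inv_cancel₀ hρ, one_mul]
          linear_combination h3 - (y l - expPoly T v l) * ρ ^ l * h4
end

/-! ### Recurrences and propagation from a window -/

section
variable {L : Type*} [Field L]

lemma coeff_mul_window (A : L[X]) (D : ℕ) (hA : A.natDegree ≤ D) (g : PowerSeries L) (m : ℕ) :
    PowerSeries.coeff (m + D) ((A : PowerSeries L) * g) =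
      ∑ t ∈ Finset.range (D + 1), A.coeff (D - t) * PowerSeries.coeff (m + t) g := by
  have h1 : ∑ t ∈ Finset.range (D + 1), A.coeff (D - t) * PowerSeries.coeff (m + t) g =
      ∑ u ∈ Finset.range (D + 1), A.coeff u * PowerSeries.coeff (m + D - u) g := by
    rw [← Finset.sum_range_reflect]
    refine Finset.sum_congr rfl fun t ht => ?_
    rw [Finset.mem_range] at ht
    rw [show D - (D + 1 - 1 - t) = t by omega, show m + (D + 1 - 1 - t) = m + D - t by omega]
  rw [h1, PowerSeries.coeff_mul, Finset.Nat.sum_antidiagonal_eq_sum_range_succ_mk]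
  symm
  simp only [Polynomial.coeff_coe]
  refine Finset.sum_subset (Finset.range_subset_range.2 (by omega)) fun u _ hu => ?_
  rw [Finset.mem_range, not_lt] at hu
  rw [coeff_eq_zero_of_natDegree_lt (by omega), zero_mul]

/-- Comparison of the coefficients of `z^(m + D)`, where `D` bounds the degrees. The recurrence is
nontrivial: the polynomial at shift `D - deg (A 0) + p` receives a term of degree `p` from the
leading coefficient of `A 0` and from nothing else. -/
lemma recurrence_of_ode_aux (p : ℕ) (A : Fin (p + 1) → L[X]) (a : ℕ → L) (hA0 : A 0 ≠ 0)
    (hf : ∑ i : Fin (p + 1), (A i : PowerSeries L) *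
      (psDeriv^[p - i.val] (PowerSeries.mk a)) = 0) :
    ∃ (K : ℕ) (P : ℕ → L[X]), (∃ j ≤ K, P j ≠ 0) ∧
      ∀ m : ℕ, ∑ j ∈ Finset.range (K + 1), (P j).eval (m : L) * a (m + j) = 0 := by
  obtain ⟨D, hD⟩ : ∃ D, ∀ i, (A i).natDegree ≤ D :=
    ⟨Finset.univ.sup fun i => (A i).natDegree,
      fun i => Finset.le_sup (f := fun i => (A i).natDegree) (Finset.mem_univ i)⟩
  obtain ⟨P, hP⟩ : ∃ P : ℕ → L[X], P = fun j => ∑ i : Fin (p + 1), ∑ t ∈ Finset.range (D + 1),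
      if j = t + (p - i.val) then Polynomial.C ((A i).coeff (D - t)) *
        taylor ((t : L) + 1) (ascPochhammer L (p - i.val)) else 0 := ⟨_, rfl⟩
  refine ⟨D + p, P, ⟨D - (A 0).natDegree + p, by omega, fun h0 => ?_⟩, fun m => ?_⟩
  · have h1 := congrArg (fun r => r.coeff p) h0
    rw [hP] at h1
    simp only [finsetSum_coeff, Polynomial.coeff_zero] at h1
    rw [Finset.sum_eq_single_of_mem 0 (Finset.mem_univ _),
      Finset.sum_eq_single_of_mem (D - (A 0).natDegree) (by simp)] at h1
    · simp only [Fin.val_zero, Nat.sub_zero, if_true] at h1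
      have h2 : ((taylor (((D - (A 0).natDegree : ℕ) : L) + 1)) (ascPochhammer L p)).coeff p = 1 := by
        have := coeff_taylor_natDegree (f := ascPochhammer L p)
          (r := ((D - (A 0).natDegree : ℕ) : L) + 1)
        rwa [ascPochhammer_natDegree, (monic_ascPochhammer L p).leadingCoeff] at this
      rw [Polynomial.coeff_C_mul, h2, mul_one, Nat.sub_sub_self (hD 0)] at h1
      exact hA0 (leadingCoeff_eq_zero.1 h1)
    · intro t _ ht
      rw [if_neg, Polynomial.coeff_zero]
      simp only [Fin.val_zero]
      omega
    · intro i _ hi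
      refine Finset.sum_eq_zero fun t _ => ?_
      split_ifs
      · rw [Polynomial.coeff_C_mul]
        refine mul_eq_zero_of_right _ (coeff_eq_zero_of_natDegree_lt ?_)
        rw [natDegree_taylor, ascPochhammer_natDegree]
        have : i.val ≠ 0 := fun h => hi (Fin.ext h)
        omega
      · rw [Polynomial.coeff_zero]
  · have h1 := congrArg (PowerSeries.coeff (m + D)) hf
    rw [map_sum, map_zero] at h1
    rw [← h1]
    simp only [hP, Polynomial.eval_finsetSum, Finset.sum_mul]
    rw [Finset.sum_comm]
    refine Finset.sum_congr rfl fun i _ => ?_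
    rw [Finset.sum_comm, coeff_mul_window _ D (hD i)]
    refine Finset.sum_congr rfl fun t ht => ?_
    rw [Finset.mem_range] at ht
    rw [Finset.sum_eq_single_of_mem (t + (p - i.val)) (by simp; omega)]
    · rw [if_pos rfl, eval_mul, eval_C, taylor_eval, mul_assoc,
        coeff_psDeriv_iterate, PowerSeries.coeff_mk, Nat.cast_ascFactorial]
      push_cast
      rw [add_assoc, add_assoc]
    · intro j _ hj
      rw [if_neg hj, eval_zero, zero_mul]

/-- A D-finite sequence satisfies a polynomial recurrence whose extreme coefficients do not
vanish at large integers. -/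
lemma recurrence_of_ode [CharZero L] (p : ℕ) (A : Fin (p + 1) → L[X]) (a : ℕ → L) (hA0 : A 0 ≠ 0)
    (hf : ∑ i : Fin (p + 1), (A i : PowerSeries L) *
      (psDeriv^[p - i.val] (PowerSeries.mk a)) = 0) :
    ∃ (k : ℕ) (P : ℕ → L[X]) (n₁ : ℕ), ∀ n : ℕ, n₁ ≤ n →
      ∑ j ∈ Finset.range (k + 1), (P j).eval (n : L) * a (n + j) = 0 ∧
      (P 0).eval (n : L) ≠ 0 ∧ (P k).eval (n : L) ≠ 0 := by
  classical
  obtain ⟨K, P, hex, hrec⟩ := recurrence_of_ode_aux p A a hA0 hf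
  obtain ⟨F, hF⟩ : ∃ F : Finset ℕ, F = (Finset.range (K + 1)).filter fun j => P j ≠ 0 := ⟨_, rfl⟩
  have hmem : ∀ j, j ∈ F ↔ j ≤ K ∧ P j ≠ 0 := fun j => by
    rw [hF, Finset.mem_filter, Finset.mem_range, Nat.lt_succ_iff]
  have hne : F.Nonempty := hex.imp fun j hj => (hmem j).2 hj
  obtain ⟨j₀, h0⟩ : ∃ j, j = F.min' hne := ⟨_, rfl⟩
  obtain ⟨j₁, h1⟩ : ∃ j, j = F.max' hne := ⟨_, rfl⟩
  have hj₀ : j₀ ∈ F := h0 ▸ F.min'_mem hne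
  have hj₁ : j₁ ∈ F := h1 ▸ F.max'_mem hne
  have h01 : j₀ ≤ j₁ := h1 ▸ F.le_max' _ hj₀
  have hroots : ∀ q : L[X], q ≠ 0 → ∀ᶠ n : ℕ in atTop, q.eval (n : L) ≠ 0 := by
    intro q hq
    have hfin : {n : ℕ | q.eval (n : L) = 0}.Finite :=
      ((Polynomial.finite_setOfPred_isRoot hq).preimage (Nat.cast_injective.injOn)).subset
        fun n hn => hn
    rw [← Nat.cofinite_eq_atTop]
    exact hfin.eventually_cofinite_notMem
  have hshift : ∀ j, P j ≠ 0 → taylor (-(j₀ : L)) (P j) ≠ 0 := fun j hj h => hj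
    ((taylor_eq_zero _ _).1 h)
  obtain ⟨n₁, hn₁⟩ := eventually_atTop.1
    (((hroots _ (hshift _ ((hmem _).1 hj₀).2)).and (hroots _ (hshift _ ((hmem _).1 hj₁).2))).and
      (eventually_ge_atTop j₀))
  refine ⟨j₁ - j₀, fun j => taylor (-(j₀ : L)) (P (j₀ + j)), n₁, fun n hn => ⟨?_, ?_, ?_⟩⟩
  · have hge := (hn₁ n hn).2
    have h2 := hrec (n - j₀)
    rw [← Finset.sum_subset (s₁ := Finset.Ico j₀ (j₁ + 1)), Finset.sum_Ico_eq_sum_range,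
      show j₁ + 1 - j₀ = j₁ - j₀ + 1 by omega] at h2
    · rw [← h2]
      refine Finset.sum_congr rfl fun j _ => ?_
      rw [taylor_eval, Nat.cast_sub hge, ← sub_eq_add_neg,
        show n - j₀ + (j₀ + j) = n + j by omega]
    · intro j hj
      rw [Finset.mem_Ico] at hj
      have := ((hmem _).1 hj₁).1
      rw [Finset.mem_range]; omega
    · intro j hj hj'
      rw [Finset.mem_range] at hj
      have : j ∉ F := fun hjF => hj' (Finset.mem_Ico.2
        ⟨h0 ▸ F.min'_le _ hjF, Nat.lt_succ_of_le (h1 ▸ F.le_max' _ hjF)⟩)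
      rw [hmem, not_and, not_not] at this
      rw [this (by omega), eval_zero, zero_mul]
  · exact (hn₁ n hn).1.1
  · have := (hn₁ n hn).1.2
    rwa [← Nat.add_sub_cancel' h01] at this
end

section
variable {L : Type*} [Field L]

/-- The polynomial part of base `τ` of `(∑_j P_j(n) ã(n+j)) ∏_l c(n+l)`, where
`ã = (∑_τ p_τ(n) τ^n) / c(n)`. -/
noncomputable def clearPoly (k : ℕ) (P : ℕ → L[X]) (c : L[X]) (p : L → L[X]) (τ : L) : L[X] :=
  ∑ j ∈ Finset.range (k + 1), P j * taylor (j : L) (p τ) * Polynomial.C (τ ^ j) *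
    ∏ l ∈ (Finset.range (k + 1)).erase j, taylor (l : L) c

lemma expPoly_clearPoly (T : Finset L) (k : ℕ) (P : ℕ → L[X]) (c : L[X]) (p : L → L[X]) (n : ℕ) :
    expPoly T (clearPoly k P c p) n = ∑ j ∈ Finset.range (k + 1),
      (P j).eval (n : L) * expPoly T p (n + j) *
        ∏ l ∈ (Finset.range (k + 1)).erase j, c.eval ((n + l : ℕ) : L) := by
  simp only [expPoly, clearPoly, Polynomial.eval_finsetSum, Finset.sum_mul, Finset.mul_sum]
  rw [Finset.sum_comm]
  refine Finset.sum_congr rfl fun j _ => Finset.sum_congr rfl fun τ _ => ?_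
  simp only [eval_mul, taylor_eval, eval_C, Polynomial.eval_prod]
  push_cast
  ring

lemma expPoly_clearPoly_of_eq (T : Finset L) (k : ℕ) (P : ℕ → L[X]) (c : L[X]) (p : L → L[X])
    (n : ℕ) (a : ℕ → L)
    (h : ∀ j ≤ k, c.eval ((n + j : ℕ) : L) * a (n + j) = expPoly T p (n + j)) :
    expPoly T (clearPoly k P c p) n = (∑ j ∈ Finset.range (k + 1),
      (P j).eval (n : L) * a (n + j)) *
        ∏ l ∈ Finset.range (k + 1), c.eval ((n + l : ℕ) : L) := by
  rw [expPoly_clearPoly, Finset.sum_mul]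
  refine Finset.sum_congr rfl fun j hj => ?_
  rw [← Finset.mul_prod_erase _ _ hj, ← h j (by simpa [Nat.lt_succ_iff] using hj)]
  ring

lemma natDegree_clearPoly_le (k : ℕ) (P : ℕ → L[X]) (c : L[X]) (p : L → L[X]) (τ : L)
    (M Q C : ℕ) (hP : ∀ j ≤ k, (P j).natDegree ≤ M) (hp : (p τ).natDegree ≤ Q)
    (hc : c.natDegree ≤ C) : (clearPoly k P c p τ).natDegree ≤ M + Q + k * C := by
  refine natDegree_sum_le_of_forall_le _ _ fun j hj => ?_
  have hj' : j ≤ k := by simpa [Nat.lt_succ_iff] using hj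
  refine natDegree_mul_le_of_le ((natDegree_mul_le_of_le (natDegree_mul_le_of_le (hP j hj')
    ((natDegree_taylor _ _).le.trans hp)) (natDegree_C _).le).trans (by omega)) ?_
  refine (natDegree_prod_le _ _).trans ((Finset.sum_le_card_nsmul _ _ C fun l _ => ?_).trans ?_)
  · exact (natDegree_taylor _ _).le.trans hc
  · rw [Finset.card_erase_of_mem hj, Finset.card_range, smul_eq_mul, Nat.add_sub_cancel]

lemma clearPoly_mul (k : ℕ) (P : ℕ → L[X]) (e c : L[X]) (p p' : L → L[X]) (τ : L)
    (hp : p τ = e * p' τ) :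
    clearPoly k P (e * c) p τ =
      (∏ l ∈ Finset.range (k + 1), taylor (l : L) e) * clearPoly k P c p' τ := by
  rw [clearPoly, clearPoly, Finset.mul_sum]
  refine Finset.sum_congr rfl fun j hj => ?_
  simp only [hp, taylor_mul, Finset.prod_mul_distrib]
  rw [← Finset.mul_prod_erase _ _ hj]
  ring

/-- After removing common factors, the denominator of a solution `(∑ p_τ(n) τ^n) / c(n)` of the
recurrence has no large integer root: at the largest root, the recurrence would force a common
factor. -/
lemma exists_reduced [CharZero L] (T : Finset L) (k : ℕ) (P : ℕ → L[X]) (n₁ : ℕ)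
    (hP0 : ∀ n : ℕ, n₁ ≤ n → (P 0).eval (n : L) ≠ 0) (c : L[X]) (hc : c ≠ 0) (p : L → L[X])
    (hq : ∀ τ ∈ T, clearPoly k P c p τ = 0) :
    ∃ (e c' : L[X]) (p' : L → L[X]), c = e * c' ∧ (∀ τ ∈ T, p τ = e * p' τ) ∧
      (∀ τ ∈ T, clearPoly k P c' p' τ = 0) ∧ ∀ n : ℕ, n₁ ≤ n → c'.eval (n : L) ≠ 0 := by
  classical
  -- Among all ways of cancelling a common factor, take one with `c'` of minimal degree.
  have hex : ∃ m : ℕ, ∃ (e c' : L[X]) (p' : L → L[X]), c = e * c' ∧ (∀ τ ∈ T, p τ = e * p' τ) ∧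
      c'.natDegree = m := ⟨_, 1, c, p, by simp, by simp, rfl⟩
  obtain ⟨e, c', p', h1, h2, h3⟩ := Nat.find_spec hex
  have he0 : e ≠ 0 := fun h => hc (by rw [h1, h, zero_mul])
  have hc0 : c' ≠ 0 := fun h => hc (by rw [h1, h, mul_zero])
  have hq' : ∀ τ ∈ T, clearPoly k P c' p' τ = 0 := by
    intro τ hτ
    have h4 := hq τ hτ
    rw [h1, clearPoly_mul k P e c' p p' τ (h2 τ hτ)] at h4
    refine (mul_eq_zero.1 h4).resolve_left (Finset.prod_ne_zero_iff.2 fun l _ h => he0 ?_)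
    exact (taylor_eq_zero _ _).1 h
  refine ⟨e, c', p', h1, h2, hq', ?_⟩
  by_contra! hcon
  have hfin : {n : ℕ | n₁ ≤ n ∧ c'.eval (n : L) = 0}.Finite :=
    ((Polynomial.finite_setOfPred_isRoot hc0).preimage (Nat.cast_injective.injOn)).subset
      fun n hn => hn.2
  -- At the largest integer root `r` of `c'` every product except the one of shift `0` vanishes, which
  -- forces a further common factor.
  obtain ⟨r, hr, hmax⟩ := hfin.exists_maximal hcon
  have hmax' : ∀ l, l ≠ 0 → c'.eval ((r + l : ℕ) : L) ≠ 0 := fun l hl h0 => by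
    have := hmax (y := r + l) ⟨le_trans hr.1 (Nat.le_add_right _ _), h0⟩ (Nat.le_add_right _ _)
    omega
  have hpr : ∀ τ ∈ T, (p' τ).eval (r : L) = 0 := by
    intro τ hτ
    have h4 := congrArg (Polynomial.eval (r : L)) (hq' τ hτ)
    rw [clearPoly, Polynomial.eval_finsetSum, Finset.sum_eq_single_of_mem 0 (by simp)] at h4
    · simp only [eval_mul, taylor_eval, eval_C, Polynomial.eval_prod, eval_zero, pow_zero,
        mul_one, Nat.cast_zero, add_zero] at h4
      rcases mul_eq_zero.1 h4 with h5 | h5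
      · exact (mul_eq_zero.1 h5).resolve_left (hP0 r hr.1)
      · obtain ⟨l, hl, h6⟩ := Finset.prod_eq_zero_iff.1 h5
        refine absurd ?_ (hmax' l (Finset.ne_of_mem_erase hl))
        push_cast
        exact h6
    · intro j hj hj0
      rw [eval_mul, Polynomial.eval_prod]
      refine mul_eq_zero_of_right _ (Finset.prod_eq_zero (i := 0) (by simp [hj0.symm]) ?_)
      simpa [taylor_eval] using hr.2
  obtain ⟨c'', hc''⟩ := dvd_iff_isRoot.2 hr.2
  have hdiv : ∀ τ, ∃ v, τ ∈ T → p' τ = (Polynomial.X - Polynomial.C (r : L)) * v := fun τ => by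
    by_cases hτ : τ ∈ T
    · obtain ⟨v, hv⟩ := dvd_iff_isRoot.2 (hpr τ hτ)
      exact ⟨v, fun _ => hv⟩
    · exact ⟨0, fun h => absurd h hτ⟩
  choose p'' hp'' using hdiv
  have hc''0 : c'' ≠ 0 := fun h => hc0 (by rw [hc'', h, mul_zero])
  refine Nat.find_min hex (m := c''.natDegree) ?_ ⟨e * (Polynomial.X - Polynomial.C (r : L)), c'',
    p'', by rw [h1, hc'', mul_assoc], fun τ hτ => by rw [h2 τ hτ, hp'' τ hτ, mul_assoc], rfl⟩
  rw [← h3, hc'', natDegree_mul (X_sub_C_ne_zero _) hc''0, natDegree_X_sub_C]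
  omega

/-- Among enough consecutive integers there are `k` consecutive non-roots. -/
lemma exists_block_nonroot [CharZero L] (c : L[X]) (hc : c ≠ 0) (C k u : ℕ)
    (hC : c.natDegree ≤ C) :
    ∃ m, u ≤ m ∧ m ≤ u + C * k ∧ ∀ i < k, c.eval ((m + i : ℕ) : L) ≠ 0 := by
  by_contra! hcon
  have h1 : ∀ i : Fin (C + 1), ∃ j < k, c.eval ((u + i * k + j : ℕ) : L) = 0 := fun i =>
    hcon _ (Nat.le_add_right _ _)
      (Nat.add_le_add_left (Nat.mul_le_mul_right _ (Nat.lt_succ_iff.1 i.2)) _)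
  choose f hf1 hf2 using h1
  refine hc (eq_zero_of_natDegree_lt_card_of_eval_eq_zero c
    (f := fun i : Fin (C + 1) => ((u + i * k + f i : ℕ) : L)) ?_ hf2
    (by rw [Fintype.card_fin]; omega))
  intro i j hij
  have h2 : u + i * k + f i = u + j * k + f j := Nat.cast_injective (R := L) hij
  have h3 : (f i + k * i) / k = (f j + k * j) / k := by
    congr 1; linarith [mul_comm k i, mul_comm k j]
  have hk : 0 < k := (Nat.zero_le _).trans_lt (hf1 i)
  rw [Nat.add_mul_div_left _ _ hk, Nat.add_mul_div_left _ _ hk, Nat.div_eq_of_lt (hf1 i),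
    Nat.div_eq_of_lt (hf1 j)] at h3
  ext; omega

/-- If `c(n) aₙ` is an exponential polynomial on a window that is long compared with all the
degrees involved, then so it is, for another `c`, at all large integers. -/
lemma global_of_window [CharZero L] (T : Finset L) (hT : ∀ τ ∈ T, τ ≠ 0) (k : ℕ) (P : ℕ → L[X])
    (n₁ : ℕ) (a : ℕ → L)
    (hrec : ∀ n : ℕ, n₁ ≤ n → ∑ j ∈ Finset.range (k + 1), (P j).eval (n : L) * a (n + j) = 0 ∧
      (P 0).eval (n : L) ≠ 0 ∧ (P k).eval (n : L) ≠ 0)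
    (c : L[X]) (hc : c ≠ 0) (p : L → L[X]) (M Q C u v : ℕ) (hP : ∀ j ≤ k, (P j).natDegree ≤ M)
    (hp : ∀ τ ∈ T, (p τ).natDegree ≤ Q) (hC : c.natDegree ≤ C) (hu : n₁ ≤ u)
    (hv : u + k + (T.card * (M + Q + k * C + 1) + (M + Q + k * C)) ≤ v)
    (hv' : u + C * k + k ≤ v)
    (hw : ∀ n, u ≤ n → n ≤ v → c.eval (n : L) * a n = expPoly T p n) :
    ∃ (c' : L[X]) (p' : L → L[X]) (N : ℕ), ∀ n : ℕ, N ≤ n → c'.eval (n : L) ≠ 0 ∧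
      c'.eval (n : L) * a n = expPoly T p' n := by
  have hq : ∀ τ ∈ T, clearPoly k P c p τ = 0 := by
    refine expPoly_independent T hT (M + Q + k * C) _
      (fun τ hτ => natDegree_clearPoly_le k P c p τ M Q C hP (hp τ hτ) hC) u fun n h1 h2 => ?_
    rw [expPoly_clearPoly_of_eq T k P c p n a fun j hj => hw _ (by omega) (by omega),
      (hrec n (hu.trans h1)).1, zero_mul]
  obtain ⟨e, c', p', hce, hpe, hq', hc'⟩ :=
    exists_reduced T k P n₁ (fun n hn => (hrec n hn).2.1) c hc p hq
  obtain ⟨m, hm1, hm2, hm3⟩ := exists_block_nonroot c hc C k u hC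
  refine ⟨c', p', m, fun n hn => ⟨hc' n (by omega), ?_⟩⟩
  obtain ⟨a', ha'⟩ : ∃ a' : ℕ → L, ∀ n, a' n = expPoly T p' n / c'.eval (n : L) :=
    ⟨_, fun _ => rfl⟩
  have hrec' : ∀ n, n₁ ≤ n → ∑ j ∈ Finset.range (k + 1), (P j).eval (n : L) * a' (n + j) = 0 := by
    intro n hn
    have h1 := expPoly_clearPoly_of_eq T k P c' p' n a' fun j _ => by
      rw [ha', mul_div_cancel₀ _ (hc' _ (by omega))]
    rw [expPoly, Finset.sum_eq_zero fun τ hτ => by rw [hq' τ hτ, eval_zero, zero_mul]] at h1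
    exact (mul_eq_zero.1 h1.symm).resolve_right
      (Finset.prod_ne_zero_iff.2 fun l _ => hc' _ (by omega))
  -- Both sequences satisfy the recurrence, whose leading polynomial does not vanish; the first `k`
  -- values agree because `c` has no root among them.
  have key : ∀ i, a (m + i) = a' (m + i) := by
    intro i
    induction i using Nat.strong_induction_on with
    | _ i ih =>
      rcases Nat.lt_or_ge i k with hi | hi
      · have h1 := hw (m + i) (by omega) (by omega)
        have h2 := hm3 i hi
        have h3 : expPoly T p (m + i) = e.eval ((m + i : ℕ) : L) * expPoly T p' (m + i) := by
          rw [expPoly, expPoly, Finset.mul_sum]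
          refine Finset.sum_congr rfl fun τ hτ => ?_
          rw [hpe τ hτ, eval_mul, mul_assoc]
        rw [hce, eval_mul] at h2
        rw [h3, hce, eval_mul, mul_assoc] at h1
        rw [ha', eq_div_iff (right_ne_zero_of_mul h2), mul_comm]
        exact mul_left_cancel₀ (left_ne_zero_of_mul h2) h1
      · have h1 := (hrec (m + (i - k)) (by omega)).1
        have h2 := hrec' (m + (i - k)) (by omega)
        rw [Finset.sum_range_succ] at h1 h2
        rw [Finset.sum_congr rfl fun j hj => by
          rw [add_assoc, ih (i - k + j) (by rw [Finset.mem_range] at hj; omega), ← add_assoc]] at h1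
        have h3 := mul_left_cancel₀ (hrec (m + (i - k)) (by omega)).2.2
          (add_left_cancel (h1.trans h2.symm))
        rwa [show m + (i - k) + k = m + i by omega] at h3
  have h4 := key (n - m)
  rw [Nat.add_sub_cancel' hn] at h4
  rw [h4, ha', mul_div_cancel₀ _ (hc' _ (by omega))]
end

section
variable {L : Type*} [Field L]

/-- `expPoly_of_window` for the powers of a polynomial that splits; the bases are the inverses of its
nonzero roots. -/
lemma expPoly_of_window_pow [CharZero L] (A₀ : L[X]) (hA₀ : A₀ ≠ 0) (hs : A₀.Splits)
    (T : Finset L) (hT0 : ∀ τ ∈ T, τ ≠ 0) (hT : ∀ ρ ∈ A₀.roots, ρ ≠ 0 → ρ⁻¹ ∈ T) (J : ℕ)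
    (y : ℕ → L) (l h : ℕ) (hy : ∀ n, l ≤ n → n ≤ h → PowerSeries.coeff n
      ((A₀ : PowerSeries L) ^ J * PowerSeries.mk y) = 0) :
    ∃ p : L → L[X], (∀ τ ∈ T, (p τ).natDegree ≤ J * A₀.natDegree) ∧
      ∀ n, l ≤ n → n + J * A₀.natDegree ≤ h → y n = expPoly T p n := by
  have hs' : (A₀ ^ J).Splits := hs.pow J
  have hcard : (A₀ ^ J).roots.card = J * A₀.natDegree := by
    rw [← hs'.natDegree_eq_card_roots, natDegree_pow]
  rw [← hcard]
  refine expPoly_of_window T hT0 _ (fun ρ hρ => hT ρ ?_) y l h fun n h1 h2 => ?_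
  · rw [Polynomial.roots_pow] at hρ
    exact Multiset.mem_of_mem_nsmul hρ
  · have h3 := hy n h1 h2
    have h4 := hs'.eq_prod_roots
    rw [← Polynomial.coe_pow, h4, Polynomial.coe_mul, Polynomial.coe_C, mul_assoc,
      PowerSeries.coeff_C_mul] at h3
    exact (mul_eq_zero.1 h3).resolve_left
      (leadingCoeff_ne_zero.2 (pow_ne_zero _ hA₀))

/-- A D-finite sequence of subexponential arithmetic and archimedean size is a quotient of an
exponential polynomial by a polynomial, at all large integers. -/
lemma exists_expPoly [NumberField L] (ι : L →+* ℂ) (p : ℕ) (hp : 1 ≤ p)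
    (A : Fin (p + 1) → L[X]) (a : ℕ → L)
    (hf : ∑ i : Fin (p + 1), (A i : PowerSeries L) *
      (psDeriv^[p - i.val] (PowerSeries.mk a)) = 0)
    (hA0 : A 0 ≠ 0) (hsplit : (A 0).Splits)
    (hintg : ∀ j, IsIntegral ℤ ((A 0).coeff j))
    (hgrow : ∀ τ : ℝ, 0 < τ → ∃ B : ℝ, ∀ n : ℕ, ‖ι (a n)‖ ≤ B * Real.exp (τ * n))
    (hS : SubexpArith a) :
    ∃ T : Finset L, (∀ τ ∈ T, τ ≠ 0) ∧ ∃ (c : L[X]) (q : L → L[X]) (N : ℕ), ∀ n : ℕ, N ≤ n →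
      c.eval (n : L) ≠ 0 ∧ c.eval (n : L) * a n = expPoly T q n := by
  classical
  obtain ⟨T, hTdef⟩ : ∃ T : Finset L,
      T = ((A 0).roots.toFinset.filter (· ≠ 0)).image (·⁻¹) := ⟨_, rfl⟩
  have hT0 : ∀ τ ∈ T, τ ≠ 0 := by
    intro τ hτ
    rw [hTdef, Finset.mem_image] at hτ
    obtain ⟨ρ, hρ, rfl⟩ := hτ
    exact inv_ne_zero (Finset.mem_filter.1 hρ).2
  have hT : ∀ ρ ∈ (A 0).roots, ρ ≠ 0 → ρ⁻¹ ∈ T := fun ρ h1 h2 => by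
    rw [hTdef]
    exact Finset.mem_image_of_mem _ (Finset.mem_filter.2 ⟨Multiset.mem_toFinset.2 h1, h2⟩)
  obtain ⟨k, P, n₁, hrec⟩ := recurrence_of_ode p A a hA0 hf
  obtain ⟨M, hM⟩ : ∃ M, ∀ j ≤ k, (P j).natDegree ≤ M :=
    ⟨(Finset.range (k + 1)).sup fun j => (P j).natDegree, fun j hj =>
      Finset.le_sup (f := fun j => (P j).natDegree) (Finset.mem_range.2 (Nat.lt_succ_of_le hj))⟩
  obtain ⟨D, hD⟩ : ∃ D, D = (A 0).natDegree := ⟨_, rfl⟩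
  obtain ⟨t, ht⟩ : ∃ t, t = T.card := ⟨_, rfl⟩
  obtain ⟨H, J, hH, hJ, c, hc, hcH, hcoef⟩ := main_vanishing ι p hp A a hf hintg hgrow hS
    (8 * ((t + 2) * D + (t + 2) * k)) (8 * (k + t * (M + 1) + M) + 2 * n₁ + 2)
  obtain ⟨q, hq1, hq2⟩ := expPoly_of_window_pow (A 0) hA0 hsplit T hT0 hT J
    (fun n => c.eval (n : L) * a n) (H - H / 2) H fun n h1 h2 => hcoef n (by omega) h2
  rw [← hD] at hq1 hq2
  have e1 : 8 * (t * D * J + 2 * (J * D)) ≤ H := by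
    refine le_trans (le_of_eq_of_le ?_ (Nat.mul_le_mul_right J
      (Nat.mul_le_mul_left 8 (Nat.le_add_right ((t + 2) * D) ((t + 2) * k))))) hJ
    ring
  have e2 : 8 * (t * k * c.natDegree + 2 * (k * c.natDegree)) ≤ H := by
    refine le_trans (le_of_eq_of_le ?_ (Nat.mul_le_mul_right c.natDegree
      (Nat.mul_le_mul_left 8 (Nat.le_add_left ((t + 2) * k) ((t + 2) * D))))) hcH
    ring
  refine ⟨T, hT0, global_of_window T hT0 k P n₁ a hrec c hc q M (J * D) c.natDegree (H - H / 2)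
    (H - J * D) hM hq1 le_rfl (by omega) ?_ ?_ fun n h1 h2 => hq2 n h1 (by omega)⟩
  · rw [← ht]
    have e3 : t * (M + J * D + k * c.natDegree + 1) =
      t * (M + 1) + t * D * J + t * k * c.natDegree := by ring
    rw [e3]
    omega
  · rw [mul_comm c.natDegree]
    omega
end

/-! ### Roots of unity -/

/-- If `τ` is not integral, some prime `v` has `v(τ) > 1`, and an integer `x` with `x τ^m` integral
is divisible by `v^m`; hence its norm is at least `2^m`. -/
lemma two_pow_le_prod_norm {L : Type*} [Field L] [NumberField L] (τ : L) (hτ : ¬ IsIntegral ℤ τ)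
    (m : ℕ) (x : L) (hx : IsIntegral ℤ x) (hx0 : x ≠ 0) (h : IsIntegral ℤ (x * τ ^ m)) :
    (2 : ℝ) ^ m ≤ ∏ σ : L →+* ℂ, ‖σ x‖ := by
  obtain ⟨v, hv⟩ : ∃ v : IsDedekindDomain.HeightOneSpectrum (NumberField.RingOfIntegers L),
      1 < v.valuation L τ := by
    by_contra! hcon
    obtain ⟨y, hy⟩ := IsDedekindDomain.HeightOneSpectrum.mem_integers_of_valuation_le_one L τ hcon
    exact hτ (hy ▸ NumberField.RingOfIntegers.isIntegral_coe y)
  obtain ⟨y, hy⟩ : ∃ y : NumberField.RingOfIntegers L, algebraMap _ L y = x := ⟨⟨x, hx⟩, rfl⟩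
  obtain ⟨z, hz⟩ : ∃ z : NumberField.RingOfIntegers L, algebraMap _ L z = x * τ ^ m :=
    ⟨⟨_, h⟩, rfl⟩
  have hy0 : y ≠ 0 := fun h0 => hx0 (by rw [← hy, h0, map_zero])
  have h1 : v.valuation L (x * τ ^ m) ≤ 1 := hz ▸ v.valuation_le_one z
  rw [map_mul, map_pow] at h1
  have h2 : WithZero.exp (1 : ℤ) ≤ v.valuation L τ := by
    have h3 : WithZero.exp (0 : ℤ) < v.valuation L τ := by rwa [WithZero.exp_zero]
    have h4 := WithZero.lt_log_of_exp_lt h3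
    exact (WithZero.le_log_iff_exp_le (zero_lt_one.trans hv).ne').1 h4
  have h3 : v.intValuation y ≤ WithZero.exp (-(m : ℤ)) := by
    have h0 : v.intValuation y = v.valuation L x := by
      rw [← hy, v.valuation_of_algebraMap]
    rw [h0]
    have h4 : v.valuation L x * WithZero.exp (m : ℤ) ≤ 1 := by
      refine le_trans ?_ h1
      refine mul_le_mul_right ?_ _
      have : WithZero.exp (m : ℤ) = WithZero.exp (1 : ℤ) ^ m := by
        rw [← WithZero.exp_nsmul, nsmul_eq_mul, mul_one]
      rw [this]
      exact pow_le_pow_left₀ zero_le h2 m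
    calc v.valuation L x = v.valuation L x * WithZero.exp (m : ℤ) * WithZero.exp (-(m : ℤ)) := by
          rw [mul_assoc, ← WithZero.exp_add, add_neg_cancel, WithZero.exp_zero, mul_one]
      _ ≤ 1 * WithZero.exp (-(m : ℤ)) := mul_le_mul_left h4 _
      _ = _ := one_mul _
  have h4 := Ideal.absNorm_dvd_absNorm_of_le
    (Ideal.dvd_iff_le.1 ((v.intValuation_le_pow_iff_dvd y m).1 h3))
  rw [map_pow, Ideal.absNorm_span_singleton] at h4
  have h5 : 2 ≤ Ideal.absNorm v.asIdeal := by
    have h6 : Ideal.absNorm v.asIdeal ≠ 0 := by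
      rw [Ne, Ideal.absNorm_eq_zero_iff]; exact v.ne_bot
    have h7 : Ideal.absNorm v.asIdeal ≠ 1 := by
      rw [Ne, Ideal.absNorm_eq_one_iff]; exact v.isPrime.ne_top
    omega
  have h6 : 2 ^ m ≤ (Algebra.norm ℤ y).natAbs :=
    (Nat.pow_le_pow_left h5 m).trans (Nat.le_of_dvd (Int.natAbs_pos.2
      (Algebra.norm_ne_zero_iff.2 hy0)) h4)
  have h7 : ∏ σ : L →+* ℂ, ‖σ x‖ = ((Algebra.norm ℤ y).natAbs : ℝ) := by
    have h8 : ∏ σ : L →ₐ[ℚ] ℂ, σ x = ∏ σ : L →+* ℂ, σ x :=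
      Fintype.prod_equiv (RingHom.equivRatAlgHom L ℂ).symm _ _ (fun σ => rfl)
    rw [← norm_prod, ← h8, ← Algebra.norm_eq_prod_embeddings ℚ ℂ x, ← hy,
      ← Algebra.coe_norm_int]
    simp [Nat.cast_natAbs]
  rw [h7]
  exact_mod_cast h6

lemma norm_eval_le_exp (q : ℂ[X]) (κ : ℝ) (hκ : 0 < κ) :
    ∃ M : ℝ, 0 < M ∧ ∀ n : ℕ, ‖q.eval (n : ℂ)‖ ≤ M * Real.exp (κ * n) := by
  obtain ⟨M, hM, h⟩ := add_pow_le_exp κ hκ q.natDegree 1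
  refine ⟨(∑ i ∈ Finset.range (q.natDegree + 1), ‖q.coeff i‖) * M + 1, by positivity, fun n => ?_⟩
  rw [eval_eq_sum_range]
  have h1 : ∀ i ∈ Finset.range (q.natDegree + 1), ‖q.coeff i * (n : ℂ) ^ i‖ ≤
      ‖q.coeff i‖ * (M * Real.exp (κ * n)) := by
    intro i hi
    rw [norm_mul, norm_pow, Complex.norm_natCast]
    refine mul_le_mul_of_nonneg_left (le_trans ?_ (h n (by positivity))) (norm_nonneg _)
    push_cast
    calc (n : ℝ) ^ i ≤ (n + 1 : ℝ) ^ i := by gcongr; linarith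
      _ ≤ (n + 1 : ℝ) ^ q.natDegree :=
        pow_le_pow_right₀ (by linarith [Nat.cast_nonneg (α := ℝ) n])
          (by rw [Finset.mem_range] at hi; omega)
  refine (norm_sum_le_of_le _ h1).trans ?_
  rw [← Finset.sum_mul, ← mul_assoc]
  gcongr
  linarith

/-- A nonzero polynomial is bounded away from zero at large integers. -/
lemma exists_le_norm_eval (q : ℂ[X]) (hq : q ≠ 0) :
    ∃ δ : ℝ, 0 < δ ∧ ∀ᶠ n : ℕ in atTop, δ ≤ ‖q.eval (n : ℂ)‖ := by
  by_cases h : 0 < q.degree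
  · refine ⟨1, one_pos, (q.tendsto_norm_atTop h (z := fun n : ℕ => (n : ℂ)) ?_).eventually_ge_atTop 1⟩
    simpa using tendsto_natCast_atTop_atTop (R := ℝ)
  · have h1 := eq_C_of_degree_le_zero (not_lt.1 h)
    have h2 : q.coeff 0 ≠ 0 := fun h0 => hq (by rw [h1, h0, map_zero])
    refine ⟨‖q.coeff 0‖, norm_pos_iff.2 h2, Eventually.of_forall fun n => ?_⟩
    conv_rhs => rw [h1, eval_C]

lemma isIntegral_eval_natCast {L : Type*} [Field L] (r : L[X])
    (hintg : ∀ j, IsIntegral ℤ (r.coeff j)) (n : ℕ) : IsIntegral ℤ (r.eval (n : L)) := by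
  have hn : IsIntegral ℤ (n : L) := by
    simpa using isIntegral_algebraMap (R := ℤ) (A := L) (x := (n : ℤ))
  rw [eval_eq_sum_range]
  exact IsIntegral.sum _ fun i _ => (hintg i).mul (hn.pow i)

lemma eventually_exp_lt (K x y : ℝ) (h : x < y) :
    ∀ᶠ m : ℕ in atTop, K * Real.exp (x * m) < Real.exp (y * m) := by
  have h1 : Tendsto (fun m : ℕ => Real.exp ((y - x) * m)) atTop atTop :=
    Real.tendsto_exp_atTop.comp (tendsto_natCast_atTop_atTop.const_mul_atTop (sub_pos.2 h))
  filter_upwards [h1.eventually_gt_atTop K] with m hm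
  have : Real.exp (y * m) = Real.exp ((y - x) * m) * Real.exp (x * m) := by
    rw [← Real.exp_add]; ring_nf
  rw [this]
  exact mul_lt_mul_of_pos_right hm (Real.exp_pos _)

/-- If `r(m) τ^m` has subexponential house and denominator along a sequence of `m`, for a fixed
nonzero polynomial `r`, then `τ` is a root of unity, by Kronecker's theorem. -/
lemma pow_eq_one_of_small {L : Type*} [Field L] [NumberField L] (r : L[X]) (hr : r ≠ 0)
    (hintg : ∀ j, IsIntegral ℤ (r.coeff j)) (τ : L) (hτ : τ ≠ 0)
    (h : ∀ c : ℝ, 0 < c → ∃ᶠ m : ℕ in atTop, ∃ d : ℕ, 0 < d ∧ (d : ℝ) ≤ Real.exp (c * m) ∧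
      IsIntegral ℤ ((d : L) * (r.eval (m : L) * τ ^ m)) ∧
      ∀ σ : L →+* ℂ, ‖σ (r.eval (m : L) * τ ^ m)‖ ≤ Real.exp (c * m)) :
    ∃ n : ℕ, 0 < n ∧ τ ^ n = 1 := by
  have hmap : ∀ (σ : L →+* ℂ) (m : ℕ), σ (r.eval (m : L)) = (r.map σ).eval (m : ℂ) := by
    intro σ m
    rw [← map_natCast σ, eval_map, eval₂_at_apply]
  -- If `‖σ τ‖ > 1`, then `r(m) τ^m` grows exponentially at `σ`.
  have hsmall : ∀ σ : L →+* ℂ, ‖σ τ‖ ≤ 1 := by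
    intro σ
    by_contra! hcon
    obtain ⟨δ, hδ, hev⟩ := exists_le_norm_eval (r.map σ) ((Polynomial.map_ne_zero_iff σ.injective).2 hr)
    have hlog := Real.log_pos hcon
    obtain ⟨m, ⟨d, -, -, -, h2⟩, h3, h4⟩ := ((h (Real.log ‖σ τ‖ / 2) (by linarith)).and_eventually
      (hev.and (eventually_exp_lt δ⁻¹ (Real.log ‖σ τ‖ / 2) (Real.log ‖σ τ‖) (by linarith)))).exists
    have h5 := h2 σ
    rw [map_mul, map_pow, norm_mul, norm_pow, hmap] at h5
    have h6 : Real.exp (Real.log ‖σ τ‖ * m) = ‖σ τ‖ ^ m := by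
      rw [mul_comm, Real.exp_nat_mul, Real.exp_log (by linarith)]
    rw [h6, inv_mul_lt_iff₀ hδ] at h4
    have h7 : δ * ‖σ τ‖ ^ m ≤ ‖(r.map σ).eval (m : ℂ)‖ * ‖σ τ‖ ^ m := by gcongr
    linarith
  -- If `τ` is not integral, then the denominator of `r(m) τ^m` grows exponentially.
  have hτint : IsIntegral ℤ τ := by
    by_contra hcon
    obtain ⟨g, hg⟩ : ∃ g : ℕ, g = Fintype.card (L →+* ℂ) := ⟨_, rfl⟩
    have hlog2 : 0 < Real.log 2 := Real.log_pos (by norm_num)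
    obtain ⟨c, hc⟩ : ∃ c : ℝ, c = Real.log 2 / (4 * (g + 1)) := ⟨_, rfl⟩
    have hc0 : 0 < c := by rw [hc]; positivity
    have hM : ∀ σ : L →+* ℂ, ∃ M : ℝ, 0 < M ∧ ∀ n : ℕ,
      ‖σ (r.eval (n : L))‖ ≤ M * Real.exp (c * n) := fun σ => by
        simp only [hmap]; exact norm_eval_le_exp _ c hc0
    choose M hM0 hM using hM
    have hne : ∀ᶠ m : ℕ in atTop, r.eval (m : L) ≠ 0 := by
      have hfin : {n : ℕ | r.eval (n : L) = 0}.Finite :=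
        ((Polynomial.finite_setOfPred_isRoot hr).preimage (Nat.cast_injective.injOn)).subset
          fun n hn => hn
      rw [← Nat.cofinite_eq_atTop]
      exact hfin.eventually_cofinite_notMem
    have hlt : 2 * c * g < Real.log 2 := by
      rw [hc]
      have : (0 : ℝ) ≤ g := Nat.cast_nonneg g
      rw [show 2 * (Real.log 2 / (4 * ((g : ℝ) + 1))) * g = (2 * g * Real.log 2) / (4 * (g + 1)) by
        ring, div_lt_iff₀ (by positivity)]
      nlinarith
    obtain ⟨m, ⟨d, hd0, hd, h2, -⟩, h3, h4⟩ := ((h c hc0).and_eventually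
      (hne.and (eventually_exp_lt (∏ σ, M σ) (2 * c * g) (Real.log 2) hlt))).exists
    have h5 := two_pow_le_prod_norm τ hcon m ((d : L) * r.eval (m : L))
      ((by simpa using isIntegral_algebraMap (R := ℤ) (A := L) (x := (d : ℤ)) :
        IsIntegral ℤ (d : L)).mul (isIntegral_eval_natCast r hintg m))
      (mul_ne_zero (by exact_mod_cast hd0.ne') h3) (by rwa [mul_assoc])
    have h6 : ∏ σ : L →+* ℂ, ‖σ ((d : L) * r.eval (m : L))‖ ≤
        ∏ σ : L →+* ℂ, (M σ * Real.exp (2 * c * m)) := by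
      refine Finset.prod_le_prod (fun _ _ => norm_nonneg _) fun σ _ => ?_
      rw [map_mul, norm_mul, map_natCast, Complex.norm_natCast]
      calc (d : ℝ) * ‖σ (r.eval (m : L))‖ ≤ Real.exp (c * m) * (M σ * Real.exp (c * m)) := by
            gcongr; exact hM σ m
        _ = M σ * (Real.exp (c * m) * Real.exp (c * m)) := by ring
        _ = _ := by rw [← Real.exp_add]; ring_nf
    rw [Finset.prod_mul_distrib, Finset.prod_const, Finset.card_univ, ← hg, ← Real.exp_nat_mul,
      show (g : ℝ) * (2 * c * m) = 2 * c * g * m by ring] at h6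
    have h7 : Real.exp (Real.log 2 * m) = 2 ^ m := by
      rw [mul_comm, Real.exp_nat_mul, Real.exp_log (by norm_num)]
    rw [h7] at h4
    linarith
  obtain ⟨n, hn, h1⟩ := NumberField.Embeddings.pow_eq_one_of_norm_le_one L ℂ hτ hτint hsmall
  exact ⟨n, hn, h1⟩

/-- A set of density zero misses a block of `G + 1` consecutive integers in the upper half of
every long interval. -/
lemma exists_free_block (S : Set ℕ) (hS : ZD S) (G : ℕ) :
    ∀ᶠ n : ℕ in atTop, ∃ m, n / 2 ≤ m ∧ m + G ≤ n ∧ ∀ j ≤ G, m + j ∉ S := by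
  classical
  obtain ⟨N, hN⟩ := hS (1 / (8 * (G + 1))) (by positivity)
  filter_upwards [eventually_ge_atTop N, eventually_ge_atTop (16 * (G + 1))] with n hn hn'
  by_contra! hcon
  have h1 : (((Finset.range (n + 1)).filter (· ∈ S)).card) * (8 * (G + 1)) ≤ n := by
    have h2 := hN n hn
    rw [div_mul_eq_mul_div, one_mul, le_div_iff₀ (by positivity)] at h2
    convert (by exact_mod_cast h2 : (((Finset.range (n + 1)).filter (· ∈ S)).card) *
      (8 * (G + 1)) ≤ n)
  obtain ⟨k, hk⟩ : ∃ k, k = (n - n / 2) / (G + 1) := ⟨_, rfl⟩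
  have hk1 : k * (G + 1) ≤ n - n / 2 := hk ▸ Nat.div_mul_le_self _ _
  have hk2 : n - n / 2 < k * (G + 1) + (G + 1) := by
    rw [hk, mul_comm]; exact Nat.lt_mul_div_succ _ (Nat.succ_pos G)
  have hblock : ∀ i, i < k → ∃ j, j ≤ G ∧ n / 2 + i * (G + 1) + j ∈ S := by
    intro i hi
    have h3 : (i + 1) * (G + 1) ≤ k * (G + 1) := Nat.mul_le_mul_right _ hi
    rw [Nat.succ_mul] at h3
    exact hcon (n / 2 + i * (G + 1)) (by omega) (by omega)
  choose! j hj1 hj2 using hblock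
  have h3 : (Finset.range k).card ≤ ((Finset.range (n + 1)).filter (· ∈ S)).card := by
    refine Finset.card_le_card_of_injOn (fun i => n / 2 + i * (G + 1) + j i) ?_ ?_
    · intro i hi
      have hi' : i < k := by simpa using hi
      have h4 : (i + 1) * (G + 1) ≤ k * (G + 1) := Nat.mul_le_mul_right _ hi'
      rw [Nat.succ_mul] at h4
      have h5 := hj1 i hi'
      simp only [Finset.coe_filter, Finset.mem_range]
      exact ⟨by omega, hj2 i hi'⟩
    · have hdiv : ∀ i, i < k → (n / 2 + i * (G + 1) + j i - n / 2) / (G + 1) = i := by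
        intro i hi
        rw [add_assoc, Nat.add_sub_cancel_left, Nat.add_comm, Nat.add_mul_div_right _ _
          (Nat.succ_pos G), Nat.div_eq_of_lt (Nat.lt_succ_of_le (hj1 i hi)), zero_add]
      intro i hi i' hi' h4
      have hi2 : i < k := by simpa using hi
      have hi2' : i' < k := by simpa using hi'
      simp only at h4
      rw [← hdiv i hi2, ← hdiv i' hi2', h4]
  rw [Finset.card_range] at h3
  have h6 : k * (8 * (G + 1)) ≤ n := (Nat.mul_le_mul_right _ h3).trans h1
  have h7 : k * (8 * (G + 1)) = 8 * (k * (G + 1)) := by ring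
  omega

/-- A polynomial over a number field has a common denominator. -/
lemma exists_integral_mul {L : Type*} [Field L] [NumberField L] (r : L[X]) :
    ∃ b : ℕ, 0 < b ∧ ∀ j, IsIntegral ℤ ((Polynomial.C (b : L) * r).coeff j) := by
  classical
  have : Algebra.IsAlgebraic ℤ L :=
    IsFractionRing.comap_isAlgebraic_iff (A := ℤ) (K := ℚ) (C := L) |>.2 inferInstance
  obtain ⟨y, hy, h⟩ := Algebra.IsAlgebraic.exists_integral_multiples ℤ
    ((Finset.range (r.natDegree + 1)).image r.coeff)
  refine ⟨y.natAbs, Int.natAbs_pos.2 hy, fun j => ?_⟩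
  rw [Polynomial.coeff_C_mul]
  by_cases hj : j ≤ r.natDegree
  · have h1 := h (r.coeff j) (Finset.mem_image_of_mem _ (Finset.mem_range.2 (by omega)))
    rw [zsmul_eq_mul] at h1
    rcases Int.natAbs_eq y with h2 | h2
    · rw [h2] at h1; simpa using h1
    · rw [h2] at h1; simpa using h1.neg
  · rw [coeff_eq_zero_of_natDegree_lt (by omega), mul_zero]; exact isIntegral_zero

lemma eval_C_mul_cast {L : Type*} [Field L] (b : ℕ) (r : L[X]) (x : L) :
    (Polynomial.C (b : L) * r).eval x = b * r.eval x := by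
  rw [eval_mul, eval_C]

set_option maxHeartbeats 1000000 in
/-- The bases which occur in the exponential polynomial of a sequence of subexponential arithmetic
size are roots of unity: isolating one base `τ` expresses `r(m) τ^m` through a window of `a`. -/
lemma base_root_of_unity {L : Type*} [Field L] [NumberField L] (a : ℕ → L) (hS : SubexpArith a)
    (T : Finset L) (hT0 : ∀ τ ∈ T, τ ≠ 0) (c : L[X]) (q : L → L[X]) (N : ℕ)
    (h : ∀ n : ℕ, N ≤ n → c.eval (n : L) * a n = expPoly T q n) (τ : L) (hτ : τ ∈ T)
    (hq : q τ ≠ 0) : ∃ n : ℕ, 0 < n ∧ τ ^ n = 1 := by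
  obtain ⟨κ, -, hκ⟩ := expPoly_isolate T (T.sup fun τ => (q τ).natDegree) τ hτ
  obtain ⟨r, -, hr0, hr⟩ := hκ q fun τ' h' => Finset.le_sup (f := fun τ => (q τ).natDegree) h'
  have hr0' : r ≠ 0 := fun h0 => hq (hr0 h0)
  obtain ⟨G, hG⟩ : ∃ G, G = κ.natDegree := ⟨_, rfl⟩
  obtain ⟨b₁, hb₁, hint₁⟩ := exists_integral_mul κ
  obtain ⟨b₂, hb₂, hint₂⟩ := exists_integral_mul c
  obtain ⟨b₃, hb₃, hint₃⟩ := exists_integral_mul r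
  obtain ⟨κ', hκ'⟩ : ∃ κ', κ' = Polynomial.C (b₁ : L) * κ := ⟨_, rfl⟩
  obtain ⟨c', hc'⟩ : ∃ c', c' = Polynomial.C (b₂ : L) * c := ⟨_, rfl⟩
  have hcast : ∀ b : ℕ, IsIntegral ℤ (b : L) := fun b => by
    simpa using isIntegral_algebraMap (R := ℤ) (A := L) (x := (b : ℤ))
  rw [← hκ'] at hint₁
  rw [← hc'] at hint₂
  have hkey : ∀ m, N ≤ m →
      (Polynomial.C ((b₁ * b₂ : ℕ) : L) * (Polynomial.C (b₃ : L) * r)).eval (m : L) * τ ^ m =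
      b₃ * ∑ j ∈ Finset.range (G + 1), κ'.coeff j * (c'.eval ((m + j : ℕ) : L) * a (m + j)) := by
    intro m hm
    rw [eval_C_mul_cast, eval_C_mul_cast, mul_assoc, mul_assoc, ← hr m, ← hG, mul_left_comm,
      Finset.mul_sum]
    congr 1
    refine Finset.sum_congr rfl fun j _ => ?_
    rw [← h (m + j) (by omega), hκ', hc', eval_C_mul_cast, Polynomial.coeff_C_mul]
    push_cast
    ring
  refine pow_eq_one_of_small (Polynomial.C ((b₁ * b₂ : ℕ) : L) * (Polynomial.C (b₃ : L) * r))
    ?_ ?_ τ (hT0 τ hτ) ?_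
  · refine mul_ne_zero ?_ (mul_ne_zero ?_ hr0')
    · rw [Ne, C_eq_zero]; exact_mod_cast (Nat.mul_pos hb₁ hb₂).ne'
    · rw [Ne, C_eq_zero]; exact_mod_cast hb₃.ne'
  · intro j
    rw [Polynomial.coeff_C_mul]
    exact (hcast _).mul (hint₃ j)
  intro e he
  obtain ⟨η, hη⟩ : ∃ η, η = e / 4 := ⟨_, rfl⟩
  have hη0 : 0 < η := by rw [hη]; positivity
  obtain ⟨S, hSZ, hSa, hSd⟩ := hS η hη0
  have hM : ∀ σ : L →+* ℂ, ∃ M : ℝ, 0 < M ∧ ∀ n : ℕ,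
      ‖σ (c'.eval (n : L))‖ ≤ M * Real.exp (η * n) := fun σ => by
    have hmap : ∀ m : ℕ, σ (c'.eval (m : L)) = (c'.map σ).eval (m : ℂ) := fun m => by
      rw [← map_natCast σ, eval_map, eval₂_at_apply]
    simp only [hmap]
    exact norm_eval_le_exp _ η hη0
  choose M hM0 hM using hM
  obtain ⟨m₁, hm₁⟩ := eventually_atTop.1 ((eventually_all.2 fun σ : L →+* ℂ =>
    eventually_exp_lt (b₃ * ∑ j ∈ Finset.range (G + 1), ‖σ (κ'.coeff j)‖ *
      (M σ * Real.exp (2 * η * j))) (2 * η) e (by linarith)).and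
    (eventually_exp_lt (Real.exp η) (2 * η) e (by linarith)))
  obtain ⟨n₁, hn₁⟩ := eventually_atTop.1 (exists_free_block S hSZ G)
  rw [frequently_atTop]
  intro m₀
  -- The block `[m, m + G]` free of exceptional indices is found with `n ≤ 2 * m + 1`, so that bounds in
  -- terms of `n` are bounds in terms of `m`.
  obtain ⟨n, hn, d, hd0, hd, hdi⟩ := frequently_atTop.1 hSd (n₁ + 2 * (m₀ + m₁ + N) + 2)
  obtain ⟨m, hm1, hm2, hm3⟩ := hn₁ n (by omega)
  obtain ⟨hev1, hev2⟩ := hm₁ m (by omega)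
  refine ⟨m, by omega, d, hd0, ?_, ?_, fun σ => ?_⟩
  · refine le_trans hd (le_trans ?_ hev2.le)
    rw [← Real.exp_add, Real.exp_le_exp]
    have : (n : ℝ) ≤ 2 * m + 1 := by exact_mod_cast (by omega : n ≤ 2 * m + 1)
    nlinarith
  · rw [hkey m (by omega), mul_left_comm, Finset.mul_sum]
    refine (hcast _).mul (IsIntegral.sum _ fun j hj => ?_)
    rw [Finset.mem_range] at hj
    have h1 := hdi (m + j) (by omega) (hm3 j (by omega))
    rw [show (d : L) * (κ'.coeff j * (c'.eval ((m + j : ℕ) : L) * a (m + j))) =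
      κ'.coeff j * (c'.eval ((m + j : ℕ) : L) * ((d : L) * a (m + j))) by ring]
    exact (hint₁ j).mul ((isIntegral_eval_natCast c' hint₂ _).mul h1)
  · refine le_trans ?_ (hev1 σ).le
    rw [hkey m (by omega), map_mul, map_natCast, norm_mul, Complex.norm_natCast, mul_assoc]
    refine mul_le_mul_of_nonneg_left ?_ (Nat.cast_nonneg _)
    rw [map_sum, Finset.sum_mul]
    refine norm_sum_le_of_le _ fun j hj => ?_
    rw [Finset.mem_range] at hj
    rw [map_mul, map_mul, norm_mul, norm_mul, mul_assoc]
    refine mul_le_mul_of_nonneg_left ?_ (norm_nonneg _)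
    refine (mul_le_mul (hM σ (m + j)) (hSa (m + j) (hm3 j (by omega)) σ) (norm_nonneg _)
      (by have := hM0 σ; positivity)).trans (le_of_eq ?_)
    rw [mul_assoc, mul_assoc, ← Real.exp_add, ← Real.exp_add]
    push_cast
    ring_nf

/-! ### Heights, denominators and radius of convergence -/

lemma ZD_union (S₁ S₂ : Set ℕ) (h₁ : ZD S₁) (h₂ : ZD S₂) : ZD (S₁ ∪ S₂) := by
  classical
  intro ε hε
  obtain ⟨N₁, h₁⟩ := h₁ (ε / 2) (by positivity)
  obtain ⟨N₂, h₂⟩ := h₂ (ε / 2) (by positivity)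
  refine ⟨max N₁ N₂, fun n hn => ?_⟩
  have h3 := h₁ n (le_of_max_le_left hn)
  have h4 := h₂ n (le_of_max_le_right hn)
  have h5 : (((Finset.range (n + 1)).filter (· ∈ S₁ ∪ S₂)).card) ≤
      ((Finset.range (n + 1)).filter (· ∈ S₁)).card +
      ((Finset.range (n + 1)).filter (· ∈ S₂)).card := by
    refine le_trans (Finset.card_le_card fun x hx => ?_) (Finset.card_union_le _ _)
    simp only [Finset.mem_filter, Finset.mem_union, Set.mem_union] at hx ⊢
    tauto
  have h6 : ((((Finset.range (n + 1)).filter (· ∈ S₁ ∪ S₂)).card : ℕ) : ℝ) ≤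
      ((Finset.range (n + 1)).filter (· ∈ S₁)).card +
      ((Finset.range (n + 1)).filter (· ∈ S₂)).card := by exact_mod_cast h5
  have h7 := h6.trans (show _ ≤ ε * n by linarith)
  refine le_trans (le_of_eq ?_) h7
  congr!

lemma ZD_of_upperDensity (S : Set ℕ) (h : upperDensity S ≤ 0) : ZD S := by
  classical
  intro ε hε
  have hbdd : IsBoundedUnder (· ≤ ·) atTop
      (fun n : ℕ => ((S ∩ Set.Icc 1 n).ncard : ℝ) / n) := by
    refine isBoundedUnder_of ⟨1, fun n => div_le_one_of_le₀ ?_ (Nat.cast_nonneg n)⟩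
    have h1 : (S ∩ Set.Icc 1 n).ncard ≤ (Set.Icc 1 n).ncard :=
      Set.ncard_le_ncard Set.inter_subset_right (Set.finite_Icc 1 n)
    rw [Set.ncard_eq_toFinset_card', Set.ncard_eq_toFinset_card', Set.toFinset_Icc,
      Nat.card_Icc] at h1
    rw [Set.ncard_eq_toFinset_card']
    exact_mod_cast h1
  have h1 := eventually_lt_of_limsup_lt (h.trans_lt (half_pos hε)) hbdd
  have h2 : ∀ᶠ n : ℕ in atTop, 2 / ε ≤ (n : ℝ) :=
    tendsto_natCast_atTop_atTop.eventually_ge_atTop _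
  obtain ⟨N, hN⟩ := eventually_atTop.1 (h1.and (h2.and (eventually_ge_atTop 1)))
  refine ⟨N, fun n hn => ?_⟩
  obtain ⟨h3, h4, h5⟩ := hN n hn
  have hn0 : (0 : ℝ) < n := by exact_mod_cast h5
  rw [div_lt_iff₀ hn0] at h3
  rw [div_le_iff₀ hε] at h4
  have h6 : ((Finset.range (n + 1)).filter (· ∈ S)).card ≤ (S ∩ Set.Icc 1 n).ncard + 1 := by
    rw [← Set.ncard_coe_finset]
    refine le_trans (Set.ncard_le_ncard (t := insert 0 (S ∩ Set.Icc 1 n)) (fun x hx => ?_)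
      (((Set.finite_Icc 1 n).inter_of_right S).insert 0)) (Set.ncard_insert_le _ _)
    simp only [Finset.coe_filter, Finset.mem_range, Set.mem_ofPred_eq] at hx
    rw [Set.mem_insert_iff, Set.mem_inter_iff, Set.mem_Icc]
    rcases Nat.eq_zero_or_pos x with h0 | h0
    · exact Or.inl h0
    · exact Or.inr ⟨hx.2, h0, by omega⟩
  have h7 : (((Finset.range (n + 1)).filter (· ∈ S)).card : ℝ) ≤ (S ∩ Set.Icc 1 n).ncard + 1 := by
    exact_mod_cast h6
  convert (show _ ≤ ε * n from h7.trans (by linarith)) using 3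

/-- The height of `α` bounds every conjugate of `α`. -/
lemma norm_le_of_weilHeight {K : Type*} [Field K] [NumberField K] (α : K) (x : ℝ)
    (h : weilHeight K α ≤ x) (σ : K →+* ℂ) : ‖σ α‖ ≤ Real.exp (Module.finrank ℚ K * x) := by
  have hd : (0 : ℝ) < Module.finrank ℚ K := by exact_mod_cast Module.finrank_pos
  rw [weilHeight, div_le_iff₀ hd] at h
  have h1 : Real.log (max 1 ‖σ α‖) ≤ ∑ σ : K →+* ℂ, Real.log (max 1 ‖σ α‖) :=
    Finset.single_le_sum (f := fun σ : K →+* ℂ => Real.log (max 1 ‖σ α‖))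
      (fun τ _ => Real.log_nonneg (le_max_left _ _)) (Finset.mem_univ σ)
  have h2 := Real.log_natCast_nonneg (Ideal.absNorm (denIdeal K α))
  refine (le_max_right 1 _).trans ?_
  rw [← Real.log_le_iff_le_exp (by positivity)]
  linarith

lemma den_spec {K : Type*} [Field K] [NumberField K] (α : K) :
    0 < den K α ∧ IsIntegral ℤ ((den K α : K) * α) := by
  have hne : {d : ℕ | 0 < d ∧ IsIntegral ℤ ((d : K) * α)}.Nonempty := by
    obtain ⟨b, hb, h⟩ := exists_integral_mul (Polynomial.C α)
    refine ⟨b, hb, ?_⟩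
    have := h 0
    rwa [Polynomial.coeff_C_mul, Polynomial.coeff_C_zero] at this
  exact Nat.sInf_mem hne

/-- If neither the heights nor the denominators grow exponentially, off sets of density zero, then
the sequence has subexponential arithmetic size over every larger field. -/
lemma subexpArith_map {K L : Type*} [Field K] [NumberField K] [Field L] [Algebra K L] (a : ℕ → K)
    (h₁ : ∀ c : ℝ, 0 < c → ZD {n : ℕ | c * n ≤ weilHeight K (a n)})
    (h₂ : ∀ β : ℝ, 1 < β → ∃ S, ZD S ∧
      ∃ᶠ n : ℕ in atTop, (lcmOutside (fun i => den K (a i)) S n : ℝ) ≤ β ^ n) :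
    SubexpArith (fun n => algebraMap K L (a n)) := by
  classical
  intro c hc
  have hd : (0 : ℝ) < Module.finrank ℚ K := by exact_mod_cast Module.finrank_pos
  obtain ⟨S₂, hS₂, hfreq⟩ := h₂ (Real.exp c) (Real.one_lt_exp_iff.2 hc)
  refine ⟨_, ZD_union _ _ (h₁ (c / Module.finrank ℚ K) (by positivity)) hS₂, fun n hn σ => ?_,
    hfreq.mono fun n hn => ?_⟩
  · have h3 : weilHeight K (a n) ≤ c / Module.finrank ℚ K * n :=
      (not_le.1 fun h => hn (Or.inl h)).le
    have h4 := norm_le_of_weilHeight (a n) _ h3 (σ.comp (algebraMap K L))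
    rwa [show (Module.finrank ℚ K : ℝ) * (c / Module.finrank ℚ K * n) = c * n by
      field_simp] at h4
  · refine ⟨lcmOutside (fun i => den K (a i)) S₂ n, ?_, ?_, fun i hi hiS => ?_⟩
    · refine Nat.pos_of_ne_zero fun h0 => ?_
      rw [lcmOutside, Finset.lcm_eq_zero_iff] at h0
      obtain ⟨i, -, hi⟩ := h0
      split_ifs at hi
      exact (den_spec (a i)).1.ne' hi
    · rwa [mul_comm, Real.exp_nat_mul]
    · have hiS₂ : i ∉ S₂ := fun h => hiS (Or.inr h)
      have h5 : den K (a i) ∣ lcmOutside (fun i => den K (a i)) S₂ n := by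
        have h := Finset.dvd_lcm (f := fun i => if i ∈ S₂ then 1 else den K (a i))
          (Finset.mem_range.2 (Nat.lt_succ_of_le hi))
        rw [if_neg hiS₂] at h
        exact h
      obtain ⟨k, hk⟩ := h5
      have h6 : IsIntegral ℤ (((lcmOutside (fun i => den K (a i)) S₂ n : ℕ) : K) * a i) := by
        rw [hk, Nat.cast_mul, mul_comm (den K (a i) : K), mul_assoc]
        exact (by simpa using isIntegral_algebraMap (R := ℤ) (A := K) (x := (k : ℤ)) :
          IsIntegral ℤ (k : K)).mul (den_spec (a i)).2
      have h7 := h6.map ((algebraMap K L).toIntAlgHom)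
      simpa using h7

/-- Cauchy estimate: a positive radius of convergence bounds the coefficients exponentially. -/
lemma exp_bound_of_radius (a : ℕ → ℂ) (h : seriesRadius a ≠ 0) :
    ∃ B θ : ℝ, ∀ n : ℕ, ‖a n‖ ≤ B * Real.exp (θ * n) := by
  obtain ⟨r, hr, B, hB⟩ : ∃ r : NNReal, 0 < r ∧ ∃ B : ℝ, ∀ n, ‖a n‖ * (r : ℝ) ^ n ≤ B := by
    by_contra! hcon
    refine h ?_
    rw [seriesRadius, ← le_zero_iff]
    refine iSup_le fun r => iSup_le fun ⟨B, hB⟩ => ?_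
    rcases (zero_le (a := r)).eq_or_lt with h0 | h0
    · rw [← h0]; simp
    · obtain ⟨n, hn⟩ := hcon r h0 B
      exact absurd (hB n) (not_le.2 hn)
  refine ⟨B, -Real.log r, fun n => ?_⟩
  have hr' : (0 : ℝ) < r := hr
  rw [mul_comm (-Real.log (r : ℝ)), Real.exp_nat_mul, Real.exp_neg, Real.exp_log hr', inv_pow,
    ← div_eq_mul_inv, le_div_iff₀ (by positivity)]
  exact hB n

/-! ### Rational functions -/

/-- Applying a `K`-linear functional to the coefficients of a polynomial commutes with evaluation at
natural numbers, as these lie in `K`. -/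
lemma exists_functional_poly {K L : Type*} [Field K] [Field L] [Algebra K L] (l : L →ₗ[K] K)
    (P : L[X]) : ∃ P' : K[X], (∀ j, P'.coeff j = l (P.coeff j)) ∧
      ∀ n : ℕ, P'.eval (n : K) = l (P.eval (n : L)) := by
  refine ⟨∑ j ∈ Finset.range (P.natDegree + 1), Polynomial.C (l (P.coeff j)) * Polynomial.X ^ j,
    fun j => ?_, fun n => ?_⟩
  · simp only [finsetSum_coeff, Polynomial.coeff_C_mul, Polynomial.coeff_X_pow, mul_ite, mul_one,
      mul_zero, Finset.sum_ite_eq, Finset.mem_range]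
    split_ifs with h
    · rfl
    · rw [coeff_eq_zero_of_natDegree_lt (by omega), map_zero]
  · rw [Polynomial.eval_finsetSum, eval_eq_sum_range, map_sum]
    refine Finset.sum_congr rfl fun j _ => ?_
    rw [eval_mul, eval_C, eval_pow, eval_X]
    have h : P.coeff j * (n : L) ^ j = ((n : K) ^ j) • P.coeff j := by
      rw [Algebra.smul_def, map_pow, map_natCast, mul_comm]
    rw [h, map_smul, smul_eq_mul, mul_comm]

lemma eventually_eval_ne_zero {K : Type*} [Field K] [CharZero K] (r : K[X]) (hr : r ≠ 0) :
    ∀ᶠ m : ℕ in atTop, r.eval (m : K) ≠ 0 := by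
  have hfin : {n : ℕ | r.eval (n : K) = 0}.Finite :=
    ((Polynomial.finite_setOfPred_isRoot hr).preimage (Nat.cast_injective.injOn)).subset
      fun n hn => hn
  rw [← Nat.cofinite_eq_atTop]
  exact hfin.eventually_cofinite_notMem

/-- A sequence in `K` which is a quotient of polynomials over an extension of `K` is eventually
given by a rational function over `K`: apply a `K`-linear functional to numerator and denominator. -/
lemma exists_ratFunc {K L : Type*} [Field K] [CharZero K] [Field L] [Algebra K L] (b : ℕ → K)
    (U V : L[X]) (N : ℕ) (h : ∀ n : ℕ, N ≤ n → V.eval (n : L) ≠ 0 ∧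
      V.eval (n : L) * algebraMap K L (b n) = U.eval (n : L)) :
    ∃ Q : RatFunc K, ∀ᶠ n : ℕ in atTop, Q.denom.eval (n : K) ≠ 0 ∧
      b n = Q.num.eval (n : K) / Q.denom.eval (n : K) := by
  have hV : V ≠ 0 := fun h0 => (h N le_rfl).1 (by rw [h0, eval_zero])
  obtain ⟨k, hk⟩ : ∃ k, V.coeff k ≠ 0 := by
    by_contra! hcon
    exact hV (Polynomial.ext fun k => by rw [hcon k, Polynomial.coeff_zero])
  obtain ⟨l, hl⟩ : ∃ l : L →ₗ[K] K, l (V.coeff k) ≠ 0 := by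
    by_contra! hcon
    exact hk ((Module.forall_dual_apply_eq_zero_iff K _).1 hcon)
  obtain ⟨U', -, hU⟩ := exists_functional_poly l U
  obtain ⟨V', hVc, hV'⟩ := exists_functional_poly l V
  have hV0 : V' ≠ 0 := fun h0 => hl (by rw [← hVc, h0, Polynomial.coeff_zero])
  refine ⟨algebraMap K[X] (RatFunc K) U' / algebraMap K[X] (RatFunc K) V', ?_⟩
  obtain ⟨Q, hQ⟩ : ∃ Q : RatFunc K, Q = algebraMap K[X] (RatFunc K) U' /
    algebraMap K[X] (RatFunc K) V' := ⟨_, rfl⟩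
  have hdvd : Q.denom ∣ V' := hQ ▸ RatFunc.denom_div_dvd U' V'
  have hnum := (RatFunc.num_mul_eq_mul_denom_iff hV0).2 hQ
  rw [← hQ]
  filter_upwards [eventually_eval_ne_zero V' hV0, eventually_ge_atTop N] with n hn hnN
  have hden : Q.denom.eval (n : K) ≠ 0 := fun h0 => hn (eval_eq_zero_of_dvd_of_eval_eq_zero hdvd h0)
  refine ⟨hden, ?_⟩
  have h1 : V'.eval (n : K) * b n = U'.eval (n : K) := by
    rw [hV', hU, ← (h n hnN).2, mul_comm (V.eval (n : L)), ← Algebra.smul_def, map_smul,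
      smul_eq_mul, mul_comm]
  have h2 := congrArg (Polynomial.eval (n : K)) hnum
  rw [eval_mul, eval_mul] at h2
  rw [eq_div_iff hden]
  refine mul_left_cancel₀ hn ?_
  rw [← mul_assoc, h1, ← h2, mul_comm]

/-- On a residue class modulo a common multiple `s` of the orders of the bases, each `τ^n` is constant,
so the exponential polynomial is a polynomial there. -/
lemma ratFunc_of_expPoly {K L : Type*} [Field K] [CharZero K] [Field L] [Algebra K L] (a : ℕ → K)
    (T : Finset L) (c : L[X]) (q : L → L[X]) (N : ℕ)
    (h : ∀ n : ℕ, N ≤ n → c.eval (n : L) ≠ 0 ∧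
      c.eval (n : L) * algebraMap K L (a n) = expPoly T q n)
    (hroot : ∀ τ ∈ T, q τ ≠ 0 → ∃ n : ℕ, 0 < n ∧ τ ^ n = 1) :
    ∃ s : ℕ, 0 < s ∧ ∃ Q : Fin s → RatFunc K, ∃ N : ℕ, ∀ n : ℕ, N ≤ n → ∀ i : Fin s,
      (Q i).denom.eval ((n : ℕ) : K) ≠ 0 ∧
      a (s * n + i) = (Q i).num.eval ((n : ℕ) : K) / (Q i).denom.eval ((n : ℕ) : K) := by
  classical
  have hord : ∀ τ ∈ T, ∃ n : ℕ, 0 < n ∧ (q τ ≠ 0 → τ ^ n = 1) := fun τ hτ => by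
    by_cases h0 : q τ = 0
    · exact ⟨1, one_pos, fun h1 => absurd h0 h1⟩
    · obtain ⟨n, hn, h1⟩ := hroot τ hτ h0
      exact ⟨n, hn, fun _ => h1⟩
  choose! o ho hoq using hord
  obtain ⟨s, hs⟩ : ∃ s, s = ∏ τ ∈ T, o τ := ⟨_, rfl⟩
  have hs0 : 0 < s := hs ▸ Finset.prod_pos fun τ hτ => ho τ hτ
  have hone : ∀ τ ∈ T, q τ ≠ 0 → τ ^ s = 1 := fun τ hτ h0 => by
    obtain ⟨k, hk⟩ := Finset.dvd_prod_of_mem o hτ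
    rw [hs, hk, pow_mul, hoq τ hτ h0, one_pow]
  have hQ : ∀ i : Fin s, ∃ Q : RatFunc K, ∀ᶠ n : ℕ in atTop, Q.denom.eval (n : K) ≠ 0 ∧
      a (s * n + i) = Q.num.eval (n : K) / Q.denom.eval (n : K) := by
    intro i
    have hlin : ∀ (r : L[X]) (n : ℕ), (r.comp (Polynomial.C (s : L) * Polynomial.X +
        Polynomial.C ((i : ℕ) : L))).eval (n : L) = r.eval ((s * n + i : ℕ) : L) := by
      intro r n
      rw [eval_comp, eval_add, eval_mul, eval_C, eval_X, eval_C]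
      push_cast
      rfl
    refine exists_ratFunc (fun n => a (s * n + i))
      (∑ τ ∈ T, Polynomial.C (τ ^ (i : ℕ)) * (q τ).comp (Polynomial.C (s : L) * Polynomial.X +
        Polynomial.C ((i : ℕ) : L)))
      (c.comp (Polynomial.C (s : L) * Polynomial.X + Polynomial.C ((i : ℕ) : L))) N
      fun n hn => ?_
    have hge : N ≤ s * n + i := by
      have : n ≤ s * n := Nat.le_mul_of_pos_left n hs0
      omega
    rw [hlin]
    refine ⟨(h _ hge).1, (h _ hge).2.trans ?_⟩
    rw [Polynomial.eval_finsetSum, expPoly]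
    refine Finset.sum_congr rfl fun τ hτ => ?_
    rw [eval_mul, eval_C, hlin]
    by_cases h0 : q τ = 0
    · rw [h0, eval_zero, zero_mul, mul_zero]
    · rw [pow_add, pow_mul, hone τ hτ h0, one_pow, one_mul, mul_comm]
  choose Q hQ using hQ
  obtain ⟨N', hN'⟩ := eventually_atTop.1 (eventually_all.2 hQ)
  exact ⟨s, hs0, Q, N', hN'⟩

/-- Let `f = ∑ aₙ zⁿ ∈ K[[z]]` be D-finite over a number field `K`
with radius of convergence `r ∈ (0, ∞)`. Then (i) `h(aₙ) ≥ c n` on a set of positive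
upper density, or (ii) there is `β > 1` such that for every zero-density `S ⊆ ℕ`,
`lcm{den(aᵢ) : i ≤ n, i ∉ S} > βⁿ` for all large `n`, or (iii) there are `s ≥ 1` and
rational functions `Q₀, …, Q_{s−1} ∈ K(z)`, defined at all large integers, with
`a_{sn+i} = Qᵢ(n)` for all `i` and all large `n`. -/
theorem dfinite_refined_trichotomy
    (K : Type*) [Field K] [NumberField K] (ι : K →+* ℂ) (a : ℕ → K)
    (hDF : IsDFinite (PowerSeries.mk a))
    (hr0 : seriesRadius (fun n => ι (a n)) ≠ 0)
    (hrtop : seriesRadius (fun n => ι (a n)) ≠ ⊤) :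
    (∃ c : ℝ, 0 < c ∧ HasPosUpperDensity {n : ℕ | c * n ≤ weilHeight K (a n)}) ∨
    (∃ β : ℝ, 1 < β ∧ ∀ S : Set ℕ, HasZeroDensity S →
      ∀ᶠ n : ℕ in Filter.atTop,
        β ^ n < (lcmOutside (fun i => den K (a i)) S n : ℝ)) ∨
    (∃ s : ℕ, 0 < s ∧ ∃ Q : Fin s → RatFunc K, ∃ N : ℕ,
      ∀ n : ℕ, N ≤ n → ∀ i : Fin s,
        (Q i).denom.eval ((n : ℕ) : K) ≠ 0 ∧
        a (s * n + i) =
          (Q i).num.eval ((n : ℕ) : K) / (Q i).denom.eval ((n : ℕ) : K)) := by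
  rw [or_iff_not_imp_left]
  intro hi
  rw [or_iff_not_imp_left]
  intro hii
  push Not at hi hii
  obtain ⟨p, A, hA0, hf⟩ := hDF
  -- For `p = 0` the equation reads `A 0 * f = 0`, so `f = 0`.
  rcases Nat.eq_zero_or_pos p with rfl | hp
  · have ha : PowerSeries.mk a = 0 := by
      simpa [Polynomial.coe_eq_zero_iff, hA0] using hf
    refine ⟨1, one_pos, fun _ => 0, 0, fun n _ i => ?_⟩
    have h1 : a (1 * n + i) = 0 := by
      rw [← PowerSeries.coeff_mk (1 * n + i) a, ha, map_zero]
    rw [h1]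
    simp
  have hZ₁ : ∀ c : ℝ, 0 < c → ZD {n : ℕ | c * n ≤ weilHeight K (a n)} := fun c hc =>
    ZD_of_upperDensity _ (not_lt.1 (hi c hc))
  have hZ₂ : ∀ β : ℝ, 1 < β → ∃ S, ZD S ∧
      ∃ᶠ n : ℕ in atTop, (lcmOutside (fun i => den K (a i)) S n : ℝ) ≤ β ^ n := fun β hβ => by
    obtain ⟨S, hS, h⟩ := hii β hβ
    exact ⟨S, ZD_of_upperDensity S (le_of_eq hS), by simpa only [not_lt] using h⟩
  -- Pass to the splitting field of the leading coefficient, and extend the embedding.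
  let _ : Algebra K ℂ := ι.toAlgebra
  obtain ⟨ι', hι'⟩ : ∃ ι' : (A 0).SplittingField →+* ℂ, ∀ x, ι' (algebraMap K _ x) = ι x :=
    ⟨(IsAlgClosed.lift (M := ℂ) (R := K) (S := (A 0).SplittingField)).toRingHom,
      fun x => (IsAlgClosed.lift (M := ℂ) (R := K) (S := (A 0).SplittingField)).commutes x⟩
  have : NumberField (A 0).SplittingField := NumberField.of_module_finite K _
  have hS := subexpArith_map (L := (A 0).SplittingField) a hZ₁ hZ₂
  obtain ⟨b, hb, hintg⟩ := exists_integral_mul ((A 0).map (algebraMap K (A 0).SplittingField))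
  have hfL := ode_map (algebraMap K (A 0).SplittingField) p A a hf
  have hb0 : (b : (A 0).SplittingField) ≠ 0 := by exact_mod_cast hb.ne'
  -- Clear denominators, so that the leading coefficient is integral.
  obtain ⟨A', hA'⟩ : ∃ A' : Fin (p + 1) → (A 0).SplittingField[X],
    ∀ i, A' i = Polynomial.C (b : (A 0).SplittingField) * (A i).map (algebraMap K _) :=
    ⟨_, fun _ => rfl⟩
  have hfA' : ∑ i : Fin (p + 1), (A' i : PowerSeries (A 0).SplittingField) *
      (psDeriv^[p - i.val] (PowerSeries.mk fun n => algebraMap K (A 0).SplittingField (a n))) =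
      0 := by
    rw [← mul_zero (PowerSeries.C (b : (A 0).SplittingField)), ← hfL, Finset.mul_sum]
    refine Finset.sum_congr rfl fun i _ => ?_
    rw [hA', Polynomial.coe_mul, Polynomial.coe_C, mul_assoc]
  have hA'0 : A' 0 ≠ 0 := by
    rw [hA']
    exact mul_ne_zero (C_ne_zero.2 hb0)
      ((Polynomial.map_ne_zero_iff (algebraMap K _).injective).2 hA0)
  have hgrow := growth p hp (fun i => (A' i).map ι')
    (fun n => ι' (algebraMap K (A 0).SplittingField (a n))) (ode_map ι' p A' _ hfA')
    ((Polynomial.map_ne_zero_iff ι'.injective).2 hA'0)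
    (fun η hη => by
      obtain ⟨S, hS1, hS2, -⟩ := hS η hη
      exact ⟨S, hS1, fun n hn => hS2 n hn ι'⟩)
    (by simpa only [hι'] using exp_bound_of_radius _ hr0)
  obtain ⟨T, hT0, c, q, N, hq⟩ := exists_expPoly ι' p hp A' _ hfA' hA'0
    (by rw [hA']; exact (Polynomial.Splits.C _).mul (SplittingField.splits (A 0)))
    (by rw [hA']; exact hintg) hgrow hS
  exact ratFunc_of_expPoly a T c q N hq fun τ hτ h0 =>
    base_root_of_unity _ hS T hT0 c q N (fun n hn => (hq n hn).2) τ hτ h0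
end

section
/- There exists a set S ⊆ ℕ of zero density such that for every β > 1 the inequality lcm{i : i ≤ n, i ∉ S} > β^n holds for only finitely many n. -/
/-!
Every prime factor of a typical integer `i` is much smaller than `i`, and this is already enough to
make the least common multiple of the typical integers subexponential.

Let `f i = ⌊√⌊log₂ i⌋⌋`, a slowly growing function, and let `S` be the set of integers `i` having a
prime factor `p > i / f i`. An element of `S` up to `n` is a product `p * m` with `p ≤ n` prime and
`m < f n`, so there are at most `π n * f n` of them (`ncard_largePrimeSet_le`). By Chebyshev's bound
`π n = O(n / log n)`, and since `f n = o(log n)` this is `o(n)`.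

On the other hand, all prime factors of the integers `i ≤ n` outside `S` are at most
`y = n / f √n`, and each prime power dividing such an `i` is at most `n`. Hence their least common
multiple is at most `n ^ π y` (`lcmIdOutside_le`). As `y ≥ √n`, Chebyshev's bound gives
`π y * log n = O(y) = o(n)`.
-/

open Filter

open Classical in
/-- `lcm { i : 1 ≤ i ≤ n, i ∉ S }`. -/
noncomputable def lcmIdOutside (S : Set ℕ) (n : ℕ) : ℕ :=
  (Finset.Icc 1 n).lcm (fun i => if i ∈ S then 1 else i)

/-- A slowly growing function: `⌊√⌊log₂ n⌋⌋`. -/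
def slowFun (n : ℕ) : ℕ := Nat.sqrt (Nat.log 2 n)

/-- The integers `i` with a prime factor exceeding `i / slowFun i`. -/
def largePrimeSet : Set ℕ := {i | ∃ p, p.Prime ∧ p ∣ i ∧ i < p * slowFun i}

/-- The bound `n / slowFun √n` for the prime factors of the integers `i ≤ n` outside
`largePrimeSet`. -/
def primeBound (n : ℕ) : ℕ := n / slowFun (Nat.sqrt n)

lemma slowFun_mono : Monotone slowFun := fun _ _ h =>
  Nat.sqrt_le_sqrt (Nat.log_mono_right h)

lemma slowFun_le_self (n : ℕ) : slowFun n ≤ n :=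
  (Nat.sqrt_le_self _).trans (Nat.log_le_self 2 n)

lemma tendsto_natSqrt : Tendsto Nat.sqrt atTop atTop :=
  tendsto_atTop_mono' _ (Eventually.of_forall fun _ => le_rfl) <|
    tendsto_atTop_atTop.2 fun b => ⟨b * b, fun _ ha => Nat.le_sqrt.2 ha⟩

lemma tendsto_slowFun : Tendsto slowFun atTop atTop :=
  tendsto_natSqrt.comp <|
    tendsto_atTop_atTop.2 fun b => ⟨2 ^ b, fun _ ha => Nat.le_log_of_pow_le one_lt_two ha⟩

lemma slowFun_sq_mul_log_two_le {n : ℕ} (hn : n ≠ 0) :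
    (slowFun n : ℝ) ^ 2 * Real.log 2 ≤ Real.log n := by
  have h1 : slowFun n ^ 2 ≤ Nat.log 2 n := Nat.sqrt_le' _
  have h2 : 2 ^ slowFun n ^ 2 ≤ n :=
    (Nat.pow_le_pow_right two_pos h1).trans (Nat.pow_log_le_self 2 hn)
  have h3 : (2 : ℝ) ^ slowFun n ^ 2 ≤ n := by exact_mod_cast h2
  have h4 := Real.log_le_log (by positivity) h3
  rw [Real.log_pow] at h4
  exact_mod_cast h4

lemma eventually_primeCounting_mul_log_le :
    ∀ᶠ n : ℕ in atTop, (Nat.primeCounting n : ℝ) * Real.log n ≤ 3 * n := by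
  have h := tendsto_natCast_atTop_atTop (R := ℝ) |>.eventually
    (Chebyshev.eventually_primeCounting_le one_pos)
  filter_upwards [h, eventually_ge_atTop 2] with n hn hn2
  have hlog : 0 < Real.log n := Real.log_pos (by exact_mod_cast hn2)
  rw [Nat.floor_natCast, le_div_iff₀ hlog] at hn
  have h4 : Real.log 4 ≤ 2 := by
    have : Real.log 4 = 2 * Real.log 2 := by
      rw [show (4 : ℝ) = 2 ^ 2 by norm_num, Real.log_pow]; norm_num
    linarith [Real.log_two_lt_d9]
  nlinarith [n.cast_nonneg (α := ℝ)]

lemma ncard_largePrimeSet_le (n : ℕ) :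
    (largePrimeSet ∩ Set.Icc 1 n).ncard ≤ Nat.primeCounting n * slowFun n := by
  classical
  have hsub : largePrimeSet ∩ Set.Icc 1 n ⊆
      ((n.primesLE ×ˢ Finset.range (slowFun n)).image fun x => x.1 * x.2 : Finset ℕ) := by
    rintro i ⟨⟨p, hp, ⟨m, rfl⟩, hlt⟩, h1, hn⟩
    have hm : m < slowFun n :=
      (Nat.lt_of_mul_lt_mul_left hlt).trans_le (slowFun_mono hn)
    have hpn : p ≤ n := (Nat.le_of_dvd h1 (dvd_mul_right p m)).trans hn
    simp only [Finset.coe_image, Set.mem_image, Finset.mem_coe, Finset.mem_product,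
      Nat.mem_primesLE, Finset.mem_range]
    exact ⟨(p, m), ⟨⟨hpn, hp⟩, hm⟩, rfl⟩
  refine (Set.ncard_le_ncard hsub (Finset.finite_toSet _)).trans ?_
  rw [Set.ncard_coe_finset]
  refine Finset.card_image_le.trans_eq ?_
  rw [Finset.card_product, Nat.primesLE_card_eq_primeCounting, Finset.card_range]

lemma hasZeroDensity_largePrimeSet : HasZeroDensity largePrimeSet := by
  refine Tendsto.limsup_eq ?_
  have hf : Tendsto (fun n => (slowFun n : ℝ)) atTop atTop :=
    tendsto_natCast_atTop_atTop.comp tendsto_slowFun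
  have hlim : Tendsto (fun n => 3 / Real.log 2 / (slowFun n : ℝ)) atTop (nhds 0) :=
    hf.const_div_atTop _
  refine squeeze_zero' (Eventually.of_forall fun n => by positivity) ?_ hlim
  filter_upwards [eventually_primeCounting_mul_log_le, eventually_gt_atTop 0,
    tendsto_slowFun.eventually_gt_atTop 0] with n hπ hn hfn
  have hn' : (0 : ℝ) < n := by exact_mod_cast hn
  have hfn' : (0 : ℝ) < slowFun n := by exact_mod_cast hfn
  have hl2 : 0 < Real.log 2 := Real.log_pos one_lt_two
  have hc : ((largePrimeSet ∩ Set.Icc 1 n).ncard : ℝ) ≤ Nat.primeCounting n * slowFun n := by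
    exact_mod_cast ncard_largePrimeSet_le n
  rw [div_div, div_le_div_iff₀ hn' (by positivity)]
  calc ((largePrimeSet ∩ Set.Icc 1 n).ncard : ℝ) * (Real.log 2 * slowFun n)
      ≤ (Nat.primeCounting n * slowFun n) * (Real.log 2 * slowFun n) := by gcongr
    _ = Nat.primeCounting n * ((slowFun n : ℝ) ^ 2 * Real.log 2) := by ring
    _ ≤ Nat.primeCounting n * Real.log n := by
      gcongr; exact slowFun_sq_mul_log_two_le hn.ne'
    _ ≤ 3 * n := hπ

lemma sqrt_le_primeBound {n : ℕ} (hf : 0 < slowFun (Nat.sqrt n)) :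
    Nat.sqrt n ≤ primeBound n :=
  (Nat.le_div_iff_mul_le hf).2 <|
    (Nat.mul_le_mul_left _ (slowFun_le_self _)).trans (Nat.sqrt_le n)

lemma le_primeBound {n i p : ℕ} (hf : 0 < slowFun (Nat.sqrt n)) (hi : i ∉ largePrimeSet)
    (hi0 : 0 < i) (hin : i ≤ n) (hp : p.Prime) (hpi : p ∣ i) : p ≤ primeBound n := by
  rcases le_total i (Nat.sqrt n) with h | h
  · exact (Nat.le_of_dvd hi0 hpi).trans (h.trans (sqrt_le_primeBound hf))
  · have hle : p * slowFun i ≤ i := not_lt.1 fun hlt => hi ⟨p, hp, hpi, hlt⟩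
    exact (Nat.le_div_iff_mul_le hf).2 <|
      (Nat.mul_le_mul_left p (slowFun_mono h)).trans (hle.trans hin)

lemma lcmIdOutside_le {n : ℕ} (hn : n ≠ 0) (hf : 0 < slowFun (Nat.sqrt n)) :
    lcmIdOutside largePrimeSet n ≤ n ^ Nat.primeCounting (primeBound n) := by
  classical
  have hdvd : lcmIdOutside largePrimeSet n ∣ ∏ p ∈ (primeBound n).primesLE, p ^ Nat.log p n := by
    refine Finset.lcm_dvd fun i hi => ?_
    rw [Finset.mem_Icc] at hi
    split_ifs with hS
    · exact one_dvd _
    have hi0 : i ≠ 0 := by omega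
    have hsub : i.primeFactors ⊆ (primeBound n).primesLE := fun p hp =>
      Nat.mem_primesLE.2 ⟨le_primeBound hf hS hi.1 hi.2 (Nat.prime_of_mem_primeFactors hp)
        (Nat.dvd_of_mem_primeFactors hp), Nat.prime_of_mem_primeFactors hp⟩
    calc i = ∏ p ∈ i.primeFactors, p ^ i.factorization p :=
          (Nat.prod_factorization_pow_eq_self hi0).symm
      _ ∣ ∏ p ∈ (primeBound n).primesLE, p ^ i.factorization p :=
          Finset.prod_dvd_prod_of_subset _ _ _ hsub
      _ ∣ ∏ p ∈ (primeBound n).primesLE, p ^ Nat.log p n :=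
          Finset.prod_dvd_prod_of_dvd _ _ fun p hp => pow_dvd_pow p <|
            Nat.le_log_of_pow_le (Nat.prime_of_mem_primesLE hp).one_lt <|
              (Nat.ordProj_le p hi0).trans hi.2
  have hpos : 0 < ∏ p ∈ (primeBound n).primesLE, p ^ Nat.log p n :=
    Finset.prod_pos fun p hp => pow_pos (Nat.prime_of_mem_primesLE hp).pos _
  calc lcmIdOutside largePrimeSet n ≤ _ := Nat.le_of_dvd hpos hdvd
    _ ≤ ∏ _p ∈ (primeBound n).primesLE, n :=
      Finset.prod_le_prod' fun p _ => Nat.pow_log_le_self p hn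
    _ = _ := by rw [Finset.prod_const, Nat.primesLE_card_eq_primeCounting]

/-- `primeBound n` is at least of order `√n`, so their logarithms are comparable. -/
lemma log_le_four_mul_log_primeBound {n : ℕ} (hn : n ≠ 0) (hf : 0 < slowFun (Nat.sqrt n))
    (hy : 2 ≤ primeBound n) : Real.log n ≤ 4 * Real.log (primeBound n) := by
  have h1 : n ≤ primeBound n ^ 4 := by
    have hb := sqrt_le_primeBound hf
    have hc : primeBound n + 1 ≤ primeBound n ^ 2 := by nlinarith
    calc n ≤ (Nat.sqrt n + 1) ^ 2 := (Nat.lt_succ_sqrt' n).le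
      _ ≤ (primeBound n ^ 2) ^ 2 := Nat.pow_le_pow_left (by omega) 2
      _ = _ := by ring
  have h2 : (n : ℝ) ≤ (primeBound n : ℝ) ^ 4 := by exact_mod_cast h1
  have h3 := Real.log_le_log (by positivity) h2
  rw [Real.log_pow] at h3
  exact_mod_cast h3

/-- There is a set `S ⊆ ℕ` of zero density such that for every
`β > 1` the inequality `lcm{i : i ≤ n, i ∉ S} > βⁿ` holds for only finitely many
`n`. -/
theorem exists_zero_density_set_with_small_lcm :
    ∃ S : Set ℕ, HasZeroDensity S ∧
      ∀ β : ℝ, 1 < β → {n : ℕ | β ^ n < (lcmIdOutside S n : ℝ)}.Finite := by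
  refine ⟨largePrimeSet, hasZeroDensity_largePrimeSet, fun β hβ => ?_⟩
  have hlogβ : 0 < Real.log β := Real.log_pos hβ
  have hg : Tendsto (fun n => slowFun (Nat.sqrt n)) atTop atTop :=
    tendsto_slowFun.comp tendsto_natSqrt
  have hy : Tendsto primeBound atTop atTop := by
    refine tendsto_atTop_mono' _ ?_ tendsto_natSqrt
    filter_upwards [hg.eventually_gt_atTop 0] with n hn using sqrt_le_primeBound hn
  have hev : ∀ᶠ n : ℕ in atTop, ¬ β ^ n < (lcmIdOutside largePrimeSet n : ℝ) := by
    filter_upwards [eventually_ne_atTop 0, hg.eventually_gt_atTop 0, hy.eventually_ge_atTop 2,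
      hy.eventually eventually_primeCounting_mul_log_le,
      hg.eventually_ge_atTop ⌈12 / Real.log β⌉₊] with n hn hf hy2 hπ hβf
    have hf' : (0 : ℝ) < slowFun (Nat.sqrt n) := by exact_mod_cast hf
    have hn' : (0 : ℝ) < n := by positivity
    have hL : (lcmIdOutside largePrimeSet n : ℝ) ≤
        (n : ℝ) ^ Nat.primeCounting (primeBound n) := by
      exact_mod_cast lcmIdOutside_le hn hf
    refine not_lt.2 (hL.trans ?_)
    rw [← Real.log_le_log_iff (by positivity) (by positivity), Real.log_pow, Real.log_pow]
    have hyn : (primeBound n : ℝ) ≤ n / slowFun (Nat.sqrt n) := Nat.cast_div_le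
    have h12 : 12 / Real.log β ≤ slowFun (Nat.sqrt n) :=
      (Nat.le_ceil _).trans (by exact_mod_cast hβf)
    calc (Nat.primeCounting (primeBound n) : ℝ) * Real.log n
        ≤ Nat.primeCounting (primeBound n) * (4 * Real.log (primeBound n)) := by
          gcongr; exact log_le_four_mul_log_primeBound hn hf hy2
      _ ≤ 12 * primeBound n := by linarith
      _ ≤ 12 * (n / slowFun (Nat.sqrt n)) := by gcongr
      _ = n * (12 / slowFun (Nat.sqrt n)) := by ring
      _ ≤ n * Real.log β := by
          gcongr
          rw [div_le_iff₀ hlogβ] at h12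
          rw [div_le_iff₀ hf']
          linarith
  rw [← Nat.cofinite_eq_atTop, eventually_cofinite] at hev
  simpa using hev
end
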